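/- Let g = sl_{n+1}(ℂ) and let n = n_T be a nilradical with K(n) = {β₁,…,β_k}. Set T' = T ∩ {α₁,…,α_{k−1}} and T'' = T ∩ {α_{n+2−k},…,α_n}. Then the stabiliser n^ξ̄ of a cascade point is a generic stabiliser for the coadjoint representation (n : n*) if and only if σ(T') = T'', where σ is the symmetry of the Dynkin diagram of type A_n, σ(α_j) = α_{n+1−j}. In particular, if σ(T) = T then n_T has a generic stabiliser. -/

import Mathlib

open Module LieAlgebra
open scoped Classical

noncomputable section

/-! ### Generalities: coadjoint stabilisers, index, Frobenius semiradical -/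

/-- The stabiliser `q^ξ = {x : q | ξ([x, q]) = 0}` of `ξ ∈ q*` for the coadjoint
representation of a Lie algebra `q`. -/
def coadStab (𝕜 : Type*) (Q : Type*) [CommRing 𝕜] [LieRing Q] [LieAlgebra 𝕜 Q]
    (ξ : Module.Dual 𝕜 Q) : Submodule 𝕜 Q where
  carrier := {x | ∀ y, ξ ⁅x, y⁆ = 0}
  add_mem' := by
    intro a b ha hb y
    rw [Set.mem_setOf_eq] at ha hb
    rw [add_lie, map_add, ha y, hb y, add_zero]
  zero_mem' := by intro y; rw [zero_lie, map_zero]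
  smul_mem' := by
    intro c x hx y
    rw [Set.mem_setOf_eq] at hx
    rw [smul_lie, map_smul, hx y, smul_zero]

/-- The index of a Lie algebra: the minimal dimension of a coadjoint stabiliser. -/
def lieIndex (𝕜 : Type*) (Q : Type*) [CommRing 𝕜] [LieRing Q] [LieAlgebra 𝕜 Q] : ℕ :=
  ⨅ ξ : Module.Dual 𝕜 Q, Module.finrank 𝕜 (coadStab 𝕜 Q ξ)

/-- `ξ ∈ q*` is regular if its stabiliser has minimal dimension. -/
def IsRegularDual (𝕜 : Type*) (Q : Type*) [CommRing 𝕜] [LieRing Q] [LieAlgebra 𝕜 Q]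
    (ξ : Module.Dual 𝕜 Q) : Prop :=
  Module.finrank 𝕜 (coadStab 𝕜 Q ξ) = lieIndex 𝕜 Q

/-- The Frobenius semiradical `F(q) = Σ_{ξ regular} q^ξ`. -/
def frobeniusSemiradical (𝕜 : Type*) (Q : Type*) [CommRing 𝕜] [LieRing Q] [LieAlgebra 𝕜 Q] :
    Submodule 𝕜 Q :=
  ⨆ ξ : {ξ : Module.Dual 𝕜 Q // IsRegularDual 𝕜 Q ξ}, coadStab 𝕜 Q ξ.1

/-! ### Zariski topology on a complex vector space -/

/-- The Zariski topology on a complex vector space: generated by the complements of zero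
sets of polynomial functions (elements of the subalgebra of functions generated by the
linear functionals). -/
def zariskiTop (V : Type*) [AddCommGroup V] [Module ℂ V] : TopologicalSpace V :=
  TopologicalSpace.generateFrom
    {U : Set V | ∃ p ∈ Algebra.adjoin ℂ (Set.range fun l : Module.Dual ℂ V => (l : V → ℂ)),
      U = {v | p v ≠ 0}}

/-- Zariski-open subset of a complex vector space. -/
def zOpen {V : Type*} [AddCommGroup V] [Module ℂ V] (s : Set V) : Prop :=
  (zariskiTop V).IsOpen s

/-- Zariski-dense subset of a complex vector space. -/
def zDense {V : Type*} [AddCommGroup V] [Module ℂ V] (s : Set V) : Prop :=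
  @Dense V (zariskiTop V) s

/-- The dimension of a subset of a complex vector space: the (topological) Krull dimension
with respect to the Zariski topology. -/
def zDim {V : Type*} [AddCommGroup V] [Module ℂ V] (s : Set V) : WithBot ℕ∞ :=
  letI := zariskiTop V
  topologicalKrullDim s

/-! ### Exponentials and stabilisers in the concrete model `n* ≅ n⁻` -/

/-- The (truncated) exponential of a nilpotent endomorphism. For `x` in a nilradical `n`,
`nilExp (ad x)` is the adjoint action of the element `exp x` of the unipotent group
`N = exp(n)`; since `exp : n → N` is bijective, every element of `N` is of this form. -/
def nilExp {L : Type*} [AddCommGroup L] [Module ℂ L] (f : Module.End ℂ L) : Module.End ℂ L :=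
  ∑ i ∈ Finset.range (Module.finrank ℂ L + 1), ((i.factorial : ℂ)⁻¹) • f ^ i

/-- For `v ∈ n⁻ ≅ n*`, the stabiliser of the linear functional `κ(v, ·)|_n` inside a (possibly
larger) subalgebra `q`, namely `{x ∈ q | κ(v, [x, n]) = 0}`, where `κ` is the Killing form.
For `q = n` this is the coadjoint stabiliser `n^v`. -/
def killStab {L : Type*} [LieRing L] [LieAlgebra ℂ L] (v : L) (n q : LieSubalgebra ℂ L) :
    Submodule ℂ L where
  carrier := {x | x ∈ q ∧ ∀ y ∈ n, killingForm ℂ L v ⁅x, y⁆ = 0}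
  add_mem' := by
    rintro a b ⟨ha, ha'⟩ ⟨hb, hb'⟩
    refine ⟨q.add_mem ha hb, fun y hy => ?_⟩
    rw [add_lie, map_add, ha' y hy, hb' y hy, add_zero]
  zero_mem' := ⟨q.zero_mem, fun y hy => by rw [zero_lie, map_zero]⟩
  smul_mem' := by
    rintro c x ⟨hx, hx'⟩
    refine ⟨q.smul_mem c hx, fun y hy => ?_⟩
    rw [smul_lie, map_smul, hx' y hy, smul_zero]

/-! ### Triangular decompositions, root data and the Kostant cascade -/

/-- The support of a root (in simple-root coordinates). -/
def fsupp {SR : Type*} [Fintype SR] (γ : SR → ℤ) : Finset SR :=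
  Finset.univ.filter fun a => γ a ≠ 0

/-- The data of a triangular decomposition of a complex simple Lie algebra `L`:
a Cartan subalgebra, a root-space decomposition indexed by the coordinates of the
roots with respect to the simple roots `SR`, the highest root, and a compatible
family of projections onto sums of root spaces. -/
structure TriangularData (L : Type*) [LieRing L] [LieAlgebra ℂ L]
    (SR : Type*) [Fintype SR] [DecidableEq SR] where
  /-- the set of all roots, written in simple-root coordinates -/
  R : Finset (SR → ℤ)
  /-- the root space attached to `γ`; `rs 0` is the Cartan subalgebra, `rs γ = ⊥` off roots -/
  rs : (SR → ℤ) → Submodule ℂ L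
  /-- the Cartan subalgebra `t` -/
  cartan : LieSubalgebra ℂ L
  rs_zero : rs 0 = cartan.toSubmodule
  rs_dim : ∀ γ ∈ R, Module.finrank ℂ (rs γ) = 1
  rs_bot : ∀ γ : SR → ℤ, γ ≠ 0 → γ ∉ R → rs γ = ⊥
  root_ne_zero : ∀ γ ∈ R, γ ≠ 0
  root_neg : ∀ γ ∈ R, -γ ∈ R
  root_pos_or_neg : ∀ γ ∈ R, (∀ a, 0 ≤ γ a) ∨ (∀ a, γ a ≤ 0)
  root_single : ∀ a : SR, Pi.single a 1 ∈ R
  /-- the highest root `θ` -/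
  theta : SR → ℤ
  theta_mem : theta ∈ R
  theta_highest : ∀ γ ∈ R, γ ≤ theta
  bracket_mem : ∀ γ δ : SR → ℤ, ∀ x ∈ rs γ, ∀ y ∈ rs δ, ⁅x, y⁆ ∈ rs (γ + δ)
  isInternal : DirectSum.IsInternal (fun γ : {γ : SR → ℤ // γ = 0 ∨ γ ∈ R} => rs γ.1)
  /-- `proj S` is the projection onto `⊕_{γ ∈ S} rs γ` along `⊕_{γ ∉ S} rs γ` -/
  proj : Set (SR → ℤ) → (L →ₗ[ℂ] L)
  proj_mem : ∀ (S : Set (SR → ℤ)) (x : L), proj S x ∈ ⨆ γ ∈ S, rs γ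
  proj_compl : ∀ (S : Set (SR → ℤ)) (x : L), x - proj S x ∈ ⨆ γ ∈ Sᶜ, rs γ

namespace TriangularData

variable {L : Type*} [LieRing L] [LieAlgebra ℂ L]
  {SR : Type*} [Fintype SR] [DecidableEq SR]
  (td : TriangularData L SR)

/-- The set `Δ⁺` of positive roots. -/
def posR : Finset (SR → ℤ) := td.R.filter fun γ => ∀ a, 0 ≤ γ a

/-- The set of roots `Δ(n_T)` of the nilradical `n_T` attached to a set `T` of simple
roots: the positive roots having a strictly positive coefficient on some element of `T`. -/
def nilRoots (T : Finset SR) : Finset (SR → ℤ) :=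
  td.posR.filter fun γ => ∃ a ∈ T, 0 < γ a

/-- The nilradical `n_T` of the standard parabolic subalgebra `p_T`. -/
def nilrad (T : Finset SR) : LieSubalgebra ℂ L :=
  LieSubalgebra.lieSpan ℂ L (⋃ γ ∈ (td.nilRoots T : Set (SR → ℤ)), (td.rs γ : Set L))

/-- The Borel subalgebra `b = t ⊕ u` (as a subspace). -/
def borelSub : Submodule ℂ L :=
  td.rs 0 ⊔ ⨆ γ ∈ (td.posR : Set (SR → ℤ)), td.rs γ

/-- The parabolic subalgebra `p_T` (as a subspace): everything except `n_T⁻`. -/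
def parabSub (T : Finset SR) : Submodule ℂ L :=
  td.rs 0 ⊔ ⨆ γ ∈ {γ : SR → ℤ | γ ∈ td.R ∧ -γ ∉ td.nilRoots T}, td.rs γ

/-- The set of roots of the opposite nilradical `n_T⁻`. -/
def negSet (T : Finset SR) : Set (SR → ℤ) := (fun γ => -γ) '' (td.nilRoots T : Set (SR → ℤ))

/-- The opposite nilradical `n_T⁻ ⊆ u⁻`, which is identified with `n_T*` via the
Killing form and the decomposition `g = p_T ⊕ n_T⁻`. -/
def negNilSub (T : Finset SR) : Submodule ℂ L := ⨆ γ ∈ td.negSet T, td.rs γ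

/-- The Heisenberg subset `H_β` attached to a positive root `β`: the positive roots in
the root subsystem generated by `supp β` that are not orthogonal to `β`. -/
def heisRoots (β : SR → ℤ) : Finset (SR → ℤ) :=
  td.posR.filter fun γ => fsupp γ ⊆ fsupp β ∧ (γ = β ∨ β - γ ∈ td.R)

/-- `Φ(β) = Π ∩ H_β`. -/
def Phi (β : SR → ℤ) : Finset SR :=
  Finset.univ.filter fun a => Pi.single a 1 ∈ td.heisRoots β

/-- `K` is the Kostant cascade: a maximal set of pairwise strongly orthogonal positive
roots, containing the highest root, such that each `β ∈ K` is the highest root of the root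
subsystem generated by its support and such that the attached Heisenberg subsets
partition `Δ⁺`. -/
structure IsCascade (K : Finset (SR → ℤ)) : Prop where
  subset_pos : K ⊆ td.posR
  theta_mem : td.theta ∈ K
  strong_orth : ∀ β ∈ K, ∀ β' ∈ K, β ≠ β' → β + β' ∉ td.R ∧ β - β' ∉ td.R
  highest : ∀ β ∈ K, ∀ γ ∈ td.posR, fsupp γ ⊆ fsupp β → γ ≤ β
  partition : ∀ γ ∈ td.posR, ∃! β, β ∈ K ∧ γ ∈ td.heisRoots β

/-- `K(n_T) = K ∩ Δ(n_T)`. -/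
def cascadeK (K : Finset (SR → ℤ)) (T : Finset SR) : Finset (SR → ℤ) := K ∩ td.nilRoots T

/-- The set of simple roots of the optimisation of `n_T`, namely
`T̃ = ⋃_{β ∈ K(n_T)} Φ(β)`; the optimisation of `n_T` is `n_{T̃}`. -/
def optT (K : Finset (SR → ℤ)) (T : Finset SR) : Finset SR :=
  (td.cascadeK K T).biUnion td.Phi

/-- The cascade subspace `E = ⊕_{β ∈ K(n_T)} g_{−β} ⊆ n_T⁻ ≅ n_T*`. -/
def cascadeSub (K : Finset (SR → ℤ)) (T : Finset SR) : Submodule ℂ L :=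
  ⨆ β ∈ (td.cascadeK K T : Set (SR → ℤ)), td.rs (-β)

/-- `v = Σ_{β ∈ K(n_T)} e_{−β}` with all `e_{−β} ∈ g_{−β}` nonzero is a cascade point
of `n_T⁻ ≅ n_T*`. -/
def IsCascadePoint (K : Finset (SR → ℤ)) (T : Finset SR) (v : L) : Prop :=
  ∃ e : (SR → ℤ) → L,
    (∀ β ∈ td.cascadeK K T, e β ∈ td.rs (-β) ∧ e β ≠ 0) ∧ v = ∑ β ∈ td.cascadeK K T, e β

/-- `ind n_T`, computed in the model `n_T* ≅ n_T⁻`. -/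
def nilIndex (T : Finset SR) : ℕ :=
  ⨅ v : ↥(td.negNilSub T), Module.finrank ℂ (killStab (v : L) (td.nilrad T) (td.nilrad T))

/-- `v ∈ n_T⁻ ≅ n_T*` is a regular point. -/
def IsRegPoint (T : Finset SR) (v : L) : Prop :=
  v ∈ td.negNilSub T ∧
    Module.finrank ℂ (killStab v (td.nilrad T) (td.nilrad T)) = td.nilIndex T

/-- The Frobenius semiradical `F(n_T) = Σ_{v regular} n_T^v`. -/
def frobNil (T : Finset SR) : Submodule ℂ L :=
  ⨆ v : {v : L // td.IsRegPoint T v}, killStab (v : L) (td.nilrad T) (td.nilrad T)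

/-- `v ∈ n_T⁻ ≅ n_T*` is a generic point for the coadjoint-type action on `n_T*` of the
unipotent group `exp(q)` (where `n_T ⊆ q ⊆ b`): there is a Zariski-dense open subset `Ω`
containing `v` on which all stabilisers (inside `q`) are conjugate under the group
`exp(q) = {exp(ad x) : x ∈ q}` to the stabiliser of `v`.  The stabiliser of such a point is
called a generic stabiliser. -/
def IsGenericStabPoint (T : Finset SR) (q : LieSubalgebra ℂ L) (v : L) : Prop :=
  ∃ Ω : Set ↥(td.negNilSub T), zOpen Ω ∧ zDense Ω ∧
    (∃ hv : v ∈ td.negNilSub T, (⟨v, hv⟩ : ↥(td.negNilSub T)) ∈ Ω) ∧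
    ∀ w ∈ Ω, ∃ x ∈ q,
      (killStab v (td.nilrad T) q).map (nilExp (LieAlgebra.ad ℂ L x)) =
        killStab (w : L) (td.nilrad T) q

/-- The saturation `exp(q)·E ⊆ n_T⁻ ≅ n_T*` of the cascade subspace `E` under the group
`exp(q)`: the coadjoint action is `exp(ad x)` followed by the projection to `n_T⁻`
along `p_T`. -/
def satSet (K : Finset (SR → ℤ)) (T : Finset SR) (q : LieSubalgebra ℂ L) :
    Set ↥(td.negNilSub T) :=
  {w | ∃ x ∈ q, ∃ u ∈ td.cascadeSub K T,
    nilExp (LieAlgebra.ad ℂ L x) u - (w : L) ∈ td.parabSub T}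

/-- The coadjoint action of `exp x` on `n_T* ≅ n_T⁻`: apply `exp(ad x)` and project
back to `n_T⁻` along `p_T`. -/
def coactOn (T : Finset SR) (x : L) (w : ↥(td.negNilSub T)) : ↥(td.negNilSub T) :=
  ⟨td.proj (td.negSet T) (nilExp (LieAlgebra.ad ℂ L x) (w : L)), td.proj_mem _ _⟩

/-- The algebra `S(n_T) = ℂ[n_T*]` of polynomial functions on `n_T* ≅ n_T⁻`. -/
def polyAlg (T : Finset SR) : Subalgebra ℂ (↥(td.negNilSub T) → ℂ) :=
  Algebra.adjoin ℂ
    (Set.range fun l : Module.Dual ℂ ↥(td.negNilSub T) => (l : ↥(td.negNilSub T) → ℂ))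

def invAlg (T : Finset SR) (q : LieSubalgebra ℂ L) : Subalgebra ℂ ↥(td.polyAlg T) where
  carrier := {F | ∀ x ∈ q, ∀ w, (F : ↥(td.negNilSub T) → ℂ) (td.coactOn T x w)
    = (F : ↥(td.negNilSub T) → ℂ) w}
  mul_mem' := by
    intro F G hF hG x hx w
    simp only [Set.mem_setOf_eq] at hF hG
    simp only [MulMemClass.coe_mul, Pi.mul_apply, hF x hx w, hG x hx w]
  add_mem' := by
    intro F G hF hG x hx w
    simp only [Set.mem_setOf_eq] at hF hG
    simp only [AddMemClass.coe_add, Pi.add_apply, hF x hx w, hG x hx w]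
  algebraMap_mem' := by
    intro c x hx w
    rfl

/-- For nested nilradicals `n_Ts ⊆ n_Tb`, the algebra of `exp(q)`-invariants in
`S(n_Ts) ⊆ S(n_Tb)`, realised inside the functions on `n_Tb⁻ ≅ n_Tb*`:
`S(n_Ts)` is generated by the linear functionals factoring through the projection onto
`n_Ts⁻`. -/
def relInv (Tb Ts : Finset SR) (q : LieSubalgebra ℂ L) :
    Subalgebra ℂ (↥(td.negNilSub Tb) → ℂ) where
  carrier := {F | F ∈ Algebra.adjoin ℂ
      {f : ↥(td.negNilSub Tb) → ℂ |
        ∃ l : Module.Dual ℂ L, f = fun w : ↥(td.negNilSub Tb) => l (td.proj (td.negSet Ts) (w : L))} ∧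
      ∀ x ∈ q, ∀ w, F (td.coactOn Tb x w) = F w}
  mul_mem' := by
    rintro F G ⟨hF1, hF2⟩ ⟨hG1, hG2⟩
    refine ⟨mul_mem hF1 hG1, fun x hx w => ?_⟩
    simp only [Pi.mul_apply, hF2 x hx w, hG2 x hx w]
  add_mem' := by
    rintro F G ⟨hF1, hF2⟩ ⟨hG1, hG2⟩
    refine ⟨add_mem hF1 hG1, fun x hx w => ?_⟩
    simp only [Pi.add_apply, hF2 x hx w, hG2 x hx w]
  algebraMap_mem' := by
    intro c
    exact ⟨Subalgebra.algebraMap_mem _ c, fun x hx w => rfl⟩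

end TriangularData

/-- The transcendence degree of a commutative `ℂ`-algebra. -/
def trdegC (A : Type*) [CommRing A] [Algebra ℂ A] : Cardinal :=
  ⨆ s : {s : Set A // AlgebraicIndependent ℂ ((↑) : s → A)}, Cardinal.mk s.1


/-- The root `ε_i − ε_{j+1} = α_i + ⋯ + α_j` of `sl_{m+1}`, in simple-root coordinates
(`0`-based indexing). -/
def intv {m : ℕ} (i j : Fin m) : Fin m → ℤ := fun a => if i ≤ a ∧ a ≤ j then 1 else 0

/-! ### Exponential and logarithm of nilpotent elements -/

lemma nexp_two {R : Type*} [Ring R] [Algebra ℚ R] (z : R) (hz : IsNilpotent z) :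
    ∃ r, IsNilpotent.exp z = 1 + z + z ^ 2 * r := by
  obtain ⟨k, hk⟩ := hz
  have hk' : z ^ (k + 2) = 0 := by rw [pow_add, hk, zero_mul]
  refine ⟨∑ i ∈ Finset.range k, ((i + 2).factorial : ℚ)⁻¹ • z ^ i, ?_⟩
  rw [IsNilpotent.exp_eq_sum hk', Finset.sum_range_succ', Finset.sum_range_succ', Finset.mul_sum]
  simp only [Nat.factorial, pow_zero, pow_one, zero_add, Nat.cast_one, inv_one, one_smul, mul_one]
  have : ∀ i, ((((i + 1 + 1) * ((i + 1) * i.factorial) : ℕ) : ℚ)⁻¹ • z ^ (i + 1 + 1)) =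
      z ^ 2 * (((((i + 1 + 1) * ((i + 1) * i.factorial) : ℕ) : ℚ)⁻¹) • z ^ i) := by
    intro i
    rw [mul_smul_comm, ← pow_add]; congr 2; omega
  simp only [this]
  abel

lemma nlog_comm {R : Type*} [CommRing R] [Algebra ℚ R] (u : R) (hu : IsNilpotent u) (n : ℕ) :
    ∃ x, u ∣ x ∧ u ^ (n + 1) ∣ IsNilpotent.exp x - (1 + u) := by
  induction n with
  | zero =>
    refine ⟨0, dvd_zero _, ?_⟩
    simp [IsNilpotent.exp_zero]
  | succ n ih =>
    obtain ⟨x, hx, r, hr⟩ := ih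
    have hxn : IsNilpotent x := by
      obtain ⟨y, rfl⟩ := hx
      exact (Commute.all _ _).isNilpotent_mul_right hu
    have hzn : IsNilpotent (-(u ^ (n + 1) * r)) := by
      rw [pow_succ', mul_assoc]
      exact ((Commute.all _ _).isNilpotent_mul_right hu).neg
    refine ⟨x + -(u ^ (n + 1) * r), ?_, ?_⟩
    · refine dvd_add hx (dvd_neg.2 ?_)
      rw [pow_succ', mul_assoc]; exact dvd_mul_right _ _
    · rw [IsNilpotent.exp_add_of_commute (Commute.all _ _) hxn hzn]
      obtain ⟨s, hs⟩ := nexp_two _ hzn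
      have hE : IsNilpotent.exp x = 1 + u + u ^ (n + 1) * r := by rw [← hr]; ring
      rw [hs, hE]
      obtain ⟨t, ht⟩ : ∃ t, t = r := ⟨r, rfl⟩
      refine ⟨-r + (1 + u) * u ^ n * r ^ 2 * s + (-(u ^ n * r ^ 2) + u ^ (2 * n + 1) * r ^ 3 * s), ?_⟩
      ring

lemma nlog {A : Type*} [Ring A] [Algebra ℂ A] [Algebra ℚ A] (u : A) (hu : IsNilpotent u) :
    ∃ P : Polynomial ℂ, IsNilpotent.exp (u * Polynomial.aeval u P) = 1 + u := by
  obtain ⟨N, hN⟩ := hu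
  let I : Ideal (Polynomial ℂ) := Ideal.span {Polynomial.X ^ N}
  let R := Polynomial ℂ ⧸ I
  let x : R := Ideal.Quotient.mk I Polynomial.X
  have hx0 : x ^ N = 0 := by
    rw [← map_pow, Ideal.Quotient.eq_zero_iff_mem]
    exact Ideal.subset_span rfl
  let φ : R →+* A := Ideal.Quotient.lift I (Polynomial.aeval u : Polynomial ℂ →ₐ[ℂ] A).toRingHom (by
    intro a ha
    obtain ⟨b, rfl⟩ := Ideal.mem_span_singleton.1 ha
    simp [hN])
  obtain ⟨y, ⟨z, rfl⟩, w, hw⟩ := nlog_comm x ⟨N, hx0⟩ N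
  obtain ⟨P, rfl⟩ := Ideal.Quotient.mk_surjective z
  refine ⟨P, ?_⟩
  have h0 : IsNilpotent.exp (x * Ideal.Quotient.mk I P) = 1 + x := by
    rw [pow_succ, hx0] at hw
    simpa [sub_eq_zero] using hw
  have hφx : φ x = u := (Ideal.Quotient.lift_mk _ _ _).trans (Polynomial.aeval_X u)
  have hφP : φ (Ideal.Quotient.mk I P) = Polynomial.aeval u P := Ideal.Quotient.lift_mk _ _ _
  have := congrArg φ h0
  rw [IsNilpotent.map_exp ((Commute.all _ _).isNilpotent_mul_right ⟨N, hx0⟩) φ] at this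
  simpa [hφx, hφP] using this

lemma nexp_conj {A : Type*} [Ring A] [Algebra ℂ A] [Algebra ℚ A] (X Y : A)
    (N M : ℕ) (hX : X ^ N = 0) (hM : 2 * N ≤ M) :
    ∑ i ∈ Finset.range M, ((i.factorial : ℂ)⁻¹) •
      ((LinearMap.mulLeft ℂ X - LinearMap.mulRight ℂ X) ^ i) Y =
      IsNilpotent.exp X * Y * IsNilpotent.exp (-X) := by
  have hl : (LinearMap.mulLeft ℂ X) ^ N = 0 := by
    rw [LinearMap.pow_mulLeft, hX]; simp
  have hr : (LinearMap.mulRight ℂ (-X)) ^ N = 0 := by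
    rw [LinearMap.pow_mulRight, neg_pow, hX]; simp
  have hX' : (-X) ^ N = 0 := by rw [neg_pow, hX]; simp
  have hc : Commute (LinearMap.mulLeft ℂ X) (LinearMap.mulRight ℂ (-X)) :=
    LinearMap.commute_mulLeft_right X (-X)
  have hD : LinearMap.mulLeft ℂ X - LinearMap.mulRight ℂ X
      = LinearMap.mulLeft ℂ X + LinearMap.mulRight ℂ (-X) := by
    ext z; simp [sub_eq_add_neg]
  have hDM : (LinearMap.mulLeft ℂ X + LinearMap.mulRight ℂ (-X)) ^ M = 0 := by
    obtain ⟨d, rfl⟩ := Nat.exists_eq_add_of_le hM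
    rw [pow_add, two_mul]
    have := Commute.add_pow_add_eq_zero_of_pow_eq_zero (m := N) (n := N + 1) hc hl
      (by rw [pow_succ, hr, zero_mul])
    rw [show N + (N+1) - 1 = N + N by omega] at this
    rw [this, zero_mul]
  have hq : ∀ (i : ℕ) (z : A), ((i.factorial : ℂ)⁻¹) • z = ((i.factorial : ℚ)⁻¹) • z := by
    intro i z
    rw [show ((i.factorial : ℂ)⁻¹) = (((i.factorial : ℚ)⁻¹ : ℚ) : ℂ) by push_cast; rfl]
    rw [Algebra.smul_def, Algebra.smul_def]
    congr 1
    have := RingHom.map_rat_algebraMap (algebraMap ℂ A) ((i.factorial : ℚ)⁻¹)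
    simpa using this
  have e1 := IsNilpotent.exp_eq_sum hDM
  rw [IsNilpotent.exp_add_of_commute hc ⟨N, hl⟩ ⟨N, hr⟩] at e1
  have e2 := congrArg (fun f : Module.End ℂ A => f Y) e1
  simp only [LinearMap.sum_apply, LinearMap.smul_apply] at e2
  rw [hD]
  simp only [hq]
  rw [← e2, IsNilpotent.exp_eq_sum hl, IsNilpotent.exp_eq_sum hr, IsNilpotent.exp_eq_sum hX,
    IsNilpotent.exp_eq_sum hX']
  simp only [LinearMap.pow_mulLeft, LinearMap.pow_mulRight, Module.End.mul_apply,
    LinearMap.sum_apply, LinearMap.smul_apply, LinearMap.mulLeft_apply, LinearMap.mulRight_apply,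
    Finset.sum_mul, Finset.mul_sum, smul_mul_assoc, mul_smul_comm, mul_assoc, Finset.smul_sum]

/-! ### The matrix model -/

abbrev Mt (m : ℕ) := Matrix (Fin (m + 1)) (Fin (m + 1)) ℂ

/-- `i < j` are separated by an element of `T`. -/
def sepT {m : ℕ} (T : Finset (Fin m)) (i j : Fin (m + 1)) : Prop :=
  ∃ a ∈ T, (i : ℕ) ≤ a ∧ (a : ℕ) < j

lemma sepT.lt {m : ℕ} {T : Finset (Fin m)} {i j : Fin (m + 1)} (h : sepT T i j) :
    (i : ℕ) < j := by
  obtain ⟨a, _, h1, h2⟩ := h; omega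

lemma sepT.mono {m : ℕ} {T : Finset (Fin m)} {i j i' j' : Fin (m + 1)} (h : sepT T i j)
    (hi : (i' : ℕ) ≤ i) (hj : (j : ℕ) ≤ j') : sepT T i' j' := by
  obtain ⟨a, ha, h1, h2⟩ := h; exact ⟨a, ha, by omega, by omega⟩

def nM {m : ℕ} (T : Finset (Fin m)) : Submodule ℂ (Mt m) where
  carrier := {X | ∀ i j, ¬ sepT T i j → X i j = 0}
  add_mem' := by
    intro X Y hX hY i j h
    simp [hX i j h, hY i j h]
  zero_mem' := by intro i j h; simp
  smul_mem' := by
    intro c X hX i j h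
    simp [hX i j h]

lemma mem_nM {m : ℕ} {T : Finset (Fin m)} {X : Mt m} :
    X ∈ nM T ↔ ∀ i j, ¬ sepT T i j → X i j = 0 := Iff.rfl

lemma nM_mul {m : ℕ} {T : Finset (Fin m)} {X Y : Mt m} (hX : X ∈ nM T) (hY : Y ∈ nM T) :
    X * Y ∈ nM T := by
  intro i j h
  rw [Matrix.mul_apply]
  refine Finset.sum_eq_zero fun l _ => ?_
  by_cases h1 : sepT T i l
  · by_cases h2 : sepT T l j
    · exact absurd (h1.mono le_rfl h2.lt.le) h
    · rw [hY _ _ h2, mul_zero]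
  · rw [hX _ _ h1, zero_mul]

lemma nM_pow_entry {m : ℕ} {T : Finset (Fin m)} {X : Mt m} (hX : X ∈ nM T) (r : ℕ) :
    ∀ i j : Fin (m + 1), (j : ℕ) < i + r → (X ^ r) i j = 0 := by
  induction r with
  | zero => intro i j h; rw [pow_zero, Matrix.one_apply_ne]; rintro rfl; omega
  | succ r ih =>
    intro i j h
    rw [pow_succ, Matrix.mul_apply]
    refine Finset.sum_eq_zero fun l _ => ?_
    by_cases h2 : sepT T l j
    · have := h2.lt
      rw [ih i l (by omega), zero_mul]
    · rw [hX _ _ h2, mul_zero]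

lemma nM_pow {m : ℕ} {T : Finset (Fin m)} {X : Mt m} (hX : X ∈ nM T) : X ^ (m + 1) = 0 := by
  ext i j
  exact nM_pow_entry hX _ i j (by omega)

lemma nM_pow_succ_mem {m : ℕ} {T : Finset (Fin m)} {X : Mt m} (hX : X ∈ nM T) (r : ℕ) :
    X ^ (r + 1) ∈ nM T := by
  induction r with
  | zero => simpa using hX
  | succ r ih => rw [pow_succ]; exact nM_mul ih hX

lemma nM_aeval {m : ℕ} {T : Finset (Fin m)} {X : Mt m} (hX : X ∈ nM T) (P : Polynomial ℂ) :
    X * Polynomial.aeval X P ∈ nM T := by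
  rw [Polynomial.aeval_eq_sum_range, Finset.mul_sum]
  refine Submodule.sum_mem _ fun i _ => ?_
  rw [mul_smul_comm, ← pow_succ']
  exact Submodule.smul_mem _ _ (nM_pow_succ_mem hX i)

lemma nM_exp {m : ℕ} {T : Finset (Fin m)} {X : Mt m} (hX : X ∈ nM T) :
    IsNilpotent.exp X - 1 ∈ nM T := by
  rw [IsNilpotent.exp_eq_sum (nM_pow hX), Finset.sum_range_succ']
  simp only [pow_zero, Nat.factorial_zero, Nat.cast_one, inv_one, one_smul, add_sub_cancel_right]
  refine Submodule.sum_mem _ fun i _ => ?_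
  intro p q h
  rw [Matrix.smul_apply, nM_pow_succ_mem hX i p q h, smul_zero]

lemma nM_exp_neg {m : ℕ} {T : Finset (Fin m)} {X : Mt m} (hX : X ∈ nM T) :
    IsNilpotent.exp (-X) - 1 ∈ nM T := nM_exp (Submodule.neg_mem _ hX)

lemma nexp_mul_of_zero {A : Type*} [Ring A] [Algebra ℚ A] {Z E : A} (hZ : IsNilpotent Z)
    (h : Z * E = 0) : IsNilpotent.exp Z * E = E := by
  obtain ⟨k, hk⟩ := hZ
  have hk' : Z ^ (k + 1) = 0 := by rw [pow_succ, hk, zero_mul]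
  rw [IsNilpotent.exp_eq_sum hk', Finset.sum_range_succ', add_mul, Finset.sum_mul]
  rw [Finset.sum_eq_zero]
  · simp
  · intro i _
    rw [smul_mul_assoc, pow_succ, mul_assoc, h]; simp

lemma mul_nexp_of_zero {A : Type*} [Ring A] [Algebra ℚ A] {Z E : A} (hZ : IsNilpotent Z)
    (h : E * Z = 0) : E * IsNilpotent.exp Z = E := by
  obtain ⟨k, hk⟩ := hZ
  have hk' : Z ^ (k + 1) = 0 := by rw [pow_succ, hk, zero_mul]
  rw [IsNilpotent.exp_eq_sum hk', Finset.sum_range_succ', mul_add, Finset.mul_sum]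
  rw [Finset.sum_eq_zero]
  · simp
  · intro i _
    rw [mul_smul_comm, pow_succ', ← mul_assoc, h]; simp

/-- Leading minors. -/
def lminor {m : ℕ} (F : Fin (m + 1) → Fin (m + 1) → ℂ) (a : ℕ) : ℂ :=
  (Matrix.of fun i j : {i : Fin (m + 1) // (i : ℕ) ≤ a} => F i j).det

lemma lminor_swap {m : ℕ} (F : Fin (m + 1) → Fin (m + 1) → ℂ) (a : ℕ) :
    lminor (fun i j => F j i) a = lminor F a := by
  unfold lminor
  rw [← Matrix.det_transpose]; rfl

lemma row_elim {m : ℕ} (F : Fin (m + 1) → Fin (m + 1) → ℂ) (S : Set ℕ)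
    (hS : ∀ a ∈ S, lminor F a ≠ 0) (p : Fin (m + 1)) :
    ∃ l : Fin (m + 1) → ℂ, (∀ p', l p' ≠ 0 → ∃ a ∈ S, (p' : ℕ) ≤ a ∧ a < (p : ℕ)) ∧
      ∀ q : Fin (m + 1), (∃ a ∈ S, a < (p : ℕ) ∧ (q : ℕ) ≤ a) → F p q + ∑ p', l p' * F p' q = 0 := by
  by_cases hne : ∃ a ∈ S, a < (p : ℕ)
  · obtain ⟨a, ⟨haS, hap⟩, hmax⟩ : ∃ a, (a ∈ S ∧ a < (p : ℕ)) ∧ ∀ b, b ∈ S ∧ b < (p : ℕ) → b ≤ a := by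
      obtain ⟨a0, h0, h1⟩ := hne
      have hP := Nat.findGreatest_spec (P := fun a => a ∈ S ∧ a < (p : ℕ)) h1.le ⟨h0, h1⟩
      exact ⟨_, hP, fun b hb => Nat.le_findGreatest hb.2.le hb⟩
    let A : Matrix {i : Fin (m + 1) // (i : ℕ) ≤ a} {i : Fin (m + 1) // (i : ℕ) ≤ a} ℂ :=
      Matrix.of fun i j => F i j
    have hA : IsUnit A.det := isUnit_iff_ne_zero.2 (hS a haS)
    let b : {i : Fin (m + 1) // (i : ℕ) ≤ a} → ℂ := fun j => - F p j
    let x := Matrix.vecMul b A⁻¹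
    have hx : Matrix.vecMul x A = b := by
      simp [x, Matrix.vecMul_vecMul, Matrix.nonsing_inv_mul _ hA]
    refine ⟨fun p' => if h : (p' : ℕ) ≤ a then x ⟨p', h⟩ else 0, ?_, ?_⟩
    · intro p' hp'
      by_cases h : (p' : ℕ) ≤ a
      · exact ⟨a, haS, h, hap⟩
      · simp [h] at hp'
    · rintro q ⟨a', ha', hp', hq⟩
      have hqa : (q : ℕ) ≤ a := hq.trans (hmax _ ⟨ha', hp'⟩)
      have h1 := congrFun hx ⟨q, hqa⟩
      simp only [Matrix.vecMul, dotProduct] at h1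
      have h2 : ∑ p' : Fin (m + 1), (if h : (p' : ℕ) ≤ a then x ⟨p', h⟩ else 0) * F p' q
          = ∑ i : {i : Fin (m + 1) // (i : ℕ) ≤ a}, x i * A i ⟨q, hqa⟩ := by
        have h3 : ∀ i : {i : Fin (m + 1) // (i : ℕ) ≤ a}, x i * A i ⟨q, hqa⟩ =
            (fun p' : Fin (m + 1) => (if h : (p' : ℕ) ≤ a then x ⟨p', h⟩ else 0) * F p' q) i := by
          intro i
          simp [i.2, A]
        rw [Finset.sum_congr rfl fun i _ => h3 i]
        rw [← Finset.sum_subtype (Finset.univ.filter fun i : Fin (m + 1) => (i : ℕ) ≤ a)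
          (by simp) (fun p' : Fin (m + 1) => (if h : (p' : ℕ) ≤ a then x ⟨p', h⟩ else 0) * F p' q),
          Finset.sum_filter]
        refine Finset.sum_congr rfl fun i _ => ?_
        split_ifs <;> simp
      rw [h2, h1]; simp [b]
  · refine ⟨0, by simp, ?_⟩
    rintro q ⟨a, ha, hap, _⟩
    exact absurd ⟨a, ha, hap⟩ hne

structure TK {m : ℕ} (T : Finset (Fin m)) (k z1 z2 : ℕ) : Prop where
  hk2 : 2 * k ≤ m + 1
  h1 : ∀ a ∈ T, (a : ℕ) + 1 ≤ k ∨ m ≤ (a : ℕ) + k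
  hz1 : ∃ a ∈ T, (a : ℕ) = z1
  hz2 : ∃ a ∈ T, (a : ℕ) = z2
  h12 : z1 ≤ z2
  hz1k : k ≤ z1 + 1
  hz2k : z2 + k ≤ m
  lo : ∀ a ∈ T, (a : ℕ) < z1 → (a : ℕ) + 2 ≤ k
  hi : ∀ a ∈ T, z2 < (a : ℕ) → m + 1 ≤ (a : ℕ) + k
  sym1 : ∀ a ∈ T, (a : ℕ) + 2 ≤ k → ∃ b ∈ T, (b : ℕ) + a + 1 = m
  sym2 : ∀ b ∈ T, m + 1 ≤ (b : ℕ) + k → ∃ a ∈ T, (a : ℕ) + b + 1 = m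

def compat {m : ℕ} (T : Finset (Fin m)) (k : ℕ) (p q : Fin (m + 1)) : Prop :=
  ∀ a ∈ T, (a : ℕ) + 2 ≤ k → ((p : ℕ) ≤ a ↔ m ≤ (q : ℕ) + a)

def inS {m : ℕ} (T : Finset (Fin m)) (k z1 z2 : ℕ) (p q : Fin (m + 1)) : Prop :=
  (p : ℕ) ≤ z1 ∧ z2 < (q : ℕ) ∧ compat T k p q

lemma f_expand {m : ℕ} (f : Mt m →ₗ[ℂ] ℂ) (X : Mt m) :
    f X = ∑ i, ∑ j, X i j * f (Matrix.single i j 1) := by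
  conv_lhs => rw [Matrix.matrix_eq_sum_single X]
  simp only [map_sum]
  refine Finset.sum_congr rfl fun i _ => Finset.sum_congr rfl fun j _ => ?_
  rw [show Matrix.single i j (X i j) = X i j • (Matrix.single i j (1 : ℂ)) by simp, map_smul,
    smul_eq_mul]

lemma f_mul_single {m : ℕ} (f : Mt m →ₗ[ℂ] ℂ) (X : Mt m) (q r : Fin (m + 1)) :
    f (X * Matrix.single q r 1) = ∑ i, X i q * f (Matrix.single i r 1) := by
  rw [f_expand]
  refine Finset.sum_congr rfl fun i _ => ?_
  rw [Finset.sum_eq_single r]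
  · simp
  · intro b _ hb
    rw [Matrix.mul_single_apply_of_ne _ _ _ _ _ hb, zero_mul]
  · simp

lemma f_single_mul {m : ℕ} (f : Mt m →ₗ[ℂ] ℂ) (X : Mt m) (q r : Fin (m + 1)) :
    f (Matrix.single q r 1 * X) = ∑ j, X r j * f (Matrix.single q j 1) := by
  rw [f_expand, Finset.sum_eq_single q]
  · simp
  · intro b _ hb
    refine Finset.sum_eq_zero fun j _ => ?_
    rw [Matrix.single_mul_apply_of_ne _ _ _ _ _ hb, zero_mul]
  · simp

lemma f_mul_single_mul {m : ℕ} (f : Mt m →ₗ[ℂ] ℂ) (X Y : Mt m) (p q : Fin (m + 1)) :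
    f (X * Matrix.single p q 1 * Y) = ∑ i, ∑ j, X i p * Y q j * f (Matrix.single i j 1) := by
  rw [f_expand]
  refine Finset.sum_congr rfl fun i _ => Finset.sum_congr rfl fun j _ => ?_
  congr 1
  rw [Matrix.mul_apply, Finset.sum_eq_single q]
  · simp
  · intro b _ hb
    rw [Matrix.mul_single_apply_of_ne _ _ _ _ _ hb, zero_mul]
  · simp

lemma single_mem_nM {m : ℕ} {T : Finset (Fin m)} {p q : Fin (m + 1)} (h : sepT T p q) (c : ℂ) :
    Matrix.single p q c ∈ nM T := by
  intro i j hij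
  rw [Matrix.single_apply]
  rw [if_neg]
  rintro ⟨rfl, rfl⟩
  exact hij h

/-- the cascade functional -/
structure CascF {m : ℕ} (T : Finset (Fin m)) (k : ℕ) (f : Mt m →ₗ[ℂ] ℂ) : Prop where
  zero : ∀ i j, sepT T i j → ¬ ((i : ℕ) + j = m ∧ (i : ℕ) < k) → f (Matrix.single i j 1) = 0
  ne : ∀ i : Fin (m + 1), (i : ℕ) < k → f (Matrix.single i i.rev 1) ≠ 0

lemma casc_optA {m : ℕ} {T : Finset (Fin m)} {k : ℕ} {f : Mt m →ₗ[ℂ] ℂ} (hf : CascF T k f)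
    {X : Mt m} (hX : X ∈ nM T) (p q : Fin (m + 1)) (hpk : (p : ℕ) < k)
    (hs : sepT T q p.rev) (h0 : f (X * Matrix.single q p.rev 1 - Matrix.single q p.rev 1 * X) = 0) :
    X p q = 0 := by
  by_cases hpq : sepT T p q
  swap
  · exact hX _ _ hpq
  rw [map_sub, f_mul_single, f_single_mul, Finset.sum_eq_single p, Finset.sum_eq_zero] at h0
  · simpa [hf.ne p hpk] using h0
  · intro j _
    by_cases hj : sepT T p.rev j
    · rw [hf.zero q j (hs.mono le_rfl hj.lt.le), mul_zero]
      rintro ⟨h1, h2⟩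
      have h3 := hj.lt; have h4 := hpq.lt; rw [Fin.val_rev] at h3; omega
    · rw [hX _ _ hj, zero_mul]
  · intro i _ hi
    by_cases hj : sepT T i q
    · rw [hf.zero i _ (hj.mono le_rfl hs.lt.le), mul_zero]
      rintro ⟨h1, h2⟩
      apply hi; ext; rw [Fin.val_rev] at h1; omega
    · rw [hX _ _ hj, zero_mul]
  · simp

lemma casc_optB {m : ℕ} {T : Finset (Fin m)} {k : ℕ} {f : Mt m →ₗ[ℂ] ℂ} (hf : CascF T k f)
    {X : Mt m} (hX : X ∈ nM T) (p q : Fin (m + 1)) (hqk : (q.rev : ℕ) < k)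
    (hs : sepT T q.rev p) (h0 : f (X * Matrix.single q.rev p 1 - Matrix.single q.rev p 1 * X) = 0) :
    X p q = 0 := by
  by_cases hpq : sepT T p q
  swap
  · exact hX _ _ hpq
  have S1 : ∑ i, X i q.rev * f (Matrix.single i p 1) = 0 := by
    refine Finset.sum_eq_zero fun i _ => ?_
    by_cases hi : sepT T i q.rev
    · rw [hf.zero i p (hi.mono le_rfl hs.lt.le), mul_zero]
      rintro ⟨h1, h2⟩
      have h3 := hi.lt
      have h4 := hpq.lt
      rw [Fin.val_rev] at h3
      omega
    · rw [hX _ _ hi, zero_mul]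
  have S2 : ∑ j, X p j * f (Matrix.single q.rev j 1) = X p q * f (Matrix.single q.rev q 1) := by
    refine Finset.sum_eq_single q ?_ (by simp)
    intro j _ hj'
    by_cases hj : sepT T p j
    · rw [hf.zero _ j (hs.mono le_rfl hj.lt.le), mul_zero]
      rintro ⟨h1, h2⟩
      apply hj'
      ext
      rw [Fin.val_rev] at h1
      omega
    · rw [hX _ _ hj, zero_mul]
  rw [map_sub, f_mul_single, f_single_mul, S1, S2] at h0
  have := hf.ne q.rev hqk
  rw [Fin.rev_rev] at this
  simpa [this] using h0

/-- The stabiliser of the cascade functional is contained in `𝔰`. -/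
lemma casc_stab_le {m : ℕ} {T : Finset (Fin m)} {k z1 z2 : ℕ} (hT : TK T k z1 z2)
    {f : Mt m →ₗ[ℂ] ℂ} (hf : CascF T k f) {X : Mt m} (hX : X ∈ nM T)
    (h : ∀ Y ∈ nM T, f (X * Y - Y * X) = 0) (p q : Fin (m + 1)) (hpq : ¬ inS T k z1 z2 p q) :
    X p q = 0 := by
  by_cases hs : sepT T p q
  swap
  · exact hX _ _ hs
  have hA : (p : ℕ) < k → sepT T q p.rev → X p q = 0 := fun h1 h2 =>
    casc_optA hf hX p q h1 h2 (h _ (single_mem_nM h2 1))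
  have hB : (q.rev : ℕ) < k → sepT T q.rev p → X p q = 0 := fun h1 h2 =>
    casc_optB hf hX p q h1 h2 (h _ (single_mem_nM h2 1))
  obtain ⟨b, hb, hb1, hb2⟩ := hs
  have hbT := hT.h1 b hb
  obtain ⟨y1, hy1, hy1'⟩ := hT.hz1
  obtain ⟨y2, hy2, hy2'⟩ := hT.hz2
  have hh1 := hT.hz1k
  have hh2 := hT.hz2k
  have hh3 := hT.hk2
  have hh4 := hT.h12
  rw [Fin.val_rev] at hB
  by_cases hp : (p : ℕ) ≤ z1
  swap
  · exact hB (by omega) ⟨y1, hy1, by rw [Fin.val_rev]; omega, by omega⟩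
  by_cases hq : z2 < (q : ℕ)
  swap
  · exact hA (by omega) ⟨y2, hy2, by omega, by rw [Fin.val_rev]; omega⟩
  have : ¬ compat T k p q := fun hc => hpq ⟨hp, hq, hc⟩
  unfold compat at this
  push Not at this
  obtain ⟨a, ha, hak, hx⟩ := this
  rcases hx with ⟨h1, h2⟩ | ⟨h1, h2⟩
  · obtain ⟨b', hb', hab⟩ := hT.sym1 a ha hak
    exact hA (by omega) ⟨b', hb', by omega, by rw [Fin.val_rev]; omega⟩
  · exact hB (by omega) ⟨a, ha, by rw [Fin.val_rev]; omega, by omega⟩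

lemma inS_sep {m : ℕ} {T : Finset (Fin m)} {k z1 z2 : ℕ} (hT : TK T k z1 z2) {p q : Fin (m + 1)}
    (h : (p : ℕ) ≤ z1) (h' : z2 < (q : ℕ)) : sepT T p q := by
  obtain ⟨y1, hy1, hy1'⟩ := hT.hz1
  have := hT.h12
  exact ⟨y1, hy1, by omega, by omega⟩

/-- `𝔰` lies in the stabiliser of any functional vanishing on the incompatible positions -/
lemma le_stab {m : ℕ} {T : Finset (Fin m)} {k z1 z2 : ℕ} (hT : TK T k z1 z2)
    (f : Mt m →ₗ[ℂ] ℂ) (hf : ∀ p q : Fin (m + 1), (p : ℕ) ≤ z1 → z2 < (q : ℕ) → ¬ compat T k p q →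
      f (Matrix.single p q 1) = 0)
    {X : Mt m} (hX : ∀ p q, ¬ inS T k z1 z2 p q → X p q = 0) {Y : Mt m} (hY : Y ∈ nM T) :
    f (X * Y - Y * X) = 0 := by
  have h1 : f (X * Y) = 0 := by
    rw [f_expand]
    refine Finset.sum_eq_zero fun p _ => Finset.sum_eq_zero fun j _ => ?_
    rw [Matrix.mul_apply, Finset.sum_mul]
    refine Finset.sum_eq_zero fun q _ => ?_
    by_cases hpq : inS T k z1 z2 p q
    swap
    · rw [hX _ _ hpq]; simp
    by_cases hqj : sepT T q j
    swap
    · rw [hY _ _ hqj]; simp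
    obtain ⟨hp, hq, hc⟩ := hpq
    have := hqj.lt
    rw [hf p j hp (by omega), mul_zero]
    intro hc'
    obtain ⟨b, hb, hb1, hb2⟩ := hqj
    have hbk := hT.hi b hb (by omega)
    obtain ⟨a, ha, hab⟩ := hT.sym2 b hb hbk
    have e1 := hc a ha (by omega)
    have e2 := hc' a ha (by omega)
    omega
  have h2 : f (Y * X) = 0 := by
    rw [f_expand]
    refine Finset.sum_eq_zero fun j _ => Finset.sum_eq_zero fun q _ => ?_
    rw [Matrix.mul_apply, Finset.sum_mul]
    refine Finset.sum_eq_zero fun p _ => ?_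
    by_cases hpq : inS T k z1 z2 p q
    swap
    · rw [hX _ _ hpq]; simp
    by_cases hqj : sepT T j p
    swap
    · rw [hY _ _ hqj]; simp
    obtain ⟨hp, hq, hc⟩ := hpq
    have := hqj.lt
    rw [hf j q (by omega) hq, mul_zero]
    intro hc'
    obtain ⟨a, ha, hb1, hb2⟩ := hqj
    have hbk := hT.lo a ha (by omega)
    have e1 := hc a ha (by omega)
    have e2 := hc' a ha (by omega)
    omega
  rw [map_sub, h1, h2, sub_zero]

/-- block LU decomposition -/
lemma lu_exists {m : ℕ} {T : Finset (Fin m)} {k z1 z2 : ℕ} (hT : TK T k z1 z2)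
    (f : Mt m →ₗ[ℂ] ℂ)
    (hm : ∀ a ∈ T, (a : ℕ) + 2 ≤ k →
      lminor (fun i j : Fin (m + 1) => f (Matrix.single i j.rev 1)) a ≠ 0) :
    ∃ X ∈ nM T, ∀ p q : Fin (m + 1), (p : ℕ) ≤ z1 → z2 < (q : ℕ) → ¬ compat T k p q →
      f (IsNilpotent.exp X * Matrix.single p q 1 * IsNilpotent.exp (-X)) = 0 := by
  set F : Fin (m + 1) → Fin (m + 1) → ℂ := fun i j => f (Matrix.single i j.rev 1) with hF
  let S : Set ℕ := {n | ∃ a ∈ T, (a : ℕ) + 2 ≤ k ∧ (a : ℕ) = n}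
  have hS : ∀ n ∈ S, lminor F n ≠ 0 := by
    rintro n ⟨a, ha, h1, rfl⟩; exact hm a ha h1
  have hS' : ∀ n ∈ S, lminor (fun i j => F j i) n ≠ 0 := by
    intro n hn; rw [lminor_swap]; exact hS n hn
  choose l hl1 hl2 using row_elim F S hS
  choose u hu1 hu2 using row_elim (fun i j => F j i) S hS'
  let Λ : Mt m := Matrix.of fun p' p => if (p : ℕ) ≤ z1 then l p p' else 0
  let M : Mt m := Matrix.of fun q q' => if z2 < (q : ℕ) then u q.rev q'.rev else 0
  have h12 := hT.h12
  have hΛ0 : ∀ p' p, Λ p' p ≠ 0 → (p : ℕ) ≤ z1 ∧ ∃ a ∈ S, (p' : ℕ) ≤ a ∧ a < (p : ℕ) := by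
    intro p' p h
    simp only [Λ, Matrix.of_apply] at h
    split_ifs at h with h1
    · exact ⟨h1, hl1 _ _ h⟩
    · exact absurd rfl h
  have hM0 : ∀ q q', M q q' ≠ 0 → z2 < (q : ℕ) ∧ ∃ a ∈ S, (q'.rev : ℕ) ≤ a ∧ a < (q.rev : ℕ) := by
    intro p' p h
    simp only [M, Matrix.of_apply] at h
    split_ifs at h with h1
    · exact ⟨h1, hu1 _ _ h⟩
    · exact absurd rfl h
  have hΛ : Λ ∈ nM T := by
    intro i j hij
    by_contra h
    obtain ⟨h1, a, ⟨a', ha', _, rfl⟩, h2, h3⟩ := hΛ0 i j h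
    exact hij ⟨a', ha', h2, h3⟩
  have hM : M ∈ nM T := by
    intro i j hij
    by_contra h
    obtain ⟨h1, a, ⟨a', ha', hk, rfl⟩, h2, h3⟩ := hM0 i j h
    obtain ⟨b, hb, hab⟩ := hT.sym1 a' ha' hk
    rw [Fin.val_rev] at h2 h3
    exact hij ⟨b, hb, by omega, by omega⟩
  have hΛM : Λ * M = 0 := by
    ext i j
    rw [Matrix.mul_apply]
    refine Finset.sum_eq_zero fun p _ => ?_
    by_contra h
    have h1 := (hΛ0 i p (left_ne_zero_of_mul h)).1
    have h2 := (hM0 p j (right_ne_zero_of_mul h)).1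
    omega
  have hMΛ : M * Λ = 0 := by
    ext i j
    rw [Matrix.mul_apply]
    refine Finset.sum_eq_zero fun p _ => ?_
    by_contra h
    obtain ⟨h1, a, _, h2, h3⟩ := (hM0 i p (left_ne_zero_of_mul h))
    obtain ⟨h4, a', _, h5, h6⟩ := (hΛ0 p j (right_ne_zero_of_mul h))
    rw [Fin.val_rev] at h2 h3
    omega
  obtain ⟨P, hP⟩ := nlog Λ ⟨_, nM_pow hΛ⟩
  obtain ⟨Q, hQ⟩ := nlog M ⟨_, nM_pow hM⟩
  set XL := Λ * Polynomial.aeval Λ P with hXL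
  set XR := M * Polynomial.aeval M Q with hXR
  have cL : Commute Λ (Polynomial.aeval Λ P) :=
    (Polynomial.aeval_X (R := ℂ) Λ) ▸ (Polynomial.aeval_X (R := ℂ) Λ).symm ▸ by
      have := Commute.map (Commute.all (Polynomial.X : Polynomial ℂ) P) (Polynomial.aeval Λ)
      simpa using this
  have cR : Commute M (Polynomial.aeval M Q) := by
    have := Commute.map (Commute.all (Polynomial.X : Polynomial ℂ) Q) (Polynomial.aeval M)
    simpa using this
  have hXLn : XL ∈ nM T := nM_aeval hΛ P
  have hXRn : XR ∈ nM T := nM_aeval hM Q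
  have z1' : XL * XR = 0 := by
    rw [hXL, hXR, cL.eq, mul_assoc, ← mul_assoc Λ M, hΛM]; simp
  have z2' : XR * XL = 0 := by
    rw [hXL, hXR, cR.eq, mul_assoc, ← mul_assoc M Λ, hMΛ]; simp
  have nL : IsNilpotent XL := ⟨_, nM_pow hXLn⟩
  have nR : IsNilpotent XR := ⟨_, nM_pow hXRn⟩
  have cc : Commute XL (-XR) := by
    rw [Commute, SemiconjBy]; simp [z1', z2']
  refine ⟨XL + -XR, Submodule.add_mem _ hXLn (Submodule.neg_mem _ hXRn), ?_⟩
  intro p q hp hq hc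
  have e1 : IsNilpotent.exp (XL + -XR) = (1 + Λ) * IsNilpotent.exp (-XR) := by
    rw [IsNilpotent.exp_add_of_commute cc nL nR.neg, hP]
  have e2 : IsNilpotent.exp (-(XL + -XR)) = (1 + M) * IsNilpotent.exp (-XL) := by
    rw [← hQ, ← IsNilpotent.exp_add_of_commute _ nR nL.neg]
    · congr 1; abel
    · rw [Commute, SemiconjBy]; simp [z1', z2']
  have e3 : IsNilpotent.exp (-XR) * Matrix.single p q (1 : ℂ) = Matrix.single p q 1 := by
    apply nexp_mul_of_zero nR.neg
    have : M * Matrix.single p q (1 : ℂ) = 0 := by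
      ext i j
      by_cases hj : j = q
      · subst hj
        simp only [Matrix.mul_single_apply_same, mul_one, Matrix.zero_apply]
        by_contra h
        obtain ⟨h1, a, _, h2, h3⟩ := hM0 i p h
        rw [Fin.val_rev] at h2 h3
        omega
      · rw [Matrix.mul_single_apply_of_ne _ _ _ _ _ hj]; rfl
    rw [hXR, cR.eq, neg_mul, mul_assoc, this]; simp
  have e4 : Matrix.single p q (1 : ℂ) * (1 + M) * IsNilpotent.exp (-XL)
      = Matrix.single p q 1 * (1 + M) := by
    apply mul_nexp_of_zero nL.neg
    have : Matrix.single p q (1 : ℂ) * Λ = 0 := by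
      ext i j
      by_cases hj : i = p
      · subst hj
        simp only [Matrix.single_mul_apply_same, one_mul, Matrix.zero_apply]
        by_contra h
        obtain ⟨h1, a, _, h2, h3⟩ := hΛ0 q j h
        omega
      · rw [Matrix.single_mul_apply_of_ne _ _ _ _ _ hj]; rfl
    rw [hXL, mul_neg, mul_assoc, ← mul_assoc (1 + M), add_mul, hMΛ, add_zero, one_mul, ← mul_assoc,
      this]; simp
  have e5 : IsNilpotent.exp (XL + -XR) * Matrix.single p q 1 * IsNilpotent.exp (-(XL + -XR))
      = (1 + Λ) * Matrix.single p q 1 * (1 + M) := by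
    rw [e1, e2, mul_assoc (1 + Λ), e3, mul_assoc, ← mul_assoc (Matrix.single p q 1), e4, mul_assoc]
  rw [e5, f_mul_single_mul]
  have hrow : ∀ (a : ℕ), a ∈ S → a < (p : ℕ) → ∀ j : Fin (m + 1), (j.rev : ℕ) ≤ a →
      ∑ i, (1 + Λ) i p * f (Matrix.single i j 1) = 0 := by
    intro a ha hap j hj
    have h1 := hl2 p j.rev ⟨a, ha, hap, hj⟩
    simp only [hF, Fin.rev_rev] at h1
    rw [← h1]
    simp only [Matrix.add_apply, add_mul, Finset.sum_add_distrib]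
    congr 1
    · rw [Finset.sum_eq_single p] <;> simp +contextual [Matrix.one_apply]
    · simp [Λ, hp]
  have hcol : ∀ (a : ℕ), a ∈ S → a < (q.rev : ℕ) → ∀ i : Fin (m + 1), (i : ℕ) ≤ a →
      ∑ j, (1 + M) q j * f (Matrix.single i j 1) = 0 := by
    intro a ha hap i hi
    have h1 := hu2 q.rev i ⟨a, ha, hap, hi⟩
    simp only [hF, Fin.rev_rev] at h1
    rw [← h1]
    simp only [Matrix.add_apply, add_mul, Finset.sum_add_distrib]
    congr 1
    · rw [Finset.sum_eq_single q] <;> simp +contextual [Matrix.one_apply, eq_comm]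
    · simp only [M, Matrix.of_apply, hq, if_true]
      exact Fintype.sum_equiv Fin.revPerm _ _ (fun x => by simp)
  unfold compat at hc
  push Not at hc
  obtain ⟨a, ha, hak, hx⟩ := hc
  rcases hx with ⟨h1, h2⟩ | ⟨h1, h2⟩
  · refine Finset.sum_eq_zero fun i _ => ?_
    simp only [mul_assoc]
    rw [← Finset.mul_sum]
    by_cases hi : (i : ℕ) ≤ a
    · rw [hcol a ⟨a, ha, hak, rfl⟩ (by rw [Fin.val_rev]; omega) i hi, mul_zero]
    · have : (1 + Λ) i p = 0 := by
        rw [Matrix.add_apply, Matrix.one_apply_ne (by rintro rfl; omega), zero_add]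
        by_contra h
        obtain ⟨h1, a, _, h2, h3⟩ := hΛ0 i p h
        omega
      rw [this, zero_mul]
  · rw [Finset.sum_comm]
    refine Finset.sum_eq_zero fun j _ => ?_
    have : ∀ i, (1 + Λ) i p * (1 + M) q j * f (Matrix.single i j 1)
      = (1 + M) q j * ((1 + Λ) i p * f (Matrix.single i j 1)) := fun i => by ring
    simp only [this]
    rw [← Finset.mul_sum]
    by_cases hi : (j.rev : ℕ) ≤ a
    · rw [hrow a ⟨a, ha, hak, rfl⟩ (by omega) j hi, mul_zero]
    · have : (1 + M) q j = 0 := by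
        rw [Fin.val_rev] at hi
        rw [Matrix.add_apply, Matrix.one_apply_ne (by rintro rfl; omega), zero_add]
        by_contra h
        obtain ⟨h1, a, _, h2, h3⟩ := hM0 q j h
        rw [Fin.val_rev] at h2 h3
        omega
      rw [this, zero_mul]

/-- polynomial functions -/
abbrev PolyF (V : Type*) [AddCommGroup V] [Module ℂ V] : Subalgebra ℂ (V → ℂ) :=
  Algebra.adjoin ℂ (Set.range fun l : Module.Dual ℂ V => (l : V → ℂ))

lemma lin_mem_polyF {V : Type*} [AddCommGroup V] [Module ℂ V] (l : V →ₗ[ℂ] ℂ) :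
    (fun w => l w) ∈ PolyF V := Algebra.subset_adjoin ⟨l, rfl⟩

lemma det_mem_polyF {V : Type*} [AddCommGroup V] [Module ℂ V] {ι : Type*} [Fintype ι]
    [DecidableEq ι] (A : ι → ι → V →ₗ[ℂ] ℂ) :
    (fun w => (Matrix.of fun i j => A i j w).det) ∈ PolyF V := by
  have : (fun w => (Matrix.of fun i j => A i j w).det) =
      ∑ σ : Equiv.Perm ι, ((Equiv.Perm.sign σ : ℤ) : ℂ) • ∏ i, (fun w => A (σ i) i w) := by
    funext w
    rw [Matrix.det_apply']
    simp [Finset.sum_apply, Finset.prod_apply]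
  rw [this]
  exact Subalgebra.sum_mem _ fun σ _ => Subalgebra.smul_mem _
    (Subalgebra.prod_mem _ fun i _ => lin_mem_polyF _) _

lemma polyF_line {V : Type*} [AddCommGroup V] [Module ℂ V] (u d : V) (p : V → ℂ)
    (hp : p ∈ PolyF V) : ∃ P : Polynomial ℂ, ∀ t : ℂ, p (u + t • d) = P.eval t := by
  induction hp using Algebra.adjoin_induction with
  | mem x hx =>
    obtain ⟨l, rfl⟩ := hx
    refine ⟨Polynomial.C (l u) + Polynomial.X * Polynomial.C (l d), fun t => ?_⟩
    simp only [map_add, map_smul, smul_eq_mul, Polynomial.eval_add, Polynomial.eval_C, Polynomial.eval_mul, Polynomial.eval_X]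
  | algebraMap r => exact ⟨Polynomial.C r, fun t => by simp⟩
  | add x y _ _ hx hy =>
    obtain ⟨P, hP⟩ := hx
    obtain ⟨Q, hQ⟩ := hy
    exact ⟨P + Q, fun t => by simp [hP, hQ]⟩
  | mul x y _ _ hx hy =>
    obtain ⟨P, hP⟩ := hx
    obtain ⟨Q, hQ⟩ := hy
    exact ⟨P * Q, fun t => by simp [hP, hQ]⟩

lemma polyF_basic_open {V : Type*} [AddCommGroup V] [Module ℂ V] (p : V → ℂ)
    (hp : p ∈ PolyF V) : zOpen {v | p v ≠ 0} :=
  TopologicalSpace.GenerateOpen.basic _ ⟨p, hp, rfl⟩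

lemma zOpen_basic {V : Type*} [AddCommGroup V] [Module ℂ V] (O : Set V) (hO : zOpen O) (u : V)
    (hu : u ∈ O) : ∃ p ∈ PolyF V, p u ≠ 0 ∧ ∀ w, p w ≠ 0 → w ∈ O := by
  change TopologicalSpace.GenerateOpen _ O at hO
  induction hO with
  | basic s hs =>
    obtain ⟨p, hp, rfl⟩ := hs
    exact ⟨p, hp, hu, fun w hw => hw⟩
  | univ => exact ⟨1, Subalgebra.one_mem _, by simp, by simp⟩
  | inter s t _ _ hs ht =>
    obtain ⟨p, hp, hp1, hp2⟩ := hs hu.1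
    obtain ⟨q, hq, hq1, hq2⟩ := ht hu.2
    refine ⟨p * q, Subalgebra.mul_mem _ hp hq, mul_ne_zero hp1 hq1, fun w hw => ?_⟩
    exact ⟨hp2 w (left_ne_zero_of_mul hw), hq2 w (right_ne_zero_of_mul hw)⟩
  | sUnion S _ ih =>
    obtain ⟨s, hs, hus⟩ := hu
    obtain ⟨p, hp, hp1, hp2⟩ := ih s hs hus
    exact ⟨p, hp, hp1, fun w hw => ⟨s, hs, hp2 w hw⟩⟩

lemma poly_ne_zero_exists (P : Polynomial ℂ) (hP : P ≠ 0) : ∃ t : ℂ, t ≠ 0 ∧ P.eval t ≠ 0 := by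
  have h : P * Polynomial.X ≠ 0 := mul_ne_zero hP Polynomial.X_ne_zero
  by_contra hc
  push Not at hc
  apply h
  apply Polynomial.funext
  intro t
  by_cases ht : t = 0
  · simp [ht]
  · simp [hc t ht]

lemma zOpen_line {V : Type*} [AddCommGroup V] [Module ℂ V] (O : Set V) (hO : zOpen O) (u d : V)
    (hu : u ∈ O) : ∃ t : ℂ, t ≠ 0 ∧ u + t • d ∈ O := by
  obtain ⟨p, hp, hp1, hp2⟩ := zOpen_basic O hO u hu
  obtain ⟨P, hP⟩ := polyF_line u d p hp
  obtain ⟨t, ht, h⟩ := poly_ne_zero_exists P (by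
    rintro rfl
    have := hP 0
    simp at this
    exact hp1 this)
  exact ⟨t, ht, hp2 _ (by rw [hP]; exact h)⟩

lemma basic_dense {V : Type*} [AddCommGroup V] [Module ℂ V] (p : V → ℂ)
    (hp : p ∈ PolyF V) (v : V) (hv : p v ≠ 0) : zDense {v | p v ≠ 0} := by
  letI := zariskiTop V
  change Dense _
  rw [dense_iff_inter_open]
  rintro U hU ⟨u, hu⟩
  obtain ⟨q, hq, hq1, hq2⟩ := zOpen_basic U hU u hu
  obtain ⟨P, hP⟩ := polyF_line u (v - u) p hp
  obtain ⟨Q, hQ⟩ := polyF_line u (v - u) q hq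
  have h1 : P ≠ 0 := by
    rintro rfl
    have := hP 1
    simp at this
    exact hv this
  have h2 : Q ≠ 0 := by
    rintro rfl
    have := hQ 0
    simp at this
    exact hq1 this
  obtain ⟨t, -, ht⟩ := poly_ne_zero_exists (P * Q) (mul_ne_zero h1 h2)
  rw [Polynomial.eval_mul] at ht
  refine ⟨u + t • (v - u), hq2 _ ?_, ?_⟩
  · rw [hQ]; exact right_ne_zero_of_mul ht
  · change p _ ≠ 0
    rw [hP]; exact left_ne_zero_of_mul ht

lemma ker_dim_semicont {V N M : Type*} [AddCommGroup V] [Module ℂ V] [AddCommGroup N] [Module ℂ N]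
    [FiniteDimensional ℂ N] [AddCommGroup M] [Module ℂ M] (B : V →ₗ[ℂ] N →ₗ[ℂ] M) (v0 : V) :
    ∃ p ∈ PolyF V, p v0 ≠ 0 ∧ ∀ w, p w ≠ 0 →
      finrank ℂ (LinearMap.ker (B w)) ≤ finrank ℂ (LinearMap.ker (B v0)) := by
  obtain ⟨C, hC⟩ := Submodule.exists_isCompl (LinearMap.ker (B v0))
  have hinj : LinearMap.ker ((B v0) ∘ₗ C.subtype) = ⊥ := by
    rw [LinearMap.ker_eq_bot']
    intro x hx
    have : (x : N) ∈ LinearMap.ker (B v0) ⊓ C := ⟨hx, x.2⟩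
    rw [hC.inf_eq_bot] at this
    simpa using this
  obtain ⟨π, hπ⟩ := LinearMap.exists_leftInverse_of_injective _ hinj
  let b := Module.finBasis ℂ C
  let A : Fin (finrank ℂ C) → Fin (finrank ℂ C) → V →ₗ[ℂ] ℂ := fun i j =>
    (b.coord i) ∘ₗ π ∘ₗ (LinearMap.applyₗ (b j : N)) ∘ₗ B
  refine ⟨_, det_mem_polyF A, ?_, ?_⟩
  · have : (Matrix.of fun i j => A i j v0) = 1 := by
      ext i j
      have h1 : π (B v0 (b j : N)) = b j := by
        have := LinearMap.congr_fun hπ (b j)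
        simpa using this
      simp [A, h1, Matrix.one_apply, Finsupp.single_apply, eq_comm]
    rw [this]
    simp
  · intro w hw
    have hdis : LinearMap.ker (B w) ⊓ C = ⊥ := by
      rw [eq_bot_iff]
      rintro x ⟨hx, hxC⟩
      have h2 : (Matrix.of fun i j => A i j w).mulVec (b.repr ⟨x, hxC⟩) = 0 := by
        funext i
        have h3 : b.coord i (π (B w (∑ j, b.repr ⟨x, hxC⟩ j • (b j : N)))) = 0 := by
          have : (∑ j, b.repr ⟨x, hxC⟩ j • (b j : N)) = x := by
            have := congrArg C.subtype (b.sum_repr ⟨x, hxC⟩)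
            rw [map_sum] at this
            exact this
          rw [this]
          have hx' : B w x = 0 := hx
          rw [hx']; simp
        simp only [map_sum, map_smul, smul_eq_mul] at h3
        simp only [Matrix.mulVec, dotProduct, Matrix.of_apply, Pi.zero_apply]
        rw [← h3]
        refine Finset.sum_congr rfl fun j _ => ?_
        simp [A, mul_comm]
      have h4 := Matrix.eq_zero_of_mulVec_eq_zero hw h2
      have h5 : b.repr ⟨x, hxC⟩ = 0 := by
        ext i; exact congrFun h4 i
      have h6 : (⟨x, hxC⟩ : C) = 0 := by simpa using h5
      simpa using congrArg Subtype.val h6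
    have e1 := Submodule.finrank_sup_add_finrank_inf_eq (LinearMap.ker (B w)) C
    rw [hdis, finrank_bot] at e1
    have e2 := Submodule.finrank_add_eq_of_isCompl hC
    have e3 := Submodule.finrank_le (LinearMap.ker (B w) ⊔ C)
    omega

lemma kap_lie {L : Type*} [LieRing L] [LieAlgebra ℂ L] (x y z : L) :
    killingForm ℂ L ⁅x, y⁆ z = killingForm ℂ L x ⁅y, z⁆ :=
  LieModule.traceForm_apply_lie_apply ℂ L L x y z

lemma kap_comm {L : Type*} [LieRing L] [LieAlgebra ℂ L] (x y : L) :
    killingForm ℂ L x y = killingForm ℂ L y x :=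
  LieModule.traceForm_comm ℂ L L x y

/-- A root-vector configuration of type `A`. -/
structure ED {L : Type*} [LieRing L] [LieAlgebra ℂ L] {m : ℕ}
    (e : Fin (m + 1) → Fin (m + 1) → L) (h : (Fin (m + 1) → ℂ) → L) (Z : Submodule ℂ L) :
    Prop where
  b0 : ∀ i j k l, i ≠ j → k ≠ l → j ≠ k → i ≠ l → ⁅e i j, e k l⁆ = 0
  b1 : ∀ i j l, i ≠ j → j ≠ l → i ≠ l → ∃ c : ℂ, ⁅e i j, e j l⁆ = c • e i l
  bZ : ∀ i j, i ≠ j → ⁅e i j, e j i⁆ ∈ Z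
  b2 : ∀ z ∈ Z, ∀ k l, k ≠ l → ∃ c : ℂ, ⁅z, e k l⁆ = c • e k l
  bh : ∀ g i j, i ≠ j → ⁅h g, e i j⁆ = (g i - g j) • e i j
  bhZ : ∀ g, ∀ z ∈ Z, ⁅h g, z⁆ = 0
  ktop : ∀ S : Submodule ℂ L, Z ≤ S → (∀ i j, i ≠ j → e i j ∈ S) → S = ⊤
  kne : ∀ i j, i ≠ j → killingForm ℂ L (e i j) (e j i) ≠ 0
  korth : ∀ i j k l, i ≠ j → k ≠ l → ¬ (j = k ∧ i = l) → killingForm ℂ L (e i j) (e k l) = 0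
  korthZ : ∀ i j, i ≠ j → ∀ z ∈ Z, killingForm ℂ L (e i j) z = 0

namespace ED

variable {L : Type*} [LieRing L] [LieAlgebra ℂ L] {m : ℕ}
    {e : Fin (m + 1) → Fin (m + 1) → L} {h : (Fin (m + 1) → ℂ) → L} {Z : Submodule ℂ L}

lemma ne (H : ED e h Z) {i j : Fin (m + 1)} (hij : i ≠ j) : e i j ≠ 0 := by
  intro h0
  apply H.kne i j hij
  rw [h0]; simp

/-- action of `z ∈ Z` on opposite root vectors -/
lemma zneg (H : ED e h Z) {z : L} {k l : Fin (m + 1)} (hkl : k ≠ l) {c : ℂ}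
    (hc : ⁅z, e k l⁆ = c • e k l) (hz : z ∈ Z) : ⁅z, e l k⁆ = (-c) • e l k := by
  obtain ⟨d, hd⟩ := H.b2 z hz l k hkl.symm
  have h1 : killingForm ℂ L ⁅e k l, z⁆ (e l k) = killingForm ℂ L (e k l) ⁅z, e l k⁆ := kap_lie _ _ _
  rw [← lie_skew, hc, hd] at h1
  simp only [map_neg, map_smul, LinearMap.neg_apply, LinearMap.smul_apply, smul_eq_mul] at h1
  have h2 : (-c - d) * killingForm ℂ L (e k l) (e l k) = 0 := by linear_combination h1
  have h3 := (mul_eq_zero.mp h2).resolve_right (H.kne k l hkl)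
  rw [hd, show d = -c by linear_combination -h3]

lemma lemA (H : ED e h Z) {i j l : Fin (m + 1)} (hij : i ≠ j) (hjl : j ≠ l) (hil : i ≠ l)
    (h0 : ⁅⁅e i j, e j i⁆, e i j⁆ = 0) : ⁅⁅e i j, e j i⁆, e j l⁆ = 0 := by
  have hz := H.bZ i j hij
  obtain ⟨c, hc⟩ := H.b2 _ hz j l hjl
  have e1 : ⁅⁅e i j, e j i⁆, e j l⁆ = - ⁅e j i, ⁅e i j, e j l⁆⁆ := by
    rw [lie_lie, H.b0 j i j l hij.symm hjl hij hjl]; simp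
  by_cases hx : ⁅e i j, e j l⁆ = 0
  · rw [e1, hx]; simp
  obtain ⟨d, hd⟩ := H.b1 i j l hij hjl hil
  have hd0 : d ≠ 0 := by
    rintro rfl
    apply hx; rw [hd]; simp
  have e2 : ⁅⁅e i j, e j i⁆, ⁅e i j, e j l⁆⁆ = c • ⁅e i j, e j l⁆ := by
    rw [leibniz_lie, h0, hc]; simp
  have e3 : ⁅⁅e i j, e j i⁆, ⁅e i j, e j l⁆⁆ = (-c) • ⁅e i j, e j l⁆ := by
    rw [lie_lie]
    have : ⁅e i j, ⁅e i j, e j l⁆⁆ = 0 := by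
      rw [hd, lie_smul, H.b0 i j i l hij hil hij.symm hil, smul_zero]
    rw [this]
    have e4 : ⁅e j i, ⁅e i j, e j l⁆⁆ = (-c) • e j l := by
      rw [neg_smul, ← hc, e1, neg_neg]
    rw [e4]; simp
  have e5 : (c + c) • ⁅e i j, e j l⁆ = 0 := by
    rw [add_smul]
    nth_rewrite 1 [← e2]
    rw [e3]; simp
  have e6 : c = 0 := by
    have := (smul_eq_zero.mp e5).resolve_right hx
    linear_combination this / 2
  rw [hc, e6, zero_smul]

lemma Hh (H : ED e h Z) {i j : Fin (m + 1)} (hij : i ≠ j) (g : Fin (m + 1) → ℂ) :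
    killingForm ℂ L ⁅e i j, e j i⁆ (h g) = (g i - g j) * killingForm ℂ L (e i j) (e j i) := by
  rw [kap_lie, ← lie_skew, H.bh g j i hij.symm]
  simp only [map_neg, map_smul, smul_eq_mul]
  ring

lemma Hne (H : ED e h Z) {i j : Fin (m + 1)} (hij : i ≠ j) :
    ⁅⁅e i j, e j i⁆, e i j⁆ ≠ 0 := by
  intro h0
  have hz := H.bZ i j hij
  have hsw : ⁅e j i, e i j⁆ = - ⁅e i j, e j i⁆ := by rw [lie_skew]
  have neg0 : ∀ k l, k ≠ l → ⁅⁅e i j, e j i⁆, e k l⁆ = 0 → ⁅⁅e i j, e j i⁆, e l k⁆ = 0 := by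
    intro k l hkl hh
    have := H.zneg (c := 0) hkl (by rw [hh]; simp) hz
    simpa using this
  have h0' : ⁅⁅e j i, e i j⁆, e j i⁆ = 0 := by
    rw [hsw, neg_lie, neg0 i j hij h0, neg_zero]
  have all : ∀ k l, k ≠ l → ⁅⁅e i j, e j i⁆, e k l⁆ = 0 := by
    have A : ∀ l, j ≠ l → ⁅⁅e i j, e j i⁆, e j l⁆ = 0 := by
      intro l hl
      by_cases hil : i = l
      · subst hil; exact neg0 _ _ hij h0
      · exact H.lemA hij hl hil h0
    have B : ∀ l, i ≠ l → ⁅⁅e i j, e j i⁆, e i l⁆ = 0 := by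
      intro l hl
      by_cases hjl : j = l
      · subst hjl; exact h0
      · have := H.lemA hij.symm hl hjl h0'
        rw [hsw, neg_lie, neg_eq_zero] at this
        exact this
    intro k l hkl
    by_cases h1 : j = k
    · subst h1; exact A l hkl
    by_cases h2 : i = k
    · subst h2; exact B l hkl
    by_cases h3 : j = l
    · subst h3; exact neg0 _ _ hkl.symm (A k h1)
    by_cases h4 : i = l
    · subst h4; exact neg0 _ _ hkl.symm (B k h2)
    rw [lie_lie, H.b0 j i k l hij.symm hkl h2 h3, H.b0 i j k l hij hkl h1 h4]
    simp
  have hz0 : (ad ℂ L ⁅e i j, e j i⁆) ∘ₗ (ad ℂ L (h (Pi.single i 1))) = 0 := by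
    rw [← LinearMap.ker_eq_top]
    apply H.ktop
    · intro z hz'
      change ⁅⁅e i j, e j i⁆, ⁅h (Pi.single i 1), z⁆⁆ = 0
      rw [H.bhZ _ z hz', lie_zero]
    · intro k l hkl
      change ⁅⁅e i j, e j i⁆, ⁅h (Pi.single i 1), e k l⁆⁆ = 0
      rw [H.bh _ k l hkl, lie_smul, all k l hkl, smul_zero]
  have hk : killingForm ℂ L ⁅e i j, e j i⁆ (h (Pi.single i 1)) = 0 := by
    rw [LieModule.traceForm_apply_apply]
    change LinearMap.trace ℂ L ((ad ℂ L ⁅e i j, e j i⁆) ∘ₗ (ad ℂ L (h (Pi.single i 1)))) = 0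
    rw [hz0]; simp
  rw [H.Hh hij] at hk
  have := H.kne i j hij
  simp [hij.symm, this] at hk

lemma cyc (H : ED e h Z) {i j l : Fin (m + 1)} (hij : i ≠ j) (hjl : j ≠ l) (hil : i ≠ l)
    (ht : ⁅e i j, e j l⁆ ≠ 0) : ⁅e j l, e l i⁆ ≠ 0 := by
  intro h0
  obtain ⟨d, hd⟩ := H.b1 i j l hij hjl hil
  have h1 := kap_lie (e i j) (e j l) (e l i)
  rw [h0, hd] at h1
  simp only [map_smul, LinearMap.smul_apply, smul_eq_mul, map_zero] at h1
  have h2 := (mul_eq_zero.mp h1).resolve_right (H.kne i l hil)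
  apply ht
  rw [hd, h2, zero_smul]

lemma revv (H : ED e h Z) {i j l : Fin (m + 1)} (hij : i ≠ j) (hjl : j ≠ l) (hil : i ≠ l)
    (ht : ⁅e l j, e j i⁆ ≠ 0) : ⁅e i j, e j l⁆ ≠ 0 := by
  intro h0
  have hz := H.bZ i j hij
  have h1 : ⁅⁅e i j, e j i⁆, e j l⁆ = 0 := by
    rw [lie_lie, h0, H.b0 j i j l hij.symm hjl hij hjl]; simp
  have h2 : ⁅⁅e i j, e j i⁆, e l j⁆ = 0 := by
    have := H.zneg (c := 0) hjl (by rw [h1]; simp) hz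
    simpa using this
  have h5 : ⁅e l i, e i j⁆ = 0 := by
    by_contra hc
    exact H.cyc hil.symm hij hjl.symm hc h0
  have h3 : ⁅⁅e i j, e j i⁆, e l i⁆ = 0 := by
    rw [lie_lie, H.b0 j i l i hij.symm hil.symm hil hij.symm, ← lie_skew (e i j) (e l i), h5]; simp
  obtain ⟨d, hd⟩ := H.b1 l j i hjl.symm hij.symm hil.symm
  have h4 : ⁅⁅e i j, e j i⁆, ⁅e l j, e j i⁆⁆ = 0 := by
    rw [hd, lie_smul, h3, smul_zero]
  rw [leibniz_lie, h2, zero_lie, zero_add] at h4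
  obtain ⟨c, hc⟩ := H.b2 _ hz i j hij
  have hc' := H.zneg hij hc hz
  rw [hc', lie_smul] at h4
  have h6 := (smul_eq_zero.mp h4).resolve_right ht
  apply H.Hne hij
  rw [hc, show c = 0 by linear_combination -h6, zero_smul]

/-- `t {i,j,l}` -/
def tt (e : Fin (m + 1) → Fin (m + 1) → L) (i j l : Fin (m + 1)) : Prop :=
  i ≠ j ∧ j ≠ l ∧ i ≠ l ∧ ⁅e i j, e j l⁆ ≠ 0

lemma tt_cyc (H : ED e h Z) {i j l : Fin (m + 1)} (ht : tt e i j l) : tt e j l i :=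
  ⟨ht.2.1, ht.2.2.1.symm, ht.1.symm, H.cyc ht.1 ht.2.1 ht.2.2.1 ht.2.2.2⟩

lemma tt_rev (H : ED e h Z) {i j l : Fin (m + 1)} (ht : tt e i j l) : tt e l j i :=
  ⟨ht.2.1.symm, ht.1.symm, ht.2.2.1.symm,
    H.revv ht.2.1.symm ht.1.symm ht.2.2.1.symm ht.2.2.2⟩

lemma tt_swap (H : ED e h Z) {i j l : Fin (m + 1)} (ht : tt e i j l) : tt e j i l :=
  H.tt_cyc (H.tt_rev ht)

/-- two triangles sharing the edge `ik` -/
lemma tt_jac (H : ED e h Z) {i j k l : Fin (m + 1)} (h1 : tt e i j k) (h2 : tt e i k l)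
    (hjl : j ≠ l) : tt e j k l ∧ tt e i j l := by
  obtain ⟨hij, hjk, hik, t1⟩ := h1
  obtain ⟨-, hkl, hil, t2⟩ := h2
  obtain ⟨c, hc⟩ := H.b1 i j k hij hjk hik
  have hc0 : c ≠ 0 := by
    rintro rfl
    apply t1; rw [hc, zero_smul]
  have e1 : ⁅⁅e i j, e j k⁆, e k l⁆ ≠ 0 := by
    rw [hc, smul_lie]
    exact smul_ne_zero hc0 t2
  rw [lie_lie, H.b0 i j k l hij hkl hjk hil, lie_zero, sub_zero] at e1
  have e2 : ⁅e j k, e k l⁆ ≠ 0 := by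
    intro h0; apply e1; rw [h0, lie_zero]
  refine ⟨⟨hjk, hkl, hjl, e2⟩, hij, hjl, hil, ?_⟩
  obtain ⟨d, hd⟩ := H.b1 j k l hjk hkl hjl
  intro h0
  apply e1
  rw [hd, lie_smul, h0, smul_zero]

/-- the clique -/
def clq (e : Fin (m + 1) → Fin (m + 1) → L) (i0 j0 x : Fin (m + 1)) : Prop :=
  x = i0 ∨ x = j0 ∨ tt e i0 j0 x

lemma clq_step (H : ED e h Z) {i0 j0 x y z : Fin (m + 1)} (hij : i0 ≠ j0)
    (hx : clq e i0 j0 x) (hy : clq e i0 j0 y) (ht : tt e x y z) : clq e i0 j0 z := by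
  by_cases z1 : z = i0
  · exact Or.inl z1
  by_cases z2 : z = j0
  · exact Or.inr (Or.inl z2)
  right; right
  have A : ∀ y, tt e i0 j0 y → tt e i0 y z → tt e i0 j0 z := fun y h1 h2 =>
    (H.tt_jac h1 h2 (Ne.symm z2)).2
  have B : ∀ y, tt e i0 j0 y → tt e j0 y z → tt e i0 j0 z := fun y h1 h2 =>
    H.tt_swap (H.tt_jac (H.tt_swap h1) h2 (Ne.symm z1)).2
  rcases hx with rfl | rfl | hx <;> rcases hy with rfl | rfl | hy
  · exact absurd rfl ht.1
  · exact ht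
  · exact A _ hy ht
  · exact H.tt_swap ht
  · exact absurd rfl ht.1
  · exact B _ hy ht
  · exact A _ hx (H.tt_swap ht)
  · exact B _ hx (H.tt_swap ht)
  · have q : tt e i0 x y := by
      -- triangles i0 j0 x and i0 j0 y share the edge i0 j0
      have h1 : tt e i0 x j0 := H.tt_swap (H.tt_cyc (H.tt_cyc hx))
      exact (H.tt_jac h1 hy ht.1).2
    have h1 : tt e x i0 y := H.tt_swap q
    have q2 := (H.tt_jac h1 ht (Ne.symm z1)).1
    exact A _ hy q2

end ED

lemma ED.all_tt {L : Type*} [LieRing L] [LieAlgebra ℂ L] [LieAlgebra.IsSimple ℂ L] {m : ℕ}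
    {e : Fin (m + 1) → Fin (m + 1) → L} {h : (Fin (m + 1) → ℂ) → L} {Z : Submodule ℂ L}
    (H : ED e h Z) {i j l : Fin (m + 1)} (hij : i ≠ j) (hjl : j ≠ l) (hil : i ≠ l) :
    ⁅e i j, e j l⁆ ≠ 0 := by
  by_contra hcon
  let G : Set L := {x | ∃ a b, a ≠ b ∧ ED.clq e i j a ∧ ED.clq e i j b ∧
    (x = e a b ∨ x = ⁅e a b, e b a⁆)}
  have hl : ¬ ED.clq e i j l := by
    rintro (h1 | h1 | h1)
    · exact hil h1.symm
    · exact hjl h1.symm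
    · exact h1.2.2.2 hcon
  have hstep : ∀ x y z, x ≠ y → y ≠ z → x ≠ z → ED.clq e i j x → ED.clq e i j y →
      ¬ ED.clq e i j z → ⁅e x y, e y z⁆ = 0 ∧ ⁅e z x, e x y⁆ = 0 := by
    intro x y z h1 h2 h3 hx hy hz
    refine ⟨?_, ?_⟩
    · by_contra hc
      exact hz (H.clq_step hij hx hy ⟨h1, h2, h3, hc⟩)
    · by_contra hc
      exact hz (H.clq_step hij hx hy (H.tt_cyc ⟨h3.symm, h1, h2.symm, hc⟩))
  have gE : ∀ a b, a ≠ b → ED.clq e i j a → ED.clq e i j b → e a b ∈ Submodule.span ℂ G :=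
    fun a b h1 h2 h3 => Submodule.subset_span ⟨a, b, h1, h2, h3, Or.inl rfl⟩
  have gH : ∀ a b, a ≠ b → ED.clq e i j a → ED.clq e i j b →
      ⁅e a b, e b a⁆ ∈ Submodule.span ℂ G :=
    fun a b h1 h2 h3 => Submodule.subset_span ⟨a, b, h1, h2, h3, Or.inr rfl⟩
  -- bracket of an arbitrary root vector with a clique root vector
  have hee : ∀ k l' a b, k ≠ l' → a ≠ b → ED.clq e i j a → ED.clq e i j b →
      ⁅e k l', e a b⁆ ∈ Submodule.span ℂ G ∧
      (¬ (ED.clq e i j k ∧ ED.clq e i j l') → ⁅e k l', e a b⁆ = 0) := by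
    intro k l' a b hkl hab ha hb
    by_cases h1 : l' = a
    · subst h1
      by_cases h2 : k = b
      · subst h2
        exact ⟨gH _ _ hkl hb ha, fun hc => absurd ⟨hb, ha⟩ hc⟩
      · by_cases hk : ED.clq e i j k
        · refine ⟨?_, fun hc => absurd ⟨hk, ha⟩ hc⟩
          obtain ⟨c, hc⟩ := H.b1 k l' b hkl hab h2
          rw [hc]
          exact Submodule.smul_mem _ _ (gE _ _ h2 hk hb)
        · have := (hstep l' b k hab (Ne.symm h2) hkl.symm ha hb hk).2
          rw [this]
          exact ⟨Submodule.zero_mem _, fun _ => rfl⟩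
    · by_cases h2 : k = b
      · subst h2
        rw [← lie_skew]
        by_cases hl' : ED.clq e i j l'
        · refine ⟨?_, fun hc => absurd ⟨hb, hl'⟩ hc⟩
          obtain ⟨c, hc⟩ := H.b1 a k l' hab hkl (Ne.symm h1)
          rw [hc]
          exact Submodule.neg_mem _ (Submodule.smul_mem _ _ (gE _ _ (Ne.symm h1) ha hl'))
        · have := (hstep a k l' hab hkl (Ne.symm h1) ha hb hl').1
          rw [this, neg_zero]
          exact ⟨Submodule.zero_mem _, fun _ => rfl⟩
      · rw [H.b0 k l' a b hkl hab h1 h2]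
        exact ⟨Submodule.zero_mem _, fun _ => rfl⟩
  have hgen : ∀ x ∈ Submodule.span ℂ G, ∀ y : L, ⁅y, x⁆ ∈ Submodule.span ℂ G := by
    intro x hx
    induction hx using Submodule.span_induction with
    | zero => intro y; rw [lie_zero]; exact Submodule.zero_mem _
    | add x y _ _ h1 h2 => intro z; rw [lie_add]; exact Submodule.add_mem _ (h1 z) (h2 z)
    | smul c x _ h1 => intro z; rw [lie_smul]; exact Submodule.smul_mem _ _ (h1 z)
    | mem x hx =>
      intro y
      obtain ⟨a, b, hab, ha, hb, hx⟩ := hx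
      have key : Submodule.comap (ad ℂ L x : L →ₗ[ℂ] L) (Submodule.span ℂ G) = ⊤ := by
        apply H.ktop
        · intro z hz
          change ⁅x, z⁆ ∈ Submodule.span ℂ G
          rw [← lie_skew, Submodule.neg_mem_iff]
          obtain ⟨c, hc⟩ := H.b2 z hz a b hab
          rcases hx with rfl | rfl
          · rw [hc]
            exact Submodule.smul_mem _ _ (gE _ _ hab ha hb)
          · rw [leibniz_lie, hc, H.zneg hab hc hz]
            simp
        · intro k l' hkl
          change ⁅x, e k l'⁆ ∈ Submodule.span ℂ G
          rw [← lie_skew, Submodule.neg_mem_iff]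
          rcases hx with rfl | rfl
          · exact (hee k l' a b hkl hab ha hb).1
          · by_cases hc : ED.clq e i j k ∧ ED.clq e i j l'
            · obtain ⟨c, hc'⟩ := H.b2 _ (H.bZ a b hab) k l' hkl
              rw [← lie_skew, hc']
              exact Submodule.neg_mem _ (Submodule.smul_mem _ _ (gE _ _ hkl hc.1 hc.2))
            · rw [leibniz_lie, (hee k l' a b hkl hab ha hb).2 hc,
                (hee k l' b a hkl hab.symm hb ha).2 hc]
              simp
      have hy : y ∈ Submodule.comap (ad ℂ L x : L →ₗ[ℂ] L) (Submodule.span ℂ G) := by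
        rw [key]; trivial
      rw [← lie_skew, Submodule.neg_mem_iff]
      exact hy
  let I : LieIdeal ℂ L :=
    { Submodule.span ℂ G with lie_mem := fun {y x} hx => hgen x hx y }
  have hci : ED.clq e i j i := Or.inl rfl
  have hcj : ED.clq e i j j := Or.inr (Or.inl rfl)
  rcases LieAlgebra.IsSimple.eq_bot_or_eq_top (R := ℂ) I with hI | hI
  · have : e i j ∈ I := gE i j hij hci hcj
    rw [hI] at this
    exact H.ne hij this
  · have hx : e i l ∈ I := by rw [hI]; trivial
    have horth : ∀ x ∈ Submodule.span ℂ G, killingForm ℂ L (e l i) x = 0 := by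
      intro x hx
      induction hx using Submodule.span_induction with
      | zero => simp
      | add x y _ _ h1 h2 => rw [map_add, h1, h2, add_zero]
      | smul c x _ h1 => rw [map_smul, h1, smul_zero]
      | mem x hx =>
        obtain ⟨a, b, hab, ha, hb, rfl | rfl⟩ := hx
        · apply H.korth _ _ _ _ hil.symm hab
          rintro ⟨_, rfl⟩
          exact hl hb
        · exact H.korthZ _ _ hil.symm _ (H.bZ a b hab)
    exact H.kne l i hil.symm (horth _ hx)

def epsv {m : ℕ} (i : Fin (m + 1)) : Fin m → ℤ := fun a => if (i : ℕ) ≤ a then 1 else 0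

/-- the root `ε_i - ε_j` -/
def rt {m : ℕ} (i j : Fin (m + 1)) : Fin m → ℤ := epsv i - epsv j

lemma rt_add {m : ℕ} (i j l : Fin (m + 1)) : rt i j + rt j l = rt i l := by
  unfold rt; abel

lemma rt_neg {m : ℕ} (i j : Fin (m + 1)) : - rt i j = rt j i := by
  unfold rt; abel

lemma rt_self {m : ℕ} (i : Fin (m + 1)) : rt i i = 0 := by
  unfold rt; abel

lemma intv_eq_rt {m : ℕ} (i j : Fin m) (hij : i ≤ j) : intv i j = rt i.castSucc j.succ := by
  funext a
  simp only [intv, rt, epsv, Pi.sub_apply, Fin.val_castSucc, Fin.val_succ, Fin.le_def]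
  rw [Fin.le_def] at hij
  split_ifs <;> omega

def phg {m : ℕ} (g : Fin (m + 1) → ℂ) (γ : Fin m → ℤ) : ℂ :=
  ∑ a, (γ a : ℂ) * (g a.castSucc - g a.succ)

lemma phg_add {m : ℕ} (g : Fin (m + 1) → ℂ) (γ δ : Fin m → ℤ) :
    phg g (γ + δ) = phg g γ + phg g δ := by
  unfold phg
  rw [← Finset.sum_add_distrib]
  refine Finset.sum_congr rfl fun a _ => ?_
  simp [add_mul]

lemma phg_zero {m : ℕ} (g : Fin (m + 1) → ℂ) : phg g (0 : Fin m → ℤ) = 0 := by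
  simp [phg]

lemma phg_epsv {m : ℕ} (g : Fin (m + 1) → ℂ) (i : Fin (m + 1)) :
    phg g (epsv i) = g i - g (Fin.last m) := by
  have aux : ∀ (G : ℕ → ℂ) (n i : ℕ), i ≤ n →
      ∑ a ∈ Finset.range n, (if i ≤ a then (G a - G (a + 1)) else 0) = G i - G n := by
    intro G n i hi
    induction n with
    | zero => obtain rfl : i = 0 := by omega
              simp
    | succ n ih =>
      rw [Finset.sum_range_succ]
      by_cases h : i ≤ n
      · rw [ih h, if_pos h]; ring
      · obtain rfl : i = n + 1 := by omega
        rw [Finset.sum_eq_zero]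
        · simp
        · intro a ha
          rw [Finset.mem_range] at ha
          rw [if_neg (by omega)]
  have := aux (fun n => if h : n < m + 1 then g ⟨n, h⟩ else 0) m i (by omega)
  rw [Finset.sum_range] at this
  have h2 : phg g (epsv i) = g i - (if h : m < m + 1 then g ⟨m, h⟩ else 0) := by
    simp only [Fin.is_lt, dite_true, Fin.eta] at this
    rw [← this]
    unfold phg
    refine Finset.sum_congr rfl fun a _ => ?_
    have h1 : (a : ℕ) < m + 1 := by omega
    have h2 : (a : ℕ) + 1 < m + 1 := by omega
    simp only [epsv, h1, h2, dite_true]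
    split_ifs
    · simp [Fin.castSucc, Fin.succ, Fin.castAdd, Fin.castLE]
    · simp
  rw [h2]
  simp [Fin.last]

lemma phg_rt {m : ℕ} (g : Fin (m + 1) → ℂ) (i j : Fin (m + 1)) :
    phg g (rt i j) = g i - g j := by
  have : rt i j + epsv j = epsv i := by unfold rt; abel
  have h := phg_add g (rt i j) (epsv j)
  rw [this, phg_epsv, phg_epsv] at h
  linear_combination -h

lemma rt_ne_zero {m : ℕ} {i j : Fin (m + 1)} (hij : i ≠ j) : rt i j ≠ 0 := by
  intro h
  have := phg_rt (Pi.single i 1) i j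
  rw [h, phg_zero] at this
  simp [hij.symm] at this

lemma rt_sum_ne {m : ℕ} {i j k l : Fin (m + 1)} (hij : i ≠ j) (hkl : k ≠ l) (hjk : j ≠ k)
    (hil : i ≠ l) (p q : Fin (m + 1)) : rt i j + rt k l ≠ rt p q := by
  intro h
  have key : ∀ g : Fin (m + 1) → ℂ, g i - g j + (g k - g l) = g p - g q := by
    intro g
    rw [← phg_rt, ← phg_rt, ← phg_rt, ← phg_add, h]
  have hip : i = p := by
    by_contra hc
    have := key (Pi.single i 1)
    simp only [Pi.single_apply, hij.symm, hil.symm, Ne.symm hc, if_true, if_false] at this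
    split_ifs at this <;> norm_num at this
  have hkp : k = p := by
    by_contra hc
    have := key (Pi.single k 1)
    simp only [Pi.single_apply, hjk, hkl.symm, Ne.symm hc, if_true, if_false] at this
    split_ifs at this <;> norm_num at this
  subst hip
  subst hkp
  have := key (Pi.single k 1)
  simp only [Pi.single_apply, hjk, hkl.symm, if_true, if_false] at this
  split_ifs at this <;> norm_num at this

lemma mem_R_iff {L : Type*} [LieRing L] [LieAlgebra ℂ L] {m : ℕ} (td : TriangularData L (Fin m))
    (hA : ∀ γ : Fin m → ℤ, γ ∈ td.R ↔
      ∃ i j : Fin m, i ≤ j ∧ (γ = intv i j ∨ γ = -intv i j)) (γ : Fin m → ℤ) :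
    γ ∈ td.R ↔ ∃ i j : Fin (m + 1), i ≠ j ∧ γ = rt i j := by
  rw [hA]
  constructor
  · rintro ⟨i, j, hij, rfl | rfl⟩
    · refine ⟨_, _, ?_, intv_eq_rt i j hij⟩
      intro h
      have := congrArg Fin.val h
      simp at this
      rw [Fin.le_def] at hij
      omega
    · rw [intv_eq_rt i j hij, rt_neg]
      refine ⟨_, _, ?_, rfl⟩
      intro h
      have := congrArg Fin.val h
      simp at this
      rw [Fin.le_def] at hij
      omega
  · have aux : ∀ i j : Fin (m + 1), i < j → ∃ a b : Fin m, a ≤ b ∧ rt i j = intv a b := by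
      intro i j hij
      rw [Fin.lt_def] at hij
      have h1 : (i : ℕ) ≤ (j : ℕ) - 1 := by omega
      refine ⟨⟨i, by omega⟩, ⟨j - 1, by omega⟩, h1, ?_⟩
      rw [intv_eq_rt _ _ h1]
      congr 1
      ext
      simp
      omega
    rintro ⟨i, j, hij, rfl⟩
    rcases lt_or_gt_of_ne hij with h | h
    · obtain ⟨a, b, hab, h'⟩ := aux i j h
      exact ⟨a, b, hab, Or.inl h'⟩
    · obtain ⟨a, b, hab, h'⟩ := aux j i h
      exact ⟨a, b, hab, Or.inr (by rw [← h', rt_neg])⟩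

lemma grading_elt {L : Type*} [LieRing L] [LieAlgebra ℂ L] [FiniteDimensional ℂ L]
    [LieAlgebra.IsSimple ℂ L] {m : ℕ} (td : TriangularData L (Fin m)) (g : Fin (m + 1) → ℂ) :
    ∃ h : L, ∀ γ, ∀ x ∈ td.rs γ, ⁅h, x⁆ = phg g γ • x := by
  let I := {γ : Fin m → ℤ // γ = 0 ∨ γ ∈ td.R}
  let eq := LinearEquiv.ofBijective (DirectSum.coeLinearMap fun γ : I => td.rs γ.1) td.isInternal
  let D0 : L →ₗ[ℂ] L :=
    (DirectSum.toModule ℂ I L fun γ => phg g γ.1 • (td.rs γ.1).subtype) ∘ₗ eq.symm.toLinearMap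
  have hD0 : ∀ γ, ∀ x ∈ td.rs γ, D0 x = phg g γ • x := by
    intro γ x hx
    by_cases hγ : γ = 0 ∨ γ ∈ td.R
    · have h1 : eq (DirectSum.lof ℂ I (fun γ : I => td.rs γ.1) ⟨γ, hγ⟩ ⟨x, hx⟩) = x := by
        exact DirectSum.coeLinearMap_lof (fun γ : I => td.rs γ.1) ⟨γ, hγ⟩ ⟨x, hx⟩
      have h2 : eq.symm x = DirectSum.lof ℂ I (fun γ : I => td.rs γ.1) ⟨γ, hγ⟩ ⟨x, hx⟩ := by
        rw [LinearEquiv.symm_apply_eq, h1]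
      simp only [D0, LinearMap.comp_apply, LinearEquiv.coe_coe]
      rw [h2, DirectSum.toModule_lof]
      simp
    · push Not at hγ
      rw [td.rs_bot γ hγ.1 hγ.2] at hx
      rw [(Submodule.mem_bot ℂ).mp hx]
      simp
  have htop : ∀ S : Submodule ℂ L, (∀ γ, td.rs γ ≤ S) → ∀ x, x ∈ S := by
    intro S hS x
    have h1 := td.isInternal.submodule_iSup_eq_top
    have h2 : (⊤ : Submodule ℂ L) ≤ S := by
      rw [← h1]
      exact iSup_le fun γ => hS _
    exact h2 trivial
  have hleib : ∀ x y, D0 ⁅x, y⁆ = ⁅x, D0 y⁆ - ⁅y, D0 x⁆ := by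
    intro x y
    let A : L →ₗ[ℂ] L →ₗ[ℂ] L := (LieModule.toEnd ℂ L L : L →ₗ[ℂ] Module.End ℂ L)
    let B : L →ₗ[ℂ] L →ₗ[ℂ] L := A.compr₂ D0 - A.compl₂ D0 + (A.compl₂ D0).flip
    have hB : ∀ x y, B x y = D0 ⁅x, y⁆ - ⁅x, D0 y⁆ + ⁅y, D0 x⁆ := fun x y => rfl
    have hx : x ∈ LinearMap.ker B := by
      apply htop
      intro γ x hx
      rw [LinearMap.mem_ker]
      apply LinearMap.ext
      intro y
      have hy : y ∈ LinearMap.ker (B x) := by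
        apply htop
        intro δ y hy
        rw [LinearMap.mem_ker, hB, hD0 γ x hx, hD0 δ y hy,
          hD0 _ _ (td.bracket_mem γ δ x hx y hy), phg_add, lie_smul, lie_smul, ← lie_skew x y]
        module
      simpa using hy
    have := LinearMap.congr_fun (LinearMap.mem_ker.mp hx) y
    rw [hB] at this
    rw [← sub_eq_zero, ← sub_add]
    simpa using this
  obtain ⟨h, hh⟩ := LieDerivation.IsKilling.exists_eq_ad (R := ℂ) (⟨D0, hleib⟩ : LieDerivation ℂ L L)
  refine ⟨h, fun γ x hx => ?_⟩
  have h3 := congrArg (fun D : LieDerivation ℂ L L => D x) hh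
  simp only [LieDerivation.ad_apply_apply] at h3
  rw [h3]
  exact hD0 γ x hx

lemma rs_top {L : Type*} [LieRing L] [LieAlgebra ℂ L] {m : ℕ} (td : TriangularData L (Fin m))
    (S : Submodule ℂ L) (hS : ∀ γ, (γ = 0 ∨ γ ∈ td.R) → td.rs γ ≤ S) : S = ⊤ := by
  have h1 := td.isInternal.submodule_iSup_eq_top
  rw [eq_top_iff, ← h1]
  exact iSup_le fun γ => hS _ γ.2

lemma exists_phg {m : ℕ} {γ : Fin m → ℤ} (hγ : γ ≠ 0) : ∃ g, phg g γ ≠ 0 := by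
  obtain ⟨a, ha⟩ := Function.ne_iff.mp hγ
  -- g = indicator of indices at most a
  refine ⟨fun i => if (i : ℕ) ≤ a then 1 else 0, ?_⟩
  unfold phg
  rw [Finset.sum_eq_single a]
  · simpa using ha
  · intro b _ hb
    have : (b : ℕ) ≠ a := fun h => hb (Fin.ext h)
    simp only [Fin.val_castSucc, Fin.val_succ]
    split_ifs <;> first | omega | simp
  · simp

lemma rs_orth {L : Type*} [LieRing L] [LieAlgebra ℂ L] [FiniteDimensional ℂ L]
    [LieAlgebra.IsSimple ℂ L] {m : ℕ} (td : TriangularData L (Fin m)) {γ δ : Fin m → ℤ}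
    (hγδ : γ + δ ≠ 0) {x y : L} (hx : x ∈ td.rs γ) (hy : y ∈ td.rs δ) :
    killingForm ℂ L x y = 0 := by
  obtain ⟨g, hg⟩ := exists_phg hγδ
  obtain ⟨h, hh⟩ := grading_elt td g
  have h1 := kap_lie x h y
  rw [← lie_skew, hh γ x hx, hh δ y hy] at h1
  simp only [map_neg, map_smul, LinearMap.neg_apply, LinearMap.smul_apply, smul_eq_mul] at h1
  rw [phg_add] at hg
  have h2 : (phg g γ + phg g δ) * killingForm ℂ L x y = 0 := by linear_combination -h1
  exact (mul_eq_zero.mp h2).resolve_left hg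

lemma rs_nondeg {L : Type*} [LieRing L] [LieAlgebra ℂ L] [FiniteDimensional ℂ L]
    [LieAlgebra.IsSimple ℂ L] {m : ℕ} (td : TriangularData L (Fin m)) {γ : Fin m → ℤ}
    {x : L} (hx : x ∈ td.rs γ) (h0 : ∀ y ∈ td.rs (-γ), killingForm ℂ L x y = 0) : x = 0 := by
  apply (LieAlgebra.IsKilling.killingForm_nondegenerate ℂ L).1 x
  intro y
  have : LinearMap.ker (killingForm ℂ L x) = ⊤ := by
    apply rs_top td
    intro δ _ y hy
    rw [LinearMap.mem_ker]
    by_cases hd : γ + δ = 0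
    · obtain rfl : δ = -γ := by rw [eq_neg_iff_add_eq_zero, add_comm]; exact hd
      exact h0 y hy
    · exact rs_orth td hd hx hy
  have h2 : y ∈ LinearMap.ker (killingForm ℂ L x) := by rw [this]; trivial
  exact h2

theorem exists_ED {L : Type*} [LieRing L] [LieAlgebra ℂ L] [FiniteDimensional ℂ L]
    [LieAlgebra.IsSimple ℂ L] {m : ℕ} (td : TriangularData L (Fin m))
    (hA : ∀ γ : Fin m → ℤ, γ ∈ td.R ↔
      ∃ i j : Fin m, i ≤ j ∧ (γ = intv i j ∨ γ = -intv i j)) :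
    ∃ (e : Fin (m + 1) → Fin (m + 1) → L) (h : (Fin (m + 1) → ℂ) → L), ED e h (td.rs 0) ∧
      ∀ i j, i ≠ j → e i j ∈ td.rs (rt i j) ∧ ∀ x ∈ td.rs (rt i j), ∃ c : ℂ, x = c • e i j := by
  have hR := mem_R_iff td hA
  choose h hh using grading_elt td
  have hex : ∀ i j : Fin (m + 1), ∃ x : L, i ≠ j → x ≠ 0 ∧ x ∈ td.rs (rt i j) ∧
      ∀ y ∈ td.rs (rt i j), ∃ c : ℂ, y = c • x := by
    intro i j
    by_cases hij : i = j
    · exact ⟨0, fun h => absurd hij h⟩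
    have hd := td.rs_dim (rt i j) ((hR _).mpr ⟨i, j, hij, rfl⟩)
    rw [finrank_eq_one_iff'] at hd
    obtain ⟨v, hv, hv'⟩ := hd
    refine ⟨v, fun _ => ⟨by simpa using hv, v.2, fun y hy => ?_⟩⟩
    obtain ⟨c, hc⟩ := hv' ⟨y, hy⟩
    exact ⟨c, by rw [← Submodule.coe_smul, hc]⟩
  choose e he using hex
  have hb0 : ∀ i j k l, i ≠ j → k ≠ l → j ≠ k → i ≠ l → ⁅e i j, e k l⁆ = 0 := by
    intro i j k l hij hkl hjk hil
    have h1 := td.bracket_mem _ _ _ (he i j hij).2.1 _ (he k l hkl).2.1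
    rw [td.rs_bot] at h1
    · exact (Submodule.mem_bot ℂ).mp h1
    · rw [← rt_self i]
      exact rt_sum_ne hij hkl hjk hil _ _
    · rw [hR]
      rintro ⟨p, q, _, h2⟩
      exact rt_sum_ne hij hkl hjk hil _ _ h2
  refine ⟨e, h, ⟨hb0, ?_, ?_, ?_, ?_, ?_, ?_, ?_, ?_, ?_⟩, fun i j hij => (he i j hij).2⟩
  · intro i j l hij hjl hil
    apply (he i l hil).2.2
    rw [← rt_add i j l]
    exact td.bracket_mem _ _ _ (he i j hij).2.1 _ (he j l hjl).2.1
  · intro i j hij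
    rw [← rt_self i, ← rt_add i j i]
    exact td.bracket_mem _ _ _ (he i j hij).2.1 _ (he j i hij.symm).2.1
  · intro z hz k l hkl
    apply (he k l hkl).2.2
    have := td.bracket_mem _ _ _ hz _ (he k l hkl).2.1
    rwa [zero_add] at this
  · intro g i j hij
    rw [hh g _ _ (he i j hij).2.1, phg_rt]
  · intro g z hz
    rw [hh g _ _ hz, phg_zero, zero_smul]
  · intro S hZ hS
    apply rs_top td
    rintro γ (rfl | hγ)
    · exact hZ
    · rw [hR] at hγ
      obtain ⟨i, j, hij, rfl⟩ := hγ
      intro x hx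
      obtain ⟨c, rfl⟩ := (he i j hij).2.2 x hx
      exact S.smul_mem c (hS i j hij)
  · intro i j hij h0
    apply (he i j hij).1
    apply rs_nondeg td (he i j hij).2.1
    intro y hy
    rw [rt_neg] at hy
    obtain ⟨c, rfl⟩ := (he j i hij.symm).2.2 y hy
    rw [map_smul, h0, smul_zero]
  · intro i j k l hij hkl hn
    apply rs_orth td _ (he i j hij).2.1 (he k l hkl).2.1
    by_cases hjk : j = k
    · subst hjk
      have hil : i ≠ l := fun h => hn ⟨rfl, h⟩
      rw [rt_add]; exact rt_ne_zero hil
    · by_cases hil : i = l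
      · subst hil
        rw [add_comm, rt_add]; exact rt_ne_zero (Ne.symm hjk)
      · rw [← rt_self i]
        exact rt_sum_ne hij hkl hjk hil _ _
  · intro i j hij z hz
    apply rs_orth td _ (he i j hij).2.1 hz
    rw [add_zero]
    exact rt_ne_zero hij

/-- normalised positive root vectors -/
structure EE {L : Type*} [LieRing L] [LieAlgebra ℂ L] {m : ℕ} (td : TriangularData L (Fin m))
    (E F : Fin (m + 1) → Fin (m + 1) → L) : Prop where
  mem : ∀ i j, i < j → E i j ∈ td.rs (rt i j)
  span : ∀ i j, i < j → ∀ x ∈ td.rs (rt i j), ∃ c : ℂ, x = c • E i j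
  mul : ∀ i j l, i < j → j < l → ⁅E i j, E j l⁆ = E i l
  zero : ∀ i j k l, i < j → k < l → j ≠ k → i ≠ l → ⁅E i j, E k l⁆ = 0
  Fmem : ∀ i j, i < j → F i j ∈ td.rs (rt j i)
  kF : ∀ i j k l, i < j → k < l →
    killingForm ℂ L (F i j) (E k l) = if i = k ∧ j = l then 1 else 0

/-- extension of a family by zero to natural numbers -/
def extN {L : Type*} [LieRing L] {m : ℕ} (e : Fin (m + 1) → Fin (m + 1) → L) (i j : ℕ) : L :=
  if h : i < m + 1 ∧ j < m + 1 then e ⟨i, h.1⟩ ⟨j, h.2⟩ else 0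

def recE {L : Type*} [LieRing L] {m : ℕ} (e : Fin (m + 1) → Fin (m + 1) → L) (i : ℕ) : ℕ → L
  | 0 => extN e i (i + 1)
  | d + 1 => ⁅recE e i d, extN e (i + d + 1) (i + d + 2)⁆

lemma extN_eq {L : Type*} [LieRing L] {m : ℕ} (e : Fin (m + 1) → Fin (m + 1) → L) (i j : ℕ)
    (hi : i < m + 1) (hj : j < m + 1) : extN e i j = e ⟨i, hi⟩ ⟨j, hj⟩ := by
  unfold extN; rw [dif_pos ⟨hi, hj⟩]

lemma recE_spec {L : Type*} [LieRing L] [LieAlgebra ℂ L] [LieAlgebra.IsSimple ℂ L] {m : ℕ}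
    {e : Fin (m + 1) → Fin (m + 1) → L} {h : (Fin (m + 1) → ℂ) → L} {Z : Submodule ℂ L}
    (H : ED e h Z) (i d : ℕ) (hd : i + d + 1 < m + 1) :
    ∃ c : ℂ, c ≠ 0 ∧ recE e i d = c • extN e i (i + d + 1) := by
  induction d with
  | zero => exact ⟨1, one_ne_zero, by simp [recE]⟩
  | succ d ih =>
    obtain ⟨c, hc, ih⟩ := ih (by omega)
    have hi : i < m + 1 := by omega
    have hj : i + d + 1 < m + 1 := by omega
    have hl : i + d + 2 < m + 1 := by omega
    have n1 : (⟨i, hi⟩ : Fin (m + 1)) ≠ ⟨i + d + 1, hj⟩ := by simp; omega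
    have n2 : (⟨i + d + 1, hj⟩ : Fin (m + 1)) ≠ ⟨i + d + 2, hl⟩ := by simp
    have n3 : (⟨i, hi⟩ : Fin (m + 1)) ≠ ⟨i + d + 2, hl⟩ := by simp; omega
    obtain ⟨a, ha⟩ := H.b1 _ _ _ n1 n2 n3
    have hne := H.all_tt n1 n2 n3
    have ha0 : a ≠ 0 := by
      rintro rfl
      apply hne; rw [ha, zero_smul]
    refine ⟨c * a, mul_ne_zero hc ha0, ?_⟩
    rw [recE, ih, extN_eq e _ _ hi hj, extN_eq e _ _ hj hl, smul_lie, ha, smul_smul,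
      show i + (d + 1) + 1 = i + d + 2 by omega, extN_eq e _ _ hi hl]

lemma recE_mul {L : Type*} [LieRing L] [LieAlgebra ℂ L] [LieAlgebra.IsSimple ℂ L] {m : ℕ}
    {e : Fin (m + 1) → Fin (m + 1) → L} {h : (Fin (m + 1) → ℂ) → L} {Z : Submodule ℂ L}
    (H : ED e h Z) (i d d' : ℕ) (hd : i + d + d' + 2 < m + 1) :
    ⁅recE e i d, recE e (i + d + 1) d'⁆ = recE e i (d + d' + 1) := by
  induction d' with
  | zero => rfl
  | succ d' ih =>
    have h0 : ⁅recE e i d, extN e (i + d + 1 + d' + 1) (i + d + 1 + d' + 2)⁆ = 0 := by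
      obtain ⟨c, hc, hh⟩ := recE_spec H i d (by omega)
      rw [hh, extN_eq e _ _ (by omega) (by omega), extN_eq e _ _ (by omega) (by omega), smul_lie,
        H.b0, smul_zero] <;> simp <;> omega
    have h1 : recE e (i + d + 1) (d' + 1) = ⁅recE e (i + d + 1) d',
      extN e (i + d + 1 + d' + 1) (i + d + 1 + d' + 2)⁆ := rfl
    have h2 : recE e i ((d + d' + 1) + 1) = ⁅recE e i (d + d' + 1),
      extN e (i + (d + d' + 1) + 1) (i + (d + d' + 1) + 2)⁆ := rfl
    rw [h1, leibniz_lie, ih (by omega), h0, lie_zero, add_zero,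
      show d + (d' + 1) + 1 = (d + d' + 1) + 1 by omega, h2,
      show i + (d + d' + 1) + 1 = i + d + 1 + d' + 1 by omega,
      show i + (d + d' + 1) + 2 = i + d + 1 + d' + 2 by omega]

theorem exists_EE {L : Type*} [LieRing L] [LieAlgebra ℂ L] [FiniteDimensional ℂ L]
    [LieAlgebra.IsSimple ℂ L] {m : ℕ} (td : TriangularData L (Fin m))
    (hA : ∀ γ : Fin m → ℤ, γ ∈ td.R ↔
      ∃ i j : Fin m, i ≤ j ∧ (γ = intv i j ∨ γ = -intv i j)) :
    ∃ E F : Fin (m + 1) → Fin (m + 1) → L, EE td E F := by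
  obtain ⟨e, h, H, hm⟩ := exists_ED td hA
  have hE : ∀ i j : Fin (m + 1), ∃ c : ℂ, i < j →
      c ≠ 0 ∧ recE e i ((j : ℕ) - i - 1) = c • e i j := by
    intro i j
    by_cases hij : i < j
    · rw [Fin.lt_def] at hij
      obtain ⟨c, hc, hh⟩ := recE_spec H i ((j : ℕ) - i - 1) (by omega)
      refine ⟨c, fun _ => ⟨hc, ?_⟩⟩
      rw [hh, extN_eq e _ _ (by omega) (by omega)]
      congr 2
      ext
      simp
      omega
    · exact ⟨0, fun h => absurd h hij⟩
  choose c hc using hE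
  refine ⟨fun i j => recE e i ((j : ℕ) - i - 1), fun i j =>
    (c i j * killingForm ℂ L (e j i) (e i j))⁻¹ • e j i, ?_, ?_, ?_, ?_, ?_, ?_⟩
  · intro i j hij
    beta_reduce
    rw [(hc i j hij).2]
    exact Submodule.smul_mem _ _ (hm i j hij.ne).1
  · intro i j hij x hx
    obtain ⟨d, rfl⟩ := (hm i j hij.ne).2 x hx
    refine ⟨d * (c i j)⁻¹, ?_⟩
    beta_reduce
    rw [(hc i j hij).2, smul_smul, mul_assoc, inv_mul_cancel₀ (hc i j hij).1, mul_one]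
  · intro i j l hij hjl
    rw [Fin.lt_def] at hij hjl
    have := recE_mul H i ((j : ℕ) - i - 1) ((l : ℕ) - j - 1) (by omega)
    rw [show (i : ℕ) + (j - i - 1) + 1 = j by omega] at this
    rw [this]
    congr 1
    omega
  · intro i j k l hij hkl hjk hil
    beta_reduce
    rw [(hc i j hij).2, (hc k l hkl).2, smul_lie, lie_smul, H.b0 _ _ _ _ hij.ne hkl.ne hjk hil]
    simp
  · intro i j hij
    exact Submodule.smul_mem _ _ (hm j i hij.ne').1
  · intro i j k l hij hkl
    beta_reduce
    rw [(hc k l hkl).2]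
    simp only [map_smul, LinearMap.smul_apply, smul_eq_mul]
    split_ifs with hh
    · obtain ⟨rfl, rfl⟩ := hh
      have h1 := (hc i j hij).1
      have h2 := H.kne j i hij.ne'
      field_simp
    · rw [H.korth j i k l hij.ne' hkl.ne (by tauto)]
      simp

/-- the matrix model -/
def PhiM {L : Type*} [LieRing L] [LieAlgebra ℂ L] {m : ℕ} (E : Fin (m + 1) → Fin (m + 1) → L) :
    Mt m →ₗ[ℂ] L where
  toFun M := ∑ i, ∑ j, M i j • (if i < j then E i j else 0)
  map_add' := by
    intro X Y
    simp only [Matrix.add_apply, add_smul, Finset.sum_add_distrib]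
  map_smul' := by
    intro c X
    simp only [Matrix.smul_apply, smul_eq_mul, mul_smul, Finset.smul_sum, RingHom.id_apply]

lemma PhiM_apply {L : Type*} [LieRing L] [LieAlgebra ℂ L] {m : ℕ}
    (E : Fin (m + 1) → Fin (m + 1) → L) (M : Mt m) :
    PhiM E M = ∑ i, ∑ j, M i j • (if i < j then E i j else 0) := rfl

lemma PhiM_single {L : Type*} [LieRing L] [LieAlgebra ℂ L] {m : ℕ}
    (E : Fin (m + 1) → Fin (m + 1) → L) (p q : Fin (m + 1)) (hpq : p < q) :
    PhiM E (Matrix.single p q 1) = E p q := by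
  rw [PhiM_apply, Finset.sum_eq_single p, Finset.sum_eq_single q]
  · simp [hpq]
  · intro b _ hb
    rw [Matrix.single_apply_of_col_ne _ _ hb.symm, zero_smul]
  · simp
  · intro b _ hb
    refine Finset.sum_eq_zero fun j _ => ?_
    rw [Matrix.single_apply_of_row_ne hb.symm, zero_smul]
  · simp

lemma PhiM_bracket {L : Type*} [LieRing L] [LieAlgebra ℂ L] {m : ℕ}
    {td : TriangularData L (Fin m)} {E F : Fin (m + 1) → Fin (m + 1) → L} (hE : EE td E F)
    {T : Finset (Fin m)} {X Y : Mt m} (hX : X ∈ nM T) (hY : Y ∈ nM T) :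
    ⁅PhiM E X, PhiM E Y⁆ = PhiM E (X * Y - Y * X) := by
  have key : ∀ i j k l : Fin (m + 1),
      ⁅X i j • (if i < j then E i j else 0), Y k l • (if k < l then E k l else 0)⁆ =
      (if j = k then (X i j * Y k l) • (if i < l then E i l else 0) else 0) -
      (if l = i then (X i j * Y k l) • (if k < j then E k j else 0) else 0) := by
    intro i j k l
    by_cases h1 : sepT T i j
    swap
    · rw [hX _ _ h1]; simp
    by_cases h2 : sepT T k l
    swap
    · rw [hY _ _ h2]; simp
    have h1' : i < j := h1.lt
    have h2' : k < l := h2.lt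
    rw [if_pos h1', if_pos h2', smul_lie, lie_smul, smul_smul]
    by_cases hjk : j = k
    · subst hjk
      have h3 := h1'.trans h2'
      rw [if_pos rfl, if_neg h3.ne', hE.mul _ _ _ h1' h2', if_pos h3, sub_zero]
    · rw [if_neg hjk]
      by_cases hil : l = i
      · subst hil
        have h3 := h2'.trans h1'
        rw [if_pos rfl, ← lie_skew, hE.mul _ _ _ h2' h1', if_pos h3, zero_sub, smul_neg]
      · rw [if_neg hil, hE.zero _ _ _ _ h1' h2' hjk (Ne.symm hil)]
        simp
  have e0 : ⁅PhiM E X, PhiM E Y⁆ = ∑ i, ∑ j, ∑ k, ∑ l,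
      ⁅X i j • (if i < j then E i j else 0), Y k l • (if k < l then E k l else 0)⁆ := by
    rw [PhiM_apply, sum_lie]
    refine Finset.sum_congr rfl fun i _ => ?_
    rw [sum_lie]
    refine Finset.sum_congr rfl fun j _ => ?_
    rw [PhiM_apply, lie_sum]
    refine Finset.sum_congr rfl fun k _ => ?_
    rw [lie_sum]
  rw [e0, map_sub]
  simp only [key, Finset.sum_sub_distrib]
  congr 1
  · rw [PhiM_apply]
    refine Finset.sum_congr rfl fun i _ => ?_
    simp only [Matrix.mul_apply, Finset.sum_smul]
    rw [Finset.sum_comm]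
    have : ∀ l j : Fin (m + 1), (∑ k, if j = k then (X i j * Y k l) • (if i < l then E i l else 0)
        else 0) = (X i j * Y j l) • (if i < l then E i l else 0) := by
      intro l j
      rw [Finset.sum_ite_eq]
      simp
    rw [Finset.sum_comm]
    conv_lhs =>
      enter [2, j]
      rw [Finset.sum_comm]
    simp only [this]
    rw [Finset.sum_comm]
  · rw [PhiM_apply]
    simp only [Matrix.mul_apply, Finset.sum_smul]
    have : ∀ i j k : Fin (m + 1), (∑ l, if l = i then (X i j * Y k l) • (if k < j then E k j else 0)
        else 0) = (Y k i * X i j) • (if k < j then E k j else 0) := by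
      intro i j k
      rw [Finset.sum_ite_eq']
      simp [mul_comm]
    simp only [this]
    conv_lhs =>
      enter [2, i]
      rw [Finset.sum_comm]
    rw [Finset.sum_comm]
    refine Finset.sum_congr rfl fun k _ => ?_
    rw [Finset.sum_comm]

/-! ### Transfer of the nilradical to the matrix model -/

lemma kF_Phi {L : Type*} [LieRing L] [LieAlgebra ℂ L] {m : ℕ}
    {td : TriangularData L (Fin m)} {E F : Fin (m + 1) → Fin (m + 1) → L} (hE : EE td E F)
    (X : Mt m) (i j : Fin (m + 1)) (hij : i < j) :
    killingForm ℂ L (F i j) (PhiM E X) = X i j := by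
  rw [PhiM_apply, map_sum, Finset.sum_eq_single i, map_sum, Finset.sum_eq_single j]
  · rw [if_pos hij, map_smul, hE.kF _ _ _ _ hij hij]; simp
  · intro l _ hl
    rw [map_smul]
    split_ifs with h
    · rw [hE.kF _ _ _ _ hij h, if_neg (by tauto)]; simp
    · simp
  · simp
  · intro k _ hk
    rw [map_sum]
    refine Finset.sum_eq_zero fun l _ => ?_
    rw [map_smul]
    split_ifs with h
    · rw [hE.kF _ _ _ _ hij h, if_neg (by tauto)]; simp
    · simp
  · simp

lemma Phi_inj {L : Type*} [LieRing L] [LieAlgebra ℂ L] {m : ℕ}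
    {td : TriangularData L (Fin m)} {E F : Fin (m + 1) → Fin (m + 1) → L} (hE : EE td E F)
    {T : Finset (Fin m)} {X Y : Mt m} (hX : X ∈ nM T) (hY : Y ∈ nM T)
    (h : PhiM E X = PhiM E Y) : X = Y := by
  ext i j
  by_cases hs : sepT T i j
  · rw [← kF_Phi hE X i j hs.lt, h, kF_Phi hE Y i j hs.lt]
  · rw [hX _ _ hs, hY _ _ hs]

lemma rt_apply {m : ℕ} (i j : Fin (m + 1)) (a : Fin m) :
    rt i j a = (if (i : ℕ) ≤ a then 1 else 0) - (if (j : ℕ) ≤ a then 1 else 0) := rfl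

lemma posR_iff {L : Type*} [LieRing L] [LieAlgebra ℂ L] {SR : Type*} [Fintype SR] [DecidableEq SR]
    (td : TriangularData L SR) (γ : SR → ℤ) :
    γ ∈ td.posR ↔ γ ∈ td.R ∧ ∀ a, 0 ≤ γ a := Finset.mem_filter

lemma nilRoots_iff {L : Type*} [LieRing L] [LieAlgebra ℂ L] {SR : Type*} [Fintype SR]
    [DecidableEq SR] (td : TriangularData L SR) (T : Finset SR) (γ : SR → ℤ) :
    γ ∈ td.nilRoots T ↔ γ ∈ td.posR ∧ ∃ a ∈ T, 0 < γ a := Finset.mem_filter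

lemma heisRoots_iff {L : Type*} [LieRing L] [LieAlgebra ℂ L] {SR : Type*} [Fintype SR]
    [DecidableEq SR] (td : TriangularData L SR) (β γ : SR → ℤ) :
    γ ∈ td.heisRoots β ↔ γ ∈ td.posR ∧ fsupp γ ⊆ fsupp β ∧ (γ = β ∨ β - γ ∈ td.R) :=
  Finset.mem_filter

lemma mem_posR {L : Type*} [LieRing L] [LieAlgebra ℂ L] {m : ℕ} (td : TriangularData L (Fin m))
    (hA : ∀ γ : Fin m → ℤ, γ ∈ td.R ↔
      ∃ i j : Fin m, i ≤ j ∧ (γ = intv i j ∨ γ = -intv i j)) (γ : Fin m → ℤ) :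
    γ ∈ td.posR ↔ ∃ i j : Fin (m + 1), i < j ∧ γ = rt i j := by
  rw [posR_iff, mem_R_iff td hA]
  constructor
  · rintro ⟨⟨i, j, hij, rfl⟩, hp⟩
    refine ⟨i, j, ?_, rfl⟩
    by_contra hlt
    have h1 : j < i := lt_of_le_of_ne (not_lt.mp hlt) hij.symm
    rw [Fin.lt_def] at h1
    have := hp ⟨j, by omega⟩
    rw [rt_apply, if_neg (by simp; omega), if_pos (by simp)] at this
    omega
  · rintro ⟨i, j, hij, rfl⟩
    refine ⟨⟨i, j, hij.ne, rfl⟩, fun a => ?_⟩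
    rw [Fin.lt_def] at hij
    rw [rt_apply]
    split_ifs <;> omega

lemma mem_nilRoots {L : Type*} [LieRing L] [LieAlgebra ℂ L] {m : ℕ} (td : TriangularData L (Fin m))
    (hA : ∀ γ : Fin m → ℤ, γ ∈ td.R ↔
      ∃ i j : Fin m, i ≤ j ∧ (γ = intv i j ∨ γ = -intv i j)) (T : Finset (Fin m))
    (γ : Fin m → ℤ) :
    γ ∈ td.nilRoots T ↔ ∃ i j : Fin (m + 1), sepT T i j ∧ γ = rt i j := by
  rw [nilRoots_iff, mem_posR td hA]
  constructor
  · rintro ⟨⟨i, j, hij, rfl⟩, a, ha, hp⟩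
    refine ⟨i, j, ⟨a, ha, ?_⟩, rfl⟩
    rw [rt_apply] at hp
    split_ifs at hp <;> omega
  · rintro ⟨i, j, hs, rfl⟩
    refine ⟨⟨i, j, hs.lt, rfl⟩, ?_⟩
    obtain ⟨a, ha, h1, h2⟩ := hs
    refine ⟨a, ha, ?_⟩
    rw [rt_apply, if_pos h1, if_neg (by omega)]
    norm_num

lemma Phi_mem_nilrad {L : Type*} [LieRing L] [LieAlgebra ℂ L] {m : ℕ}
    {td : TriangularData L (Fin m)}
    (hA : ∀ γ : Fin m → ℤ, γ ∈ td.R ↔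
      ∃ i j : Fin m, i ≤ j ∧ (γ = intv i j ∨ γ = -intv i j))
    {E F : Fin (m + 1) → Fin (m + 1) → L} (hE : EE td E F)
    {T : Finset (Fin m)} {X : Mt m} (hX : X ∈ nM T) : PhiM E X ∈ td.nilrad T := by
  rw [PhiM_apply]
  refine sum_mem fun i _ => sum_mem fun j _ => ?_
  by_cases hs : sepT T i j
  · have hij : i < j := hs.lt
    rw [if_pos hij]
    apply (td.nilrad T).smul_mem
    apply LieSubalgebra.subset_lieSpan
    refine Set.mem_biUnion (x := rt i j) ?_ (hE.mem i j hij)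
    exact (mem_nilRoots td hA T _).mpr ⟨i, j, hs, rfl⟩
  · rw [hX _ _ hs, zero_smul]; exact (td.nilrad T).zero_mem

lemma mem_nilrad {L : Type*} [LieRing L] [LieAlgebra ℂ L] {m : ℕ}
    {td : TriangularData L (Fin m)}
    (hA : ∀ γ : Fin m → ℤ, γ ∈ td.R ↔
      ∃ i j : Fin m, i ≤ j ∧ (γ = intv i j ∨ γ = -intv i j))
    {E F : Fin (m + 1) → Fin (m + 1) → L} (hE : EE td E F)
    {T : Finset (Fin m)} (x : L) : x ∈ td.nilrad T ↔ ∃ X ∈ nM T, PhiM E X = x := by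
  constructor
  · let S : LieSubalgebra ℂ L :=
      { (nM T).map (PhiM E) with
        lie_mem' := by
          rintro _ _ ⟨X, hX, rfl⟩ ⟨Y, hY, rfl⟩
          rw [PhiM_bracket hE hX hY]
          exact ⟨_, sub_mem (nM_mul hX hY) (nM_mul hY hX), rfl⟩ }
    have hS : td.nilrad T ≤ S := by
      unfold TriangularData.nilrad
      rw [LieSubalgebra.lieSpan_le]
      intro y hy
      rw [Set.mem_iUnion₂] at hy
      obtain ⟨γ, hγ, hy⟩ := hy
      obtain ⟨i, j, hs, rfl⟩ := (mem_nilRoots td hA T γ).mp hγ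
      have hij : i < j := hs.lt
      obtain ⟨c, rfl⟩ := hE.span i j hij y hy
      refine ⟨c • Matrix.single i j 1, ?_, ?_⟩
      · exact Submodule.smul_mem _ _ (single_mem_nM hs 1)
      · rw [map_smul, PhiM_single E i j hij]
    intro hx
    obtain ⟨X, hX, h⟩ := hS hx
    exact ⟨X, hX, h⟩
  · rintro ⟨X, hX, rfl⟩
    exact Phi_mem_nilrad hA hE hX

lemma finrank_ge {L : Type*} [LieRing L] [LieAlgebra ℂ L] [FiniteDimensional ℂ L] {m : ℕ}
    {td : TriangularData L (Fin m)} {E F : Fin (m + 1) → Fin (m + 1) → L} (hE : EE td E F) :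
    m ≤ Module.finrank ℂ L := by
  have hli : LinearIndependent ℂ (fun j : Fin m => E 0 j.succ) := by
    rw [Fintype.linearIndependent_iff]
    intro g hg j
    have h0 : ∀ j : Fin m, (0 : Fin (m + 1)) < j.succ := fun j => Fin.succ_pos j
    have := congrArg (killingForm ℂ L (F 0 j.succ)) hg
    rw [map_sum, map_zero, Finset.sum_eq_single j] at this
    · rw [map_smul, hE.kF _ _ _ _ (h0 j) (h0 j)] at this
      simpa using this
    · intro b _ hb
      rw [map_smul, hE.kF _ _ _ _ (h0 j) (h0 b), if_neg]
      · simp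
      · rintro ⟨_, h⟩
        exact hb (Fin.succ_injective _ h).symm
    · simp
  simpa using hli.fintype_card_le_finrank

lemma adpow_mem {m : ℕ} {T : Finset (Fin m)} {X Y : Mt m} (hX : X ∈ nM T) (hY : Y ∈ nM T)
    (i : ℕ) : ((LinearMap.mulLeft ℂ X - LinearMap.mulRight ℂ X) ^ i) Y ∈ nM T ∧
      ∀ p q : Fin (m + 1), (q : ℕ) < p + i + 1 →
        ((LinearMap.mulLeft ℂ X - LinearMap.mulRight ℂ X) ^ i) Y p q = 0 := by
  induction i with
  | zero =>
    refine ⟨by simpa using hY, fun p q h => ?_⟩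
    rw [pow_zero, Module.End.one_apply]
    exact hY _ _ fun hs => by have := hs.lt; omega
  | succ i ih =>
    rw [pow_succ', Module.End.mul_apply, LinearMap.sub_apply, LinearMap.mulLeft_apply,
      LinearMap.mulRight_apply]
    refine ⟨sub_mem (nM_mul hX ih.1) (nM_mul ih.1 hX), fun p q h => ?_⟩
    rw [Matrix.sub_apply, Matrix.mul_apply, Matrix.mul_apply, Finset.sum_eq_zero,
      Finset.sum_eq_zero, sub_zero]
    · intro l _
      by_cases hs : sepT T l q
      · have := hs.lt
        rw [ih.2 p l (by omega), zero_mul]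
      · rw [hX _ _ hs, mul_zero]
    · intro l _
      by_cases hs : sepT T p l
      · have := hs.lt
        rw [ih.2 l q (by omega), mul_zero]
      · rw [hX _ _ hs, zero_mul]

lemma conj_mem {m : ℕ} {T : Finset (Fin m)} {X Y : Mt m} (hX : X ∈ nM T) (hY : Y ∈ nM T) :
    IsNilpotent.exp X * Y * IsNilpotent.exp (-X) ∈ nM T := by
  rw [← nexp_conj X Y (m + 1) (2 * (m + 1)) (nM_pow hX) le_rfl]
  exact sum_mem fun i _ => Submodule.smul_mem _ _ (adpow_mem hX hY i).1

lemma Phi_conj {L : Type*} [LieRing L] [LieAlgebra ℂ L] [FiniteDimensional ℂ L] {m : ℕ}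
    {td : TriangularData L (Fin m)} {E F : Fin (m + 1) → Fin (m + 1) → L} (hE : EE td E F)
    {T : Finset (Fin m)} {X Y : Mt m} (hX : X ∈ nM T) (hY : Y ∈ nM T) :
    nilExp (LieAlgebra.ad ℂ L (PhiM E X)) (PhiM E Y) =
      PhiM E (IsNilpotent.exp X * Y * IsNilpotent.exp (-X)) := by
  have h1 : ∀ i : ℕ, ((LieAlgebra.ad ℂ L (PhiM E X)) ^ i) (PhiM E Y) =
      PhiM E (((LinearMap.mulLeft ℂ X - LinearMap.mulRight ℂ X) ^ i) Y) := by
    intro i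
    induction i with
    | zero => simp
    | succ i ih =>
      rw [pow_succ', Module.End.mul_apply, ih, LieAlgebra.ad_apply,
        PhiM_bracket hE hX (adpow_mem hX hY i).1, pow_succ' (_ - _), Module.End.mul_apply]
      rfl
  have h2 : ∀ i : ℕ, m ≤ i → ((LinearMap.mulLeft ℂ X - LinearMap.mulRight ℂ X) ^ i) Y = 0 := by
    intro i hi
    ext p q
    exact (adpow_mem hX hY i).2 p q (by omega)
  have h3 : ∀ n : ℕ, m ≤ n → ∑ i ∈ Finset.range n, ((i.factorial : ℂ)⁻¹) •
      ((LinearMap.mulLeft ℂ X - LinearMap.mulRight ℂ X) ^ i) Y = ∑ i ∈ Finset.range m,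
      ((i.factorial : ℂ)⁻¹) • ((LinearMap.mulLeft ℂ X - LinearMap.mulRight ℂ X) ^ i) Y := by
    intro n hn
    symm
    refine Finset.sum_subset (Finset.range_mono hn) fun i _ hi => ?_
    rw [h2 i (by simpa using hi), smul_zero]
  have hfr := finrank_ge hE
  rw [← nexp_conj X Y (m + 1) (2 * (m + 1)) (nM_pow hX) le_rfl, h3 _ (by omega),
    ← h3 (Module.finrank ℂ L + 1) (by omega), nilExp, LinearMap.sum_apply, map_sum]
  refine Finset.sum_congr rfl fun i _ => ?_
  rw [LinearMap.smul_apply, h1, map_smul]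

/-- the functional on matrices attached to `w` -/
def fW {L : Type*} [LieRing L] [LieAlgebra ℂ L] {m : ℕ}
    (E : Fin (m + 1) → Fin (m + 1) → L) (w : L) : Mt m →ₗ[ℂ] ℂ :=
  (killingForm ℂ L w) ∘ₗ PhiM E

lemma fW_apply {L : Type*} [LieRing L] [LieAlgebra ℂ L] {m : ℕ}
    (E : Fin (m + 1) → Fin (m + 1) → L) (w : L) (X : Mt m) :
    fW E w X = killingForm ℂ L w (PhiM E X) := rfl

lemma mem_killStab {L : Type*} [LieRing L] [LieAlgebra ℂ L] {m : ℕ}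
    {td : TriangularData L (Fin m)}
    (hA : ∀ γ : Fin m → ℤ, γ ∈ td.R ↔
      ∃ i j : Fin m, i ≤ j ∧ (γ = intv i j ∨ γ = -intv i j))
    {E F : Fin (m + 1) → Fin (m + 1) → L} (hE : EE td E F)
    {T : Finset (Fin m)} (w x : L) : x ∈ killStab w (td.nilrad T) (td.nilrad T) ↔
      ∃ X ∈ nM T, PhiM E X = x ∧ ∀ Y ∈ nM T, fW E w (X * Y - Y * X) = 0 := by
  constructor
  · rintro ⟨hx, h⟩
    obtain ⟨X, hX, rfl⟩ := (mem_nilrad hA hE x).mp hx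
    refine ⟨X, hX, rfl, fun Y hY => ?_⟩
    rw [fW_apply, ← PhiM_bracket hE hX hY]
    exact h _ (Phi_mem_nilrad hA hE hY)
  · rintro ⟨X, hX, rfl, h⟩
    refine ⟨Phi_mem_nilrad hA hE hX, fun y hy => ?_⟩
    obtain ⟨Y, hY, rfl⟩ := (mem_nilrad hA hE y).mp hy
    rw [PhiM_bracket hE hX hY]
    exact h Y hY

lemma mem_killStab' {L : Type*} [LieRing L] [LieAlgebra ℂ L] {m : ℕ}
    {td : TriangularData L (Fin m)}
    (hA : ∀ γ : Fin m → ℤ, γ ∈ td.R ↔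
      ∃ i j : Fin m, i ≤ j ∧ (γ = intv i j ∨ γ = -intv i j))
    {E F : Fin (m + 1) → Fin (m + 1) → L} (hE : EE td E F)
    {T : Finset (Fin m)} (w : L) {X : Mt m} (hX : X ∈ nM T) :
    PhiM E X ∈ killStab w (td.nilrad T) (td.nilrad T) ↔
      ∀ Y ∈ nM T, fW E w (X * Y - Y * X) = 0 := by
  rw [mem_killStab hA hE]
  constructor
  · rintro ⟨X', hX', h, h'⟩
    rwa [Phi_inj hE hX' hX h] at h'
  · exact fun h => ⟨X, hX, rfl, h⟩

/-! ### Combinatorics of the cascade -/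

lemma rt_inj {m : ℕ} {i j p q : Fin (m + 1)} (hij : i ≠ j) (h : rt i j = rt p q) :
    i = p ∧ j = q := by
  have h1 := phg_rt (Pi.single i 1) i j
  rw [h, phg_rt] at h1
  have h2 := phg_rt (Pi.single j 1) i j
  rw [h, phg_rt] at h2
  simp only [Pi.single_apply] at h1 h2
  constructor
  · by_contra hh
    have hpi : p ≠ i := Ne.symm hh
    simp only [hpi, hij.symm, if_true, if_false] at h1
    split_ifs at h1 <;> norm_num at h1
  · by_contra hh
    have hpi : q ≠ j := Ne.symm hh
    simp only [hpi, hij, if_true, if_false] at h2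
    split_ifs at h2 <;> norm_num at h2

lemma mem_fsupp_rt {m : ℕ} {i j : Fin (m + 1)} (hij : i < j) (a : Fin m) :
    a ∈ fsupp (rt i j) ↔ (i : ℕ) ≤ a ∧ (a : ℕ) < j := by
  rw [Fin.lt_def] at hij
  unfold fsupp
  rw [Finset.mem_filter, rt_apply]
  simp only [Finset.mem_univ, true_and]
  split_ifs <;> simp <;> omega

lemma fsupp_rt_subset {m : ℕ} {i j p q : Fin (m + 1)} (hij : i < j) (hpq : p < q)
    (h : fsupp (rt i j) ⊆ fsupp (rt p q)) : p ≤ i ∧ j ≤ q := by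
  have hij' := hij
  rw [Fin.lt_def] at hij'
  have h1 := h ((mem_fsupp_rt hij ⟨i, by omega⟩).mpr ⟨by simp, by simpa using hij⟩)
  have h2 := h ((mem_fsupp_rt hij ⟨j - 1, by omega⟩).mpr ⟨by show (i : ℕ) ≤ (j : ℕ) - 1; omega, by show (j : ℕ) - 1 < j; omega⟩)
  rw [mem_fsupp_rt hpq] at h1 h2
  simp only at h1 h2
  rw [Fin.le_def, Fin.le_def]
  omega

lemma K_share {L : Type*} [LieRing L] [LieAlgebra ℂ L] {m : ℕ} {td : TriangularData L (Fin m)}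
    (hA : ∀ γ : Fin m → ℤ, γ ∈ td.R ↔
      ∃ i j : Fin m, i ≤ j ∧ (γ = intv i j ∨ γ = -intv i j))
    {K : Finset (Fin m → ℤ)} (hK : td.IsCascade K)
    {p q p' q' : Fin (m + 1)} (hpq : p < q) (hpq' : p' < q') (h : rt p q ∈ K)
    (h' : rt p' q' ∈ K) (hs : p = p' ∨ q = q') : p = p' ∧ q = q' := by
  by_contra hc
  have hne : rt p q ≠ rt p' q' := fun h0 => hc (rt_inj hpq.ne h0)
  apply (hK.strong_orth _ h _ h' hne).2
  rw [mem_R_iff td hA]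
  rcases hs with rfl | rfl
  · refine ⟨q', q, fun h0 => hc ⟨rfl, h0.symm⟩, ?_⟩
    unfold rt; abel
  · refine ⟨p, p', fun h0 => hc ⟨h0, rfl⟩, ?_⟩
    unfold rt; abel

lemma K_mem {L : Type*} [LieRing L] [LieAlgebra ℂ L] {m : ℕ} {td : TriangularData L (Fin m)}
    (hA : ∀ γ : Fin m → ℤ, γ ∈ td.R ↔
      ∃ i j : Fin m, i ≤ j ∧ (γ = intv i j ∨ γ = -intv i j))
    {K : Finset (Fin m → ℤ)} (hK : td.IsCascade K)
    (n : ℕ) : ∀ i : Fin (m + 1), (i : ℕ) = n → 2 * (i : ℕ) < m → rt i i.rev ∈ K := by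
  induction n using Nat.strong_induction_on with
  | _ n ih =>
    intro i hi h2
    have hlt : i < i.rev := by rw [Fin.lt_def, Fin.val_rev]; omega
    obtain ⟨β, ⟨hβ, hβ'⟩, -⟩ := hK.partition (rt i i.rev) ((mem_posR td hA _).mpr ⟨i, _, hlt, rfl⟩)
    obtain ⟨p, q, hpq, rfl⟩ := (mem_posR td hA _).mp (hK.subset_pos hβ)
    rw [heisRoots_iff] at hβ'
    obtain ⟨-, hsub, hh⟩ := hβ'
    obtain ⟨hp, hq⟩ := fsupp_rt_subset hlt hpq hsub
    have hend : p = i ∨ q = i.rev := by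
      rcases hh with hh | hh
      · exact Or.inl (rt_inj hlt.ne hh).1.symm
      · by_contra hc
        push Not at hc
        rw [mem_R_iff td hA] at hh
        obtain ⟨x, y, -, hxy⟩ := hh
        have hr : rt p q + rt i.rev i = rt x y := by rw [← hxy, ← rt_neg i]; abel
        exact rt_sum_ne hpq.ne hlt.ne' hc.2 hc.1 x y hr
    rw [Fin.le_def] at hp hq
    rw [Fin.val_rev] at hq
    have hpi : p = i := by
      by_contra hne
      have hne' : (p : ℕ) ≠ i := fun h => hne (Fin.ext h)
      have hk := ih p (by omega) p rfl (by omega)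
      have hlt' : p < p.rev := by rw [Fin.lt_def, Fin.val_rev]; omega
      have := (K_share hA hK hpq hlt' hβ hk (Or.inl rfl)).2
      rcases hend with h | h
      · exact hne h
      · rw [this] at h
        exact hne (Fin.rev_injective h)
    have hqi : q = i.rev := by
      by_contra hne
      have hne' : (q : ℕ) ≠ i.rev := fun h => hne (Fin.ext h)
      rw [Fin.val_rev] at hne'
      have hqr : (q.rev : ℕ) = m - q := by rw [Fin.val_rev]; omega
      have hk := ih q.rev (by omega) q.rev rfl (by omega)
      rw [Fin.rev_rev] at hk
      have hlt' : q.rev < q := by rw [Fin.lt_def, Fin.val_rev]; omega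
      have := (K_share hA hK hpq hlt' hβ hk (Or.inr rfl)).1
      rw [hpi] at this
      have := congrArg Fin.val this
      omega
    rw [hpi, hqi] at hβ
    exact hβ

lemma K_iff {L : Type*} [LieRing L] [LieAlgebra ℂ L] {m : ℕ} {td : TriangularData L (Fin m)}
    (hA : ∀ γ : Fin m → ℤ, γ ∈ td.R ↔
      ∃ i j : Fin m, i ≤ j ∧ (γ = intv i j ∨ γ = -intv i j))
    {K : Finset (Fin m → ℤ)} (hK : td.IsCascade K)
    (β : Fin m → ℤ) :
    β ∈ K ↔ ∃ i : Fin (m + 1), 2 * (i : ℕ) < m ∧ β = rt i i.rev := by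
  constructor
  · intro hβ
    obtain ⟨p, q, hpq, rfl⟩ := (mem_posR td hA _).mp (hK.subset_pos hβ)
    have hpq' := hpq
    rw [Fin.lt_def] at hpq'
    rcases Nat.lt_or_ge m ((p : ℕ) + q) with h | h
    · have hqr : (q.rev : ℕ) = m - q := by rw [Fin.val_rev]; omega
      have hk := K_mem hA hK _ q.rev rfl (by omega)
      rw [Fin.rev_rev] at hk
      have hlt' : q.rev < q := by rw [Fin.lt_def, Fin.val_rev]; omega
      have := (K_share hA hK hpq hlt' hβ hk (Or.inr rfl)).1
      refine ⟨q.rev, by omega, ?_⟩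
      rw [Fin.rev_rev, this]
    · have hk := K_mem hA hK _ p rfl (by omega)
      have hlt' : p < p.rev := by rw [Fin.lt_def, Fin.val_rev]; omega
      have := (K_share hA hK hpq hlt' hβ hk (Or.inl rfl)).2
      exact ⟨p, by omega, by rw [this]⟩
  · rintro ⟨i, hi, rfl⟩
    exact K_mem hA hK _ i rfl hi

lemma casc_sep {L : Type*} [LieRing L] [LieAlgebra ℂ L] {m : ℕ} {td : TriangularData L (Fin m)}
    (hA : ∀ γ : Fin m → ℤ, γ ∈ td.R ↔
      ∃ i j : Fin m, i ≤ j ∧ (γ = intv i j ∨ γ = -intv i j))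
    {K : Finset (Fin m → ℤ)} (hK : td.IsCascade K)
    {T : Finset (Fin m)} {k : ℕ} 
    (hcasc : ∀ j : Fin m, (intv j j.rev ∈ td.cascadeK K T ↔ (j : ℕ) < k))
    (i : Fin (m + 1)) (hi : 2 * (i : ℕ) < m) : sepT T i i.rev ↔ (i : ℕ) < k := by
  have h := hcasc ⟨i, by omega⟩
  have hle : (⟨i, by omega⟩ : Fin m) ≤ Fin.rev ⟨i, by omega⟩ := by
    rw [Fin.le_def, Fin.val_rev]; simp; omega
  have e1 : (⟨i, by omega⟩ : Fin m).castSucc = i := rfl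
  have e2 : (Fin.rev (⟨i, by omega⟩ : Fin m)).succ = i.rev := by
    ext; simp [Fin.val_rev]; omega
  rw [intv_eq_rt _ _ hle, e1, e2, TriangularData.cascadeK, Finset.mem_inter,
    mem_nilRoots td hA] at h
  have hlt : i < i.rev := by rw [Fin.lt_def, Fin.val_rev]; omega
  refine Iff.trans ⟨fun hs => ⟨K_mem hA hK _ i rfl hi, i, _, hs, rfl⟩, ?_⟩ h
  rintro ⟨-, p, q, hs, he⟩
  obtain ⟨rfl, rfl⟩ := rt_inj hlt.ne he
  exact hs

lemma cascadeK_iff {L : Type*} [LieRing L] [LieAlgebra ℂ L] {m : ℕ} {td : TriangularData L (Fin m)}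
    (hA : ∀ γ : Fin m → ℤ, γ ∈ td.R ↔
      ∃ i j : Fin m, i ≤ j ∧ (γ = intv i j ∨ γ = -intv i j))
    {K : Finset (Fin m → ℤ)} (hK : td.IsCascade K)
    {T : Finset (Fin m)} {k : ℕ} (hk2 : 2 * k ≤ m + 1)
    (hcasc : ∀ j : Fin m, (intv j j.rev ∈ td.cascadeK K T ↔ (j : ℕ) < k)) (β : Fin m → ℤ) :
    β ∈ td.cascadeK K T ↔ ∃ i : Fin (m + 1), (i : ℕ) < k ∧ β = rt i i.rev := by
  rw [TriangularData.cascadeK, Finset.mem_inter, K_iff hA hK, mem_nilRoots td hA]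
  constructor
  · rintro ⟨⟨i, hi, rfl⟩, p, q, hs, he⟩
    have hlt : i < i.rev := by rw [Fin.lt_def, Fin.val_rev]; omega
    obtain ⟨rfl, rfl⟩ := rt_inj hlt.ne he
    exact ⟨i, (casc_sep hA hK hcasc i hi).mp hs, rfl⟩
  · rintro ⟨i, hi, rfl⟩
    exact ⟨⟨i, by omega, rfl⟩, i, _, (casc_sep hA hK hcasc i (by omega)).mpr hi, rfl⟩

lemma casc_h1 {L : Type*} [LieRing L] [LieAlgebra ℂ L] {m : ℕ} {td : TriangularData L (Fin m)}
    (hA : ∀ γ : Fin m → ℤ, γ ∈ td.R ↔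
      ∃ i j : Fin m, i ≤ j ∧ (γ = intv i j ∨ γ = -intv i j))
    {K : Finset (Fin m → ℤ)} (hK : td.IsCascade K)
    {T : Finset (Fin m)} {k : ℕ}
    (hcasc : ∀ j : Fin m, (intv j j.rev ∈ td.cascadeK K T ↔ (j : ℕ) < k)) :
    ∀ a ∈ T, (a : ℕ) + 1 ≤ k ∨ m ≤ (a : ℕ) + k := by
  intro a ha
  rcases Nat.lt_or_ge (2 * (a : ℕ)) m with h | h
  · left
    exact (casc_sep hA hK hcasc ⟨a, by omega⟩ h).mp ⟨a, ha, by simp, by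
      rw [Fin.val_rev]; simp; omega⟩
  · right
    have := (casc_sep hA hK hcasc ⟨m - 1 - a, by omega⟩ (by simp; omega)).mp ⟨a, ha, by simp; omega, by
      rw [Fin.val_rev]; simp; omega⟩
    simp at this
    omega

lemma casc_ex {L : Type*} [LieRing L] [LieAlgebra ℂ L] {m : ℕ} {td : TriangularData L (Fin m)}
    (hA : ∀ γ : Fin m → ℤ, γ ∈ td.R ↔
      ∃ i j : Fin m, i ≤ j ∧ (γ = intv i j ∨ γ = -intv i j))
    {K : Finset (Fin m → ℤ)} (hK : td.IsCascade K)
    {T : Finset (Fin m)} {k : ℕ} (hk2 : 2 * k ≤ m + 1) (hk : 0 < k)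
    (hcasc : ∀ j : Fin m, (intv j j.rev ∈ td.cascadeK K T ↔ (j : ℕ) < k)) :
    ∃ a ∈ T, k ≤ (a : ℕ) + 1 ∧ (a : ℕ) + k ≤ m := by
  obtain ⟨a, ha, h1, h2⟩ := (casc_sep hA hK hcasc ⟨k - 1, by omega⟩ (by simp; omega)).mpr
    (by simp; omega)
  rw [Fin.val_rev] at h2
  simp at h1 h2
  exact ⟨a, ha, by omega, by omega⟩

lemma casc_CascF {L : Type*} [LieRing L] [LieAlgebra ℂ L] {m : ℕ} {td : TriangularData L (Fin m)}
    (hA : ∀ γ : Fin m → ℤ, γ ∈ td.R ↔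
      ∃ i j : Fin m, i ≤ j ∧ (γ = intv i j ∨ γ = -intv i j))
    {K : Finset (Fin m → ℤ)} (hK : td.IsCascade K)
    [FiniteDimensional ℂ L] [LieAlgebra.IsSimple ℂ L]
    {E F : Fin (m + 1) → Fin (m + 1) → L} (hE : EE td E F)
    {T : Finset (Fin m)} {k : ℕ} (hk2 : 2 * k ≤ m + 1)
    (hcasc : ∀ j : Fin m, (intv j j.rev ∈ td.cascadeK K T ↔ (j : ℕ) < k))
    {v : L} (hv : td.IsCascadePoint K T v) : CascF T k (fW E v) := by
  obtain ⟨e, he, rfl⟩ := hv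
  have hz : ∀ β ∈ td.cascadeK K T, ∀ i j : Fin (m + 1), i < j → β ≠ rt i j →
      killingForm ℂ L (e β) (E i j) = 0 := by
    intro β hβ i j hij hne
    refine rs_orth td ?_ (he β hβ).1 (hE.mem i j hij)
    intro h0
    exact hne (neg_add_eq_zero.mp h0)
  constructor
  · intro i j hs hn
    have hij : i < j := hs.lt
    rw [fW_apply, PhiM_single E i j hij, map_sum, LinearMap.sum_apply]
    refine Finset.sum_eq_zero fun β hβ => ?_
    refine hz β hβ i j hij ?_
    rintro rfl
    obtain ⟨p, hp, h⟩ := (cascadeK_iff hA hK hk2 hcasc _).mp hβ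
    obtain ⟨rfl, rfl⟩ := rt_inj hij.ne h
    apply hn
    refine ⟨?_, hp⟩
    rw [Fin.val_rev]; omega
  · intro i hi h0
    have hij : i < i.rev := by rw [Fin.lt_def, Fin.val_rev]; omega
    have hm : rt i i.rev ∈ td.cascadeK K T := (cascadeK_iff hA hK hk2 hcasc _).mpr ⟨i, hi, rfl⟩
    rw [fW_apply, PhiM_single E i _ hij, map_sum, LinearMap.sum_apply,
      Finset.sum_eq_single (rt i i.rev) (fun β hβ hne => hz β hβ i _ hij hne)
      (fun h => absurd hm h)] at h0
    apply (he _ hm).2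
    apply rs_nondeg td (he _ hm).1
    intro y hy
    rw [neg_neg] at hy
    obtain ⟨c, rfl⟩ := hE.span i _ hij y hy
    rw [map_smul, h0, smul_zero]

lemma casc_neg {L : Type*} [LieRing L] [LieAlgebra ℂ L] {m : ℕ} {td : TriangularData L (Fin m)}
    {K : Finset (Fin m → ℤ)}
    {T : Finset (Fin m)} {v : L} (hv : td.IsCascadePoint K T v) :
    v ∈ td.negNilSub T := by
  obtain ⟨e, he, rfl⟩ := hv
  refine sum_mem fun β hβ => ?_
  refine Submodule.mem_iSup_of_mem (-β) (Submodule.mem_iSup_of_mem ?_ (he β hβ).1)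
  exact ⟨β, (Finset.mem_inter.mp hβ).2, rfl⟩

lemma F_neg {L : Type*} [LieRing L] [LieAlgebra ℂ L] {m : ℕ} {td : TriangularData L (Fin m)}
    (hA : ∀ γ : Fin m → ℤ, γ ∈ td.R ↔
      ∃ i j : Fin m, i ≤ j ∧ (γ = intv i j ∨ γ = -intv i j))
    {E F : Fin (m + 1) → Fin (m + 1) → L} (hE : EE td E F)
    {T : Finset (Fin m)} {i j : Fin (m + 1)} (hs : sepT T i j) : F i j ∈ td.negNilSub T := by
  have h := hE.Fmem i j hs.lt
  rw [← rt_neg i j] at h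
  refine Submodule.mem_iSup_of_mem (-rt i j) (Submodule.mem_iSup_of_mem ?_ h)
  exact ⟨_, (mem_nilRoots td hA T _).mpr ⟨i, j, hs, rfl⟩, rfl⟩

lemma mk_TK {m : ℕ} {T : Finset (Fin m)} {k : ℕ} (hk2 : 2 * k ≤ m + 1)
    (h1 : ∀ a ∈ T, (a : ℕ) + 1 ≤ k ∨ m ≤ (a : ℕ) + k)
    (hex : ∃ a ∈ T, k ≤ (a : ℕ) + 1 ∧ (a : ℕ) + k ≤ m)
    (sym1 : ∀ a ∈ T, (a : ℕ) + 2 ≤ k → ∃ b ∈ T, (b : ℕ) + a + 1 = m)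
    (sym2 : ∀ b ∈ T, m + 1 ≤ (b : ℕ) + k → ∃ a ∈ T, (a : ℕ) + b + 1 = m) :
    ∃ z1 z2, TK T k z1 z2 := by
  by_cases hx : ∃ a ∈ T, (a : ℕ) + 1 = k
  · obtain ⟨x, hx, hxk⟩ := hx
    by_cases hy : ∃ a ∈ T, (a : ℕ) + k = m
    · obtain ⟨y, hy, hyk⟩ := hy
      exact ⟨x, y, hk2, h1, ⟨x, hx, rfl⟩, ⟨y, hy, rfl⟩, by omega, by omega, by omega,
        fun a ha h => by omega, fun a ha h => by omega, sym1, sym2⟩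
    · refine ⟨x, x, hk2, h1, ⟨x, hx, rfl⟩, ⟨x, hx, rfl⟩, by omega, by omega, by omega,
        fun a ha h => by omega, fun a ha h => ?_, sym1, sym2⟩
      have := h1 a ha
      have h3 : (a : ℕ) + k ≠ m := fun h => hy ⟨a, ha, h⟩
      omega
  · obtain ⟨y, hy, hy1, hy2⟩ := hex
    have hyk : (y : ℕ) + k = m := by
      have := h1 y hy
      have h3 : (y : ℕ) + 1 ≠ k := fun h => hx ⟨y, hy, h⟩
      omega
    refine ⟨y, y, hk2, h1, ⟨y, hy, rfl⟩, ⟨y, hy, rfl⟩, by omega, by omega, by omega,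
        fun a ha h => ?_, fun a ha h => by omega, sym1, sym2⟩
    have := h1 a ha
    have h3 : (a : ℕ) + 1 ≠ k := fun h => hx ⟨a, ha, h⟩
    omega

lemma sym_iff {m : ℕ} (T : Finset (Fin m)) (k : ℕ) :
    ((T.filter fun a : Fin m => (a : ℕ) + 2 ≤ k).image Fin.rev =
        T.filter fun a : Fin m => m + 1 ≤ (a : ℕ) + k) ↔
    ((∀ a ∈ T, (a : ℕ) + 2 ≤ k → ∃ b ∈ T, (b : ℕ) + a + 1 = m) ∧
     (∀ b ∈ T, m + 1 ≤ (b : ℕ) + k → ∃ a ∈ T, (a : ℕ) + b + 1 = m)) := by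
  constructor
  · intro h
    constructor
    · intro a ha hak
      have : a.rev ∈ (T.filter fun a : Fin m => (a : ℕ) + 2 ≤ k).image Fin.rev :=
        Finset.mem_image_of_mem _ (Finset.mem_filter.mpr ⟨ha, hak⟩)
      rw [h, Finset.mem_filter] at this
      exact ⟨_, this.1, by rw [Fin.val_rev]; omega⟩
    · intro b hb hbk
      have : b ∈ T.filter fun a : Fin m => m + 1 ≤ (a : ℕ) + k := Finset.mem_filter.mpr ⟨hb, hbk⟩
      rw [← h, Finset.mem_image] at this
      obtain ⟨a, ha, rfl⟩ := this
      exact ⟨a, (Finset.mem_filter.mp ha).1, by rw [Fin.val_rev]; omega⟩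
  · rintro ⟨h1, h2⟩
    ext b
    rw [Finset.mem_image, Finset.mem_filter]
    constructor
    · rintro ⟨a, ha, rfl⟩
      rw [Finset.mem_filter] at ha
      obtain ⟨b, hb, hab⟩ := h1 a ha.1 ha.2
      have : b = a.rev := by ext; rw [Fin.val_rev]; omega
      subst this
      exact ⟨hb, by rw [Fin.val_rev]; omega⟩
    · rintro ⟨hb, hbk⟩
      obtain ⟨a, ha, hab⟩ := h2 b hb hbk
      exact ⟨a, Finset.mem_filter.mpr ⟨ha, by omega⟩, by ext; rw [Fin.val_rev]; omega⟩

lemma sym_of_rev {m : ℕ} {T : Finset (Fin m)} (k : ℕ) (h : T.image Fin.rev = T) :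
    ((∀ a ∈ T, (a : ℕ) + 2 ≤ k → ∃ b ∈ T, (b : ℕ) + a + 1 = m) ∧
     (∀ b ∈ T, m + 1 ≤ (b : ℕ) + k → ∃ a ∈ T, (a : ℕ) + b + 1 = m)) := by
  have : ∀ a ∈ T, a.rev ∈ T := fun a ha => by
    have := Finset.mem_image_of_mem Fin.rev ha
    rwa [h] at this
  exact ⟨fun a ha _ => ⟨_, this a ha, by rw [Fin.val_rev]; omega⟩,
    fun a ha _ => ⟨_, this a ha, by rw [Fin.val_rev]; omega⟩⟩

/-! ### Sufficiency -/

/-- the bilinear form `(x, y) ↦ κ(w, [x, y])` on the nilradical, depending linearly on `w` -/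
def BW {L : Type*} [LieRing L] [LieAlgebra ℂ L] (V : Submodule ℂ L) (N : LieSubalgebra ℂ L) :
    V →ₗ[ℂ] N →ₗ[ℂ] (N →ₗ[ℂ] ℂ) :=
  LinearMap.mk₂ ℂ (fun w x => (killingForm ℂ L (w : L)) ∘ₗ
      (LieAlgebra.ad ℂ L (x : L)).comp N.toSubmodule.subtype)
    (by intro a b x; ext y; simp)
    (by intro c a x; ext y; simp)
    (by intro a x y; ext z; simp)
    (by intro c a x; ext y; simp)

lemma BW_apply {L : Type*} [LieRing L] [LieAlgebra ℂ L] (V : Submodule ℂ L)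
    (N : LieSubalgebra ℂ L) (w : V) (x y : N) :
    BW V N w x y = killingForm ℂ L (w : L) ⁅(x : L), (y : L)⁆ := rfl

lemma killStab_finrank {L : Type*} [LieRing L] [LieAlgebra ℂ L] (V : Submodule ℂ L)
    (N : LieSubalgebra ℂ L) (w : V) :
    finrank ℂ (killStab (w : L) N N) = finrank ℂ (LinearMap.ker (BW V N w)) := by
  have h : killStab (w : L) N N = (LinearMap.ker (BW V N w)).map N.toSubmodule.subtype := by
    ext x
    constructor
    · rintro ⟨hx, h⟩
      refine ⟨⟨x, hx⟩, ?_, rfl⟩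
      rw [SetLike.mem_coe, LinearMap.mem_ker]
      ext y
      exact h y y.2
    · rintro ⟨y, hy, rfl⟩
      rw [SetLike.mem_coe, LinearMap.mem_ker] at hy
      refine ⟨y.2, fun z hz => ?_⟩
      exact LinearMap.congr_fun hy (⟨z, hz⟩ : N)
  rw [h]
  exact Submodule.finrank_map_subtype_eq N.toSubmodule _

lemma lminor_polyF {L : Type*} [LieRing L] [LieAlgebra ℂ L] {m : ℕ}
    (E : Fin (m + 1) → Fin (m + 1) → L) (V : Submodule ℂ L) (a : ℕ) :
    (fun w : V => lminor (fun i j : Fin (m + 1) => fW E (w : L) (Matrix.single i j.rev 1)) a)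
      ∈ PolyF V :=
  det_mem_polyF fun i j : {i : Fin (m + 1) // (i : ℕ) ≤ a} =>
    ((killingForm ℂ L).flip (PhiM E (Matrix.single i.1 j.1.rev 1))) ∘ₗ V.subtype

lemma lminor_casc {m : ℕ} {T : Finset (Fin m)} {k : ℕ} {f : Mt m →ₗ[ℂ] ℂ} (hf : CascF T k f)
    (hk2 : 2 * k ≤ m + 1) (a : Fin m) (ha : a ∈ T) (hak : (a : ℕ) + 2 ≤ k) :
    lminor (fun i j : Fin (m + 1) => f (Matrix.single i j.rev 1)) a ≠ 0 := by
  have h : (Matrix.of fun i j : {i : Fin (m + 1) // (i : ℕ) ≤ (a : ℕ)} =>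
      f (Matrix.single i.1 j.1.rev 1)) =
      Matrix.diagonal fun i : {i : Fin (m + 1) // (i : ℕ) ≤ (a : ℕ)} =>
        f (Matrix.single i.1 i.1.rev 1) := by
    ext i j
    by_cases hij : i = j
    · subst hij
      simp
    · rw [Matrix.diagonal_apply_ne _ hij, Matrix.of_apply]
      have hi := i.2
      have hj := j.2
      apply hf.zero
      · exact ⟨a, ha, hi, by rw [Fin.val_rev]; omega⟩
      · rintro ⟨h, -⟩
        rw [Fin.val_rev] at h
        exact hij (Subtype.ext (Fin.ext (by omega)))
  unfold lminor
  beta_reduce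
  rw [h, Matrix.det_diagonal]
  exact Finset.prod_ne_zero_iff.mpr fun i _ => hf.ne i.1 (by have := i.2; omega)

lemma nM_nilp {m : ℕ} {T : Finset (Fin m)} {X : Mt m} (hX : X ∈ nM T) : IsNilpotent X :=
  ⟨_, nM_pow hX⟩

lemma conj_conj_neg {m : ℕ} {T : Finset (Fin m)} {X : Mt m} (hX : X ∈ nM T) (Y : Mt m) :
    IsNilpotent.exp X * (IsNilpotent.exp (-X) * Y * IsNilpotent.exp X) * IsNilpotent.exp (-X)
      = Y := by
  have h1 := IsNilpotent.exp_mul_exp_neg_self (nM_nilp hX)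
  calc _ = (IsNilpotent.exp X * IsNilpotent.exp (-X)) * Y *
        (IsNilpotent.exp X * IsNilpotent.exp (-X)) := by noncomm_ring
    _ = Y := by rw [h1, one_mul, mul_one]

lemma conj_neg_conj {m : ℕ} {T : Finset (Fin m)} {X : Mt m} (hX : X ∈ nM T) (Y : Mt m) :
    IsNilpotent.exp (-X) * (IsNilpotent.exp X * Y * IsNilpotent.exp (-X)) * IsNilpotent.exp X
      = Y := by
  have h1 := IsNilpotent.exp_neg_mul_exp_self (nM_nilp hX)
  calc _ = (IsNilpotent.exp (-X) * IsNilpotent.exp X) * Y *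
        (IsNilpotent.exp (-X) * IsNilpotent.exp X) := by noncomm_ring
    _ = Y := by rw [h1, one_mul, mul_one]

lemma mconj_mul {m : ℕ} {T : Finset (Fin m)} {X : Mt m} (hX : X ∈ nM T) (Y Z : Mt m) :
    IsNilpotent.exp X * (Y * Z) * IsNilpotent.exp (-X) =
      (IsNilpotent.exp X * Y * IsNilpotent.exp (-X)) *
      (IsNilpotent.exp X * Z * IsNilpotent.exp (-X)) := by
  have h1 := IsNilpotent.exp_neg_mul_exp_self (nM_nilp hX)
  symm
  calc _ = IsNilpotent.exp X * Y * (IsNilpotent.exp (-X) * IsNilpotent.exp X) * Z *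
        IsNilpotent.exp (-X) := by noncomm_ring
    _ = _ := by rw [h1]; noncomm_ring

theorem suff {L : Type*} [LieRing L] [LieAlgebra ℂ L] [FiniteDimensional ℂ L]
    [LieAlgebra.IsSimple ℂ L] {m : ℕ} {td : TriangularData L (Fin m)}
    (hA : ∀ γ : Fin m → ℤ, γ ∈ td.R ↔
      ∃ i j : Fin m, i ≤ j ∧ (γ = intv i j ∨ γ = -intv i j))
    {E F : Fin (m + 1) → Fin (m + 1) → L} (hE : EE td E F)
    {T : Finset (Fin m)} {k z1 z2 : ℕ} (hT : TK T k z1 z2) {v : L} (hv : v ∈ td.negNilSub T)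
    (hf : CascF T k (fW E v)) : td.IsGenericStabPoint T (td.nilrad T) v := by
  obtain ⟨p2, hp2, hp2v, hp2'⟩ := ker_dim_semicont (BW (td.negNilSub T) (td.nilrad T)) ⟨v, hv⟩
  let p1 : td.negNilSub T → ℂ := ∏ a ∈ T.filter (fun a : Fin m => (a : ℕ) + 2 ≤ k),
    fun w : td.negNilSub T =>
      lminor (fun i j : Fin (m + 1) => fW E (w : L) (Matrix.single i j.rev 1)) a
  have hp1 : p1 ∈ PolyF (td.negNilSub T) := Subalgebra.prod_mem _ fun a _ => lminor_polyF E _ a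
  have hp1ne : ∀ w, p1 w ≠ 0 ↔ ∀ a ∈ T, (a : ℕ) + 2 ≤ k →
      lminor (fun i j : Fin (m + 1) => fW E (w : L) (Matrix.single i j.rev 1)) a ≠ 0 := by
    intro w
    simp only [p1, Finset.prod_apply, Finset.prod_ne_zero_iff, Finset.mem_filter, and_imp]
  have hp : p1 * p2 ∈ PolyF (td.negNilSub T) := mul_mem hp1 hp2
  have hpv : (p1 * p2) ⟨v, hv⟩ ≠ 0 := by
    rw [Pi.mul_apply]
    exact mul_ne_zero ((hp1ne _).mpr fun a ha hak => lminor_casc hf hT.hk2 a ha hak) hp2v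
  refine ⟨{w | (p1 * p2) w ≠ 0}, polyF_basic_open _ hp, basic_dense _ hp _ hpv, ⟨hv, hpv⟩, ?_⟩
  intro w hw
  rw [Set.mem_ofPred_eq, Pi.mul_apply, mul_ne_zero_iff] at hw
  obtain ⟨X, hX, hXw⟩ := lu_exists hT (fW E (w : L)) ((hp1ne w).mp hw.1)
  refine ⟨PhiM E X, Phi_mem_nilrad hA hE hX, ?_⟩
  have hinj : Function.Injective ((nilExp (LieAlgebra.ad ℂ L (PhiM E X))).domRestrict
      (killStab v (td.nilrad T) (td.nilrad T))) := by
    rintro ⟨x, hx⟩ ⟨y, hy⟩ hxy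
    obtain ⟨X', hX', rfl, -⟩ := (mem_killStab hA hE v x).mp hx
    obtain ⟨Y', hY', rfl, -⟩ := (mem_killStab hA hE v y).mp hy
    rw [LinearMap.domRestrict_apply, LinearMap.domRestrict_apply, Phi_conj hE hX hX',
      Phi_conj hE hX hY'] at hxy
    have h := Phi_inj hE (conj_mem hX hX') (conj_mem hX hY') hxy
    have : X' = Y' := by rw [← conj_neg_conj hX X', h, conj_neg_conj hX Y']
    subst this
    rfl
  apply Submodule.eq_of_le_of_finrank_le
  · rintro _ ⟨x, hx, rfl⟩
    obtain ⟨Z, hZ, rfl, hZ'⟩ := (mem_killStab hA hE v x).mp hx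
    rw [Phi_conj hE hX hZ, mem_killStab' hA hE _ (conj_mem hX hZ)]
    intro Y hY
    let g : Mt m →ₗ[ℂ] ℂ := (fW E (w : L)) ∘ₗ (LinearMap.mulRight ℂ (IsNilpotent.exp (-X))) ∘ₗ
      (LinearMap.mulLeft ℂ (IsNilpotent.exp X))
    have hg : ∀ M, g M = fW E (w : L) (IsNilpotent.exp X * M * IsNilpotent.exp (-X)) :=
      fun M => rfl
    have hY' : IsNilpotent.exp (-X) * Y * IsNilpotent.exp X ∈ nM T := by
      have := conj_mem (Submodule.neg_mem _ hX) hY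
      rwa [neg_neg] at this
    have h := le_stab hT g (fun p q h1 h2 h3 => by rw [hg]; exact hXw p q h1 h2 h3)
      (casc_stab_le hT hf hZ hZ') hY'
    rw [hg, mul_sub, sub_mul, mconj_mul hX Z, mconj_mul hX _ Z, conj_conj_neg hX] at h
    exact h
  · rw [← LinearMap.range_domRestrict, LinearMap.finrank_range_of_inj hinj,
      killStab_finrank (td.negNilSub T), killStab_finrank (td.negNilSub T) _ ⟨v, hv⟩]
    exact hp2' w hw.2

/-! ### Necessity -/

lemma unip_entry {m : ℕ} {T : Finset (Fin m)} {U : Mt m} (hU : U - 1 ∈ nM T)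
    {p q : Fin (m + 1)} (hpq : p ≠ q) (hs : ¬ sepT T p q) : U p q = 0 := by
  have := hU p q hs
  rwa [Matrix.sub_apply, Matrix.one_apply_ne hpq, sub_zero] at this

lemma unip_diag {m : ℕ} {T : Finset (Fin m)} {U : Mt m} (hU : U - 1 ∈ nM T)
    (p : Fin (m + 1)) : U p p = 1 := by
  have := hU p p (fun h => by have := h.lt; omega)
  rw [Matrix.sub_apply, Matrix.one_apply_eq] at this
  linear_combination this

lemma unip_conj_entry {m : ℕ} {T : Finset (Fin m)} {U V X0 : Mt m} (hU : U - 1 ∈ nM T)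
    (hV : V - 1 ∈ nM T) (p q : Fin (m + 1))
    (h1 : ∀ i j, i ≠ p → sepT T p i → (sepT T j q ∨ j = q) → X0 i j = 0)
    (h2 : ∀ j, j ≠ q → sepT T j q → X0 p j = 0) : (U * X0 * V) p q = X0 p q := by
  have hcol : ∀ j, (sepT T j q ∨ j = q) → (U * X0) p j = X0 p j := by
    intro j hj
    rw [Matrix.mul_apply, Finset.sum_eq_single p]
    · rw [unip_diag hU, one_mul]
    · intro i _ hi
      by_cases hs : sepT T p i
      · rw [h1 i j hi hs hj, mul_zero]
      · rw [unip_entry hU hi.symm hs, zero_mul]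
    · simp
  rw [Matrix.mul_apply, Finset.sum_eq_single q]
  · rw [unip_diag hV, mul_one, hcol q (Or.inr rfl)]
  · intro j _ hj
    by_cases hs : sepT T j q
    · rw [hcol j (Or.inl hs), h2 j hj hs, zero_mul]
    · rw [unip_entry hV hj hs, mul_zero]
  · simp

lemma nec_core {L : Type*} [LieRing L] [LieAlgebra ℂ L] [FiniteDimensional ℂ L]
    [LieAlgebra.IsSimple ℂ L] {m : ℕ} {td : TriangularData L (Fin m)}
    (hA : ∀ γ : Fin m → ℤ, γ ∈ td.R ↔
      ∃ i j : Fin m, i ≤ j ∧ (γ = intv i j ∨ γ = -intv i j))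
    {E F : Fin (m + 1) → Fin (m + 1) → L} (hE : EE td E F)
    {T : Finset (Fin m)} {v : L} (h : td.IsGenericStabPoint T (td.nilrad T) v)
    {p q : Fin (m + 1)} (hs : sepT T p q) :
    ∃ s : ℂ, s ≠ 0 ∧ ∃ f : Mt m →ₗ[ℂ] ℂ, (∀ Z, f Z = fW E v Z + s * Z p q) ∧
      ∃ X ∈ nM T, ∀ X0 ∈ nM T, (∀ Y ∈ nM T, f (X0 * Y - Y * X0) = 0) →
        ∃ Y ∈ nM T, (∀ Z ∈ nM T, fW E v (Y * Z - Z * Y) = 0) ∧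
          Y = IsNilpotent.exp (-X) * X0 * IsNilpotent.exp X := by
  obtain ⟨Ω, hΩ, -, ⟨hv, hvΩ⟩, hc⟩ := h
  obtain ⟨s, hs0, hsΩ⟩ := zOpen_line Ω hΩ _ (⟨F p q, F_neg hA hE hs⟩ : td.negNilSub T) hvΩ
  obtain ⟨x, hx, hxe⟩ := hc _ hsΩ
  obtain ⟨X, hX, rfl⟩ := (mem_nilrad hA hE x).mp hx
  refine ⟨s, hs0, fW E (v + s • F p q), ?_, X, hX, ?_⟩
  · intro Z
    rw [fW_apply, map_add, LinearMap.add_apply, map_smul, LinearMap.smul_apply,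
      kF_Phi hE Z p q hs.lt]
    rfl
  · intro X0 hX0 h0
    have hm := (mem_killStab' hA hE (v + s • F p q) hX0).mpr h0
    have hxe' : (killStab v (td.nilrad T) (td.nilrad T)).map
      (nilExp (LieAlgebra.ad ℂ L (PhiM E X))) =
        killStab (v + s • F p q) (td.nilrad T) (td.nilrad T) := hxe
    rw [← hxe'] at hm
    obtain ⟨y, hy, hyx⟩ := hm
    obtain ⟨Y, hY, rfl, hY'⟩ := (mem_killStab hA hE v y).mp hy
    refine ⟨Y, hY, hY', ?_⟩
    rw [Phi_conj hE hX hY] at hyx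
    rw [← Phi_inj hE (conj_mem hX hY) hX0 hyx, conj_neg_conj hX]

lemma nec1 {m : ℕ} {T : Finset (Fin m)} {k : ℕ} {f0 f : Mt m →ₗ[ℂ] ℂ} (hf : CascF T k f0)
    (hk2 : 2 * k ≤ m + 1) (hex : ∃ a ∈ T, k ≤ (a : ℕ) + 1 ∧ (a : ℕ) + k ≤ m)
    (a : Fin m) (ha : a ∈ T) (hak : (a : ℕ) + 2 ≤ k)
    (hb : ∀ b ∈ T, (b : ℕ) + a + 1 ≠ m)
    {p q p' q' : Fin (m + 1)} (hp : (p : ℕ) = a) (hq : (q : ℕ) + a + 1 = m)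
    (hp' : (p' : ℕ) = a + 1) (hq' : (q' : ℕ) + a = m)
    {s : ℂ} (hs : s ≠ 0) (hff : ∀ Z, f Z = f0 Z + s * Z p q)
    {X : Mt m} (hX : X ∈ nM T)
    (hc : ∀ X0 ∈ nM T, (∀ Y ∈ nM T, f (X0 * Y - Y * X0) = 0) →
        ∃ Y ∈ nM T, (∀ Z ∈ nM T, f0 (Y * Z - Z * Y) = 0) ∧
          Y = IsNilpotent.exp (-X) * X0 * IsNilpotent.exp X) : False := by
  obtain ⟨z, hz, hz1, hz2⟩ := hex
  have hqr : q' = p.rev := by ext; rw [Fin.val_rev]; omega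
  have hc0 : f0 (Matrix.single p q' 1) ≠ 0 := by
    rw [hqr]; exact hf.ne p (by omega)
  set t : ℂ := - s / f0 (Matrix.single p q' 1) with ht
  have ht0 : t ≠ 0 := div_ne_zero (neg_ne_zero.mpr hs) hc0
  have hst : s + t * f0 (Matrix.single p q' 1) = 0 := by
    rw [ht]; field_simp; ring
  have hpp : p ≠ p' := fun h => by have := congrArg Fin.val h; omega
  have hqq : q ≠ q' := fun h => by have := congrArg Fin.val h; omega
  have s1 : sepT T p' q := ⟨z, hz, by omega, by omega⟩
  have s2 : sepT T p' q' := ⟨z, hz, by omega, by omega⟩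
  have hfs : ∀ i j, f (Matrix.single i j 1) = f0 (Matrix.single i j 1) +
      if i = p ∧ j = q then s else 0 := by
    intro i j
    rw [hff, Matrix.single_apply]
    split_ifs <;> simp
  have L1 : ∀ Y ∈ nM T, ∀ r, (r = q ∨ r = q') → f (Matrix.single p' r 1 * Y) = 0 := by
    intro Y hY r hr
    rw [f_single_mul]
    refine Finset.sum_eq_zero fun j _ => ?_
    by_cases hrj : sepT T r j
    · have hlt := hrj.lt
      have hr' : m ≤ (r : ℕ) + a + 1 := by
        rcases hr with rfl | rfl <;> omega
      rw [hfs, if_neg (fun h => hpp h.1.symm), hf.zero, add_zero, mul_zero]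
      · exact ⟨z, hz, by omega, by omega⟩
      · rintro ⟨h, -⟩; omega
    · rw [hY _ _ hrj, zero_mul]
  have R1 : ∀ Y ∈ nM T, f (Y * Matrix.single p' q 1) = Y p p' * s := by
    intro Y hY
    rw [f_mul_single, Finset.sum_eq_single p]
    · rw [hfs, if_pos ⟨rfl, rfl⟩, hf.zero, zero_add]
      · exact ⟨a, ha, by omega, by omega⟩
      · rintro ⟨h, -⟩; omega
    · intro i _ hi
      by_cases hij : sepT T i p'
      · have hlt := hij.lt
        rw [hfs, if_neg (fun h => hi h.1), hf.zero, add_zero, mul_zero]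
        · exact ⟨z, hz, by omega, by omega⟩
        · rintro ⟨h, -⟩; omega
      · rw [hY _ _ hij, zero_mul]
    · simp
  have R2 : ∀ Y ∈ nM T, f (Y * Matrix.single p' q' 1) =
      Y p p' * f0 (Matrix.single p q' 1) := by
    intro Y hY
    rw [f_mul_single, Finset.sum_eq_single p]
    · rw [hfs, if_neg (fun h => hqq h.2.symm), add_zero]
    · intro i _ hi
      have hi' : (i : ℕ) ≠ p := fun h => hi (Fin.ext h)
      by_cases hij : sepT T i p'
      · have hlt := hij.lt
        rw [hfs, if_neg (fun h => hi h.1), hf.zero, add_zero, mul_zero]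
        · exact ⟨z, hz, by omega, by omega⟩
        · rintro ⟨h, -⟩; omega
      · rw [hY _ _ hij, zero_mul]
    · simp
  obtain ⟨Y, hY, hY', he⟩ := hc (Matrix.single p' q 1 + t • Matrix.single p' q' 1)
    (add_mem (single_mem_nM s1 1) (Submodule.smul_mem _ _ (single_mem_nM s2 1))) (by
      intro Y hY
      rw [map_sub, add_mul, mul_add, smul_mul_assoc, mul_smul_comm, map_add, map_add, map_smul,
        map_smul, L1 Y hY q (Or.inl rfl), L1 Y hY q' (Or.inr rfl), R1 Y hY, R2 Y hY]
      simp only [smul_eq_mul]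
      linear_combination (- Y p p') * hst)
  have hent : Y p' q' = t := by
    rw [he, unip_conj_entry (nM_exp_neg hX) (nM_exp hX)]
    · simp [Matrix.single_apply, hqq]
    · intro i j hi _ _
      simp [Matrix.single_apply, hi.symm]
    · intro j hj hs
      obtain ⟨b, hbT, hb1, hb2⟩ := hs
      have hjq : q ≠ j := by
        rintro rfl
        exact hb b hbT (by omega)
      simp [Matrix.single_apply, hj.symm, hjq]
  have hqr' : q'.rev = p := by rw [hqr, Fin.rev_rev]
  have s3 : sepT T q'.rev p' := by rw [hqr']; exact ⟨a, ha, by omega, by omega⟩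
  have := casc_optB hf hY p' q' (by rw [hqr']; omega) s3 (hY' _ (single_mem_nM s3 1))
  exact ht0 (hent.symm.trans this)

lemma nec2 {m : ℕ} {T : Finset (Fin m)} {k : ℕ} {f0 f : Mt m →ₗ[ℂ] ℂ} (hf : CascF T k f0)
    (hk2 : 2 * k ≤ m + 1) (hex : ∃ a ∈ T, k ≤ (a : ℕ) + 1 ∧ (a : ℕ) + k ≤ m)
    (a : Fin m) (ha : a ∈ T) (hak : m + 1 ≤ (a : ℕ) + k)
    (hb : ∀ b ∈ T, (b : ℕ) + a + 1 ≠ m)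
    {p q p' q' : Fin (m + 1)} (hp : (p : ℕ) + a + 1 = m) (hq : (q : ℕ) = a)
    (hp' : (p' : ℕ) + a = m) (hq' : (q' : ℕ) = a + 1)
    {s : ℂ} (hs : s ≠ 0) (hff : ∀ Z, f Z = f0 Z + s * Z p' q')
    {X : Mt m} (hX : X ∈ nM T)
    (hc : ∀ X0 ∈ nM T, (∀ Y ∈ nM T, f (X0 * Y - Y * X0) = 0) →
        ∃ Y ∈ nM T, (∀ Z ∈ nM T, f0 (Y * Z - Z * Y) = 0) ∧
          Y = IsNilpotent.exp (-X) * X0 * IsNilpotent.exp X) : False := by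
  obtain ⟨z, hz, hz1, hz2⟩ := hex
  have hqr : q' = p.rev := by ext; rw [Fin.val_rev]; omega
  have hc0 : f0 (Matrix.single p q' 1) ≠ 0 := by
    rw [hqr]; exact hf.ne p (by omega)
  set t : ℂ := - s / f0 (Matrix.single p q' 1) with ht
  have ht0 : t ≠ 0 := div_ne_zero (neg_ne_zero.mpr hs) hc0
  have hst : s + t * f0 (Matrix.single p q' 1) = 0 := by
    rw [ht]; field_simp; ring
  have hpp : p ≠ p' := fun h => by have := congrArg Fin.val h; omega
  have hqq : q ≠ q' := fun h => by have := congrArg Fin.val h; omega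
  have s1 : sepT T p' q := ⟨z, hz, by omega, by omega⟩
  have s2 : sepT T p q := ⟨z, hz, by omega, by omega⟩
  have hfs : ∀ i j, f (Matrix.single i j 1) = f0 (Matrix.single i j 1) +
      if i = p' ∧ j = q' then s else 0 := by
    intro i j
    rw [hff, Matrix.single_apply]
    split_ifs <;> simp
  have R1 : ∀ Y ∈ nM T, ∀ r, (r = p ∨ r = p') → f (Y * Matrix.single r q 1) = 0 := by
    intro Y hY r hr
    rw [f_mul_single]
    refine Finset.sum_eq_zero fun i _ => ?_
    by_cases hrj : sepT T i r
    · have hlt := hrj.lt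
      have hr' : (r : ℕ) + a ≤ m := by
        rcases hr with rfl | rfl <;> omega
      rw [hfs, if_neg (fun h => hqq h.2), hf.zero, add_zero, mul_zero]
      · exact ⟨z, hz, by omega, by omega⟩
      · rintro ⟨h, -⟩; omega
    · rw [hY _ _ hrj, zero_mul]
  have L1 : ∀ Y ∈ nM T, f (Matrix.single p' q 1 * Y) = Y q q' * s := by
    intro Y hY
    rw [f_single_mul, Finset.sum_eq_single q']
    · rw [hfs, if_pos ⟨rfl, rfl⟩, hf.zero, zero_add]
      · exact ⟨a, ha, by omega, by omega⟩
      · rintro ⟨h, -⟩; omega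
    · intro i _ hi
      by_cases hij : sepT T q i
      · have hlt := hij.lt
        rw [hfs, if_neg (fun h => hi h.2), hf.zero, add_zero, mul_zero]
        · exact ⟨z, hz, by omega, by omega⟩
        · rintro ⟨h, -⟩; omega
      · rw [hY _ _ hij, zero_mul]
    · simp
  have L2 : ∀ Y ∈ nM T, f (Matrix.single p q 1 * Y) =
      Y q q' * f0 (Matrix.single p q' 1) := by
    intro Y hY
    rw [f_single_mul, Finset.sum_eq_single q']
    · rw [hfs, if_neg (fun h => hpp h.1), add_zero]
    · intro i _ hi
      have hi' : (i : ℕ) ≠ q' := fun h => hi (Fin.ext h)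
      by_cases hij : sepT T q i
      · have hlt := hij.lt
        rw [hfs, if_neg (fun h => hi h.2), hf.zero, add_zero, mul_zero]
        · exact ⟨z, hz, by omega, by omega⟩
        · rintro ⟨h, -⟩; omega
      · rw [hY _ _ hij, zero_mul]
    · simp
  obtain ⟨Y, hY, hY', he⟩ := hc (Matrix.single p' q 1 + t • Matrix.single p q 1)
    (add_mem (single_mem_nM s1 1) (Submodule.smul_mem _ _ (single_mem_nM s2 1))) (by
      intro Y hY
      rw [map_sub, add_mul, mul_add, smul_mul_assoc, mul_smul_comm, map_add, map_add, map_smul,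
        map_smul, R1 Y hY p (Or.inl rfl), R1 Y hY p' (Or.inr rfl), L1 Y hY, L2 Y hY]
      simp only [smul_eq_mul]
      linear_combination (Y q q') * hst)
  have hent : Y p q = t := by
    rw [he, unip_conj_entry (nM_exp_neg hX) (nM_exp hX)]
    · simp [Matrix.single_apply, hpp.symm]
    · intro i j hi hs _
      obtain ⟨b, hbT, hb1, hb2⟩ := hs
      have hjq : p' ≠ i := by
        rintro rfl
        exact hb b hbT (by omega)
      simp [Matrix.single_apply, hi.symm, hjq]
    · intro j hj hs
      simp [Matrix.single_apply, hj.symm]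
  have s3 : sepT T q p.rev := by rw [← hqr]; exact ⟨a, ha, by omega, by omega⟩
  have := casc_optA hf hY p q (by omega) s3 (hY' _ (single_mem_nM s3 1))
  exact ht0 (hent.symm.trans this)

theorem nec {L : Type*} [LieRing L] [LieAlgebra ℂ L] [FiniteDimensional ℂ L]
    [LieAlgebra.IsSimple ℂ L] {m : ℕ} {td : TriangularData L (Fin m)}
    (hA : ∀ γ : Fin m → ℤ, γ ∈ td.R ↔
      ∃ i j : Fin m, i ≤ j ∧ (γ = intv i j ∨ γ = -intv i j))
    {E F : Fin (m + 1) → Fin (m + 1) → L} (hE : EE td E F)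
    {T : Finset (Fin m)} {k : ℕ} (hk2 : 2 * k ≤ m + 1)
    (hex : ∃ a ∈ T, k ≤ (a : ℕ) + 1 ∧ (a : ℕ) + k ≤ m) {v : L}
    (hf : CascF T k (fW E v)) (h : td.IsGenericStabPoint T (td.nilrad T) v) :
    ((∀ a ∈ T, (a : ℕ) + 2 ≤ k → ∃ b ∈ T, (b : ℕ) + a + 1 = m) ∧
     (∀ b ∈ T, m + 1 ≤ (b : ℕ) + k → ∃ a ∈ T, (a : ℕ) + b + 1 = m)) := by
  constructor
  · intro a ha hak
    by_contra hb
    push Not at hb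
    obtain ⟨s, hs, f, hff, X, hX, hc⟩ := nec_core hA hE h
      (p := ⟨a, by omega⟩) (q := ⟨m - a - 1, by omega⟩) ⟨a, ha, by simp, by simp <;> omega⟩
    exact nec1 hf hk2 hex a ha hak hb (p' := ⟨a + 1, by omega⟩) (q' := ⟨m - a, by omega⟩)
      rfl (by simp <;> omega) rfl (by simp <;> omega) hs hff hX hc
  · intro a ha hak
    by_contra hb
    push Not at hb
    obtain ⟨s, hs, f, hff, X, hX, hc⟩ := nec_core hA hE h
      (p := ⟨m - a, by omega⟩) (q := ⟨a + 1, by omega⟩) ⟨a, ha, by simp <;> omega, by simp⟩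
    exact nec2 hf hk2 hex a ha hak hb (p := ⟨m - 1 - a, by omega⟩) (q := ⟨a, by omega⟩)
      (by simp <;> omega) rfl (by simp) rfl hs hff hX hc

lemma generic_empty {L : Type*} [LieRing L] [LieAlgebra ℂ L] [FiniteDimensional ℂ L]
    [LieAlgebra.IsSimple ℂ L] {m : ℕ} {td : TriangularData L (Fin m)}
    (hA : ∀ γ : Fin m → ℤ, γ ∈ td.R ↔
      ∃ i j : Fin m, i ≤ j ∧ (γ = intv i j ∨ γ = -intv i j))
    {E F : Fin (m + 1) → Fin (m + 1) → L} (hE : EE td E F) {v : L}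
    (hv : v ∈ td.negNilSub ∅) :
    td.IsGenericStabPoint ∅ (td.nilrad ∅) v := by
  have hbot : ∀ w : L, killStab w (td.nilrad ∅) (td.nilrad ∅) = ⊥ := by
    intro w
    rw [eq_bot_iff]
    intro x hx
    obtain ⟨X, hX, rfl, -⟩ := (mem_killStab hA hE w x).mp hx
    have : X = 0 := by
      ext i j
      exact hX i j (by rintro ⟨a, ha, -⟩; simp at ha)
    rw [this, map_zero]
    exact Submodule.zero_mem _
  refine ⟨{w | (1 : td.negNilSub ∅ → ℂ) w ≠ 0}, polyF_basic_open _ (one_mem _),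
    basic_dense _ (one_mem _) ⟨v, hv⟩ (by simp), ⟨hv, by simp⟩, fun w _ => ⟨0, zero_mem _, ?_⟩⟩
  rw [hbot, hbot, Submodule.map_bot]

theorem main_iff {L : Type*} [LieRing L] [LieAlgebra ℂ L] [FiniteDimensional ℂ L]
    [LieAlgebra.IsSimple ℂ L]
    {m : ℕ} (td : TriangularData L (Fin m))
    (hA : ∀ γ : Fin m → ℤ, γ ∈ td.R ↔
      ∃ i j : Fin m, i ≤ j ∧ (γ = intv i j ∨ γ = -intv i j))
    (K : Finset (Fin m → ℤ)) (hK : td.IsCascade K)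
    (T : Finset (Fin m)) (k : ℕ) (hk2 : 2 * k ≤ m + 1)
    (hcasc : ∀ j : Fin m, (intv j j.rev ∈ td.cascadeK K T ↔ (j : ℕ) < k))
    (v : L) (hv : td.IsCascadePoint K T v) :
    td.IsGenericStabPoint T (td.nilrad T) v ↔
    ((∀ a ∈ T, (a : ℕ) + 2 ≤ k → ∃ b ∈ T, (b : ℕ) + a + 1 = m) ∧
     (∀ b ∈ T, m + 1 ≤ (b : ℕ) + k → ∃ a ∈ T, (a : ℕ) + b + 1 = m)) := by
  obtain ⟨E, F, hE⟩ := exists_EE td hA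
  have h1 := casc_h1 hA hK hcasc
  have hvn := casc_neg hv
  rcases Nat.eq_zero_or_pos k with rfl | hk
  · have hT : T = ∅ := by
      rw [Finset.eq_empty_iff_forall_notMem]
      intro a ha
      have := h1 a ha
      omega
    subst hT
    exact ⟨fun _ => by simp, fun _ => generic_empty hA hE hvn⟩
  · have hex := casc_ex hA hK hk2 hk hcasc
    have hf := casc_CascF hA hK hE hk2 hcasc hv
    refine ⟨nec hA hE hk2 hex hf, ?_⟩
    rintro ⟨s1, s2⟩
    obtain ⟨z1, z2, hT⟩ := mk_TK hk2 h1 hex s1 s2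
    exact suff hA hE hT hvn hf

/-- Let `g = sl_{m+1}(ℂ)` (a simple Lie algebra whose root system is of
type `A_m` in simple-root coordinates) and `n = n_T` a nilradical with
`K(n) = {β₁, …, β_k}`, where `β_i = α_i + ⋯ + α_{m+1−i}`.  Set
`T' = T ∩ {α₁, …, α_{k−1}}` and `T'' = T ∩ {α_{m+2−k}, …, α_m}`.  Then the stabiliser
`n^ξ̄` of a cascade point is a generic stabiliser for `(n : n*)` iff `σ(T') = T''`,
where `σ(α_j) = α_{m+1−j}` is the symmetry of the Dynkin diagram.  In particular, if
`σ(T) = T` then `n_T` has a generic stabiliser. -/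
theorem slCase_generic_stabiliser_iff_symmetry
    {L : Type*} [LieRing L] [LieAlgebra ℂ L] [FiniteDimensional ℂ L]
    [LieAlgebra.IsSimple ℂ L]
    {m : ℕ} (td : TriangularData L (Fin m))
    (hA : ∀ γ : Fin m → ℤ, γ ∈ td.R ↔
      ∃ i j : Fin m, i ≤ j ∧ (γ = intv i j ∨ γ = -intv i j))
    (K : Finset (Fin m → ℤ)) (hK : td.IsCascade K)
    (T : Finset (Fin m)) (k : ℕ) (hk2 : 2 * k ≤ m + 1)
    (hcasc : ∀ j : Fin m, (intv j j.rev ∈ td.cascadeK K T ↔ (j : ℕ) < k))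
    (v : L) (hv : td.IsCascadePoint K T v) :
    (td.IsGenericStabPoint T (td.nilrad T) v ↔
      (T.filter fun a : Fin m => (a : ℕ) + 2 ≤ k).image Fin.rev =
        T.filter fun a : Fin m => m + 1 ≤ (a : ℕ) + k) ∧
    (T.image Fin.rev = T → ∃ w : L, td.IsGenericStabPoint T (td.nilrad T) w) := by
  have h := main_iff td hA K hK T k hk2 hcasc v hv
  exact ⟨h.trans (sym_iff T k).symm, fun hr => ⟨v, h.mpr (sym_of_rev k hr)⟩⟩

end
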